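/- arXiv:1604.00416 — 5 statements merged into one kernel-verified Lean document; each statement's English description precedes it below -/
import Mathlib

section
/- Phragmén–Lindelöf Laplace transform lemma (Lemma 3.1): Let f : [0,∞) → ℂ be locally integrable and suppose there exist C > 0 and y₀ ∈ ℝ such that |f(t)| ≤ C·e^{y₀ t} for a.e. t ≥ 0 (so that ∫₀^∞ e^{izt} f(t) dt converges absolutely whenever Im z > y₀). Let β > 0 and θ ∈ (0, π/2), and suppose that there exist C', R > 0 such that |∫₀^∞ e^{i z t} f(t) dt| ≤ C'·e^{−β·Im z} for all z = r·e^{iθ} with r ≥ R (and r·sin θ > y₀). Then f(t) = 0 for almost every t ∈ [0,β]. -/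
open MeasureTheory Set

section Aux

open Filter Topology FourierTransform SchwartzMap
open scoped ContDiff

lemma aux_fourier_inj (g : ℝ → ℂ) (hg : Integrable g) (h : ∀ x, 𝓕 g x = 0) :
    ∀ᵐ t, g t = 0 := by
  apply ae_eq_zero_of_integral_contDiff_smul_eq_zero hg.locallyIntegrable
  intro φ φ_smooth φ_cpt
  have hφ₁ : HasCompactSupport (Complex.ofRealCLM ∘ φ) := φ_cpt.comp_left rfl
  have hφ₂ : ContDiff ℝ ∞ (Complex.ofRealCLM ∘ φ) := by fun_prop
  let Φ : 𝓢(ℝ, ℂ) := hφ₁.toSchwartzMap hφ₂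
  let ψ : 𝓢(ℝ, ℂ) := 𝓕⁻ Φ
  have hψ : 𝓕 ψ = Φ := FourierTransform.fourier_fourierInv_eq Φ
  have key : ∫ ξ, (𝓕 (ψ : ℝ → ℂ) ξ) • g ξ = ∫ x, ψ x • 𝓕 g x := by
    simpa using! VectorFourier.integral_fourierIntegral_smul_eq_flip (L := innerₗ ℝ)
      Real.continuous_fourierChar continuous_inner ψ.integrable hg
  rw [← SchwartzMap.fourier_coe, hψ] at key
  simp only [h, smul_zero, integral_zero] at key
  rw [← key]
  congr 1

noncomputable def auxH (f : ℝ → ℂ) (β : ℝ) (z : ℂ) : ℂ :=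
  ∫ t in Ioc 0 β, Complex.exp (Complex.I * z * ((t : ℂ) - β)) * f t

lemma aux_norm_exp (z : ℂ) (s : ℝ) (β : ℝ) :
    ‖Complex.exp (Complex.I * z * ((s : ℂ) - β))‖ = Real.exp (z.im * (β - s)) := by
  rw [Complex.norm_exp]
  congr 1
  simp [Complex.mul_re, Complex.mul_im]
  ring

lemma aux_meas (f : ℝ → ℂ) (β : ℝ) (hf : IntegrableOn f (Ioc 0 β)) (z : ℂ) :
    AEStronglyMeasurable (fun t : ℝ => Complex.exp (Complex.I * z * ((t : ℂ) - β)) * f t)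
      (volume.restrict (Ioc 0 β)) := by
  refine AEStronglyMeasurable.mul ?_ hf.aestronglyMeasurable
  exact (by fun_prop : Continuous fun t : ℝ =>
    Complex.exp (Complex.I * z * ((t : ℂ) - β))).aestronglyMeasurable

lemma aux_bound_pt (f : ℝ → ℂ) (β : ℝ) (z : ℂ) (t : ℝ) (ht : t ∈ Ioc 0 β) :
    ‖Complex.exp (Complex.I * z * ((t : ℂ) - β)) * f t‖ ≤
      Real.exp (β * max 0 z.im) * ‖f t‖ := by
  rw [norm_mul, aux_norm_exp]
  refine mul_le_mul_of_nonneg_right (Real.exp_le_exp.2 ?_) (norm_nonneg _)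
  have h1 : z.im ≤ max 0 z.im := le_max_right _ _
  have h2 : 0 ≤ max 0 z.im := le_max_left _ _
  nlinarith [ht.1, ht.2]

lemma aux_bound (f : ℝ → ℂ) (β : ℝ) (hf : IntegrableOn f (Ioc 0 β)) (z : ℂ) :
    ‖auxH f β z‖ ≤ Real.exp (β * max 0 z.im) * ∫ t in Ioc 0 β, ‖f t‖ := by
  unfold auxH
  rw [← integral_const_mul]
  apply norm_integral_le_of_norm_le (hf.norm.const_mul _)
  filter_upwards [ae_restrict_mem measurableSet_Ioc] with t ht
  exact aux_bound_pt f β z t ht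

lemma aux_integrable (f : ℝ → ℂ) (β : ℝ) (hf : IntegrableOn f (Ioc 0 β)) (z : ℂ) :
    IntegrableOn (fun t : ℝ => Complex.exp (Complex.I * z * ((t : ℂ) - β)) * f t) (Ioc 0 β) := by
  refine Integrable.mono' (hf.norm.const_mul (Real.exp (β * max 0 z.im))) (aux_meas f β hf z) ?_
  filter_upwards [ae_restrict_mem measurableSet_Ioc] with t ht
  exact aux_bound_pt f β z t ht

lemma aux_diff (f : ℝ → ℂ) (β : ℝ) (hβ : 0 < β) (hf : IntegrableOn f (Ioc 0 β)) :
    Differentiable ℂ (auxH f β) := by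
  intro z₀
  have := hasDerivAt_integral_of_dominated_loc_of_deriv_le (𝕜 := ℂ)
    (μ := volume.restrict (Ioc 0 β)) (x₀ := z₀)
    (F := fun z (t : ℝ) => Complex.exp (Complex.I * z * ((t : ℂ) - β)) * f t)
    (F' := fun z (t : ℝ) => (Complex.I * ((t : ℂ) - β)) *
      (Complex.exp (Complex.I * z * ((t : ℂ) - β)) * f t))
    (bound := fun t => β * (Real.exp (β * (‖z₀‖ + 1)) * ‖f t‖))
    (Metric.ball_mem_nhds z₀ one_pos)
    (Eventually.of_forall fun z => aux_meas f β hf z) (aux_integrable f β hf z₀)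
    ?_ ?_ ?_ ?_
  · exact this.2.differentiableAt
  · refine AEStronglyMeasurable.mul ?_ (aux_meas f β hf z₀)
    exact (by fun_prop : Continuous fun t : ℝ => Complex.I * ((t : ℂ) - β)).aestronglyMeasurable
  · filter_upwards [ae_restrict_mem measurableSet_Ioc] with t ht z hz
    rw [norm_mul]
    have h1 : ‖Complex.I * ((t : ℂ) - β)‖ ≤ β := by
      rw [norm_mul, Complex.norm_I, one_mul, ← Complex.ofReal_sub, Complex.norm_real,
        Real.norm_eq_abs, abs_le]
      constructor <;> linarith [ht.1, ht.2]
    have h2 : max 0 z.im ≤ ‖z₀‖ + 1 := by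
      have h3 : z.im ≤ ‖z‖ := (le_abs_self _).trans (Complex.abs_im_le_norm z)
      have h4 : ‖z‖ ≤ ‖z₀‖ + 1 := by
        have h5 : ‖z - z₀‖ < 1 := by simpa [dist_eq_norm] using hz
        have h6 : ‖z‖ ≤ ‖z₀‖ + ‖z - z₀‖ := by
          simpa using norm_add_le z₀ (z - z₀)
        linarith
      exact max_le (by positivity) (h3.trans h4)
    refine mul_le_mul h1 ((aux_bound_pt f β z t ht).trans ?_) (norm_nonneg _) hβ.le
    gcongr
  · exact (hf.norm.const_mul _).const_mul _
  · refine Eventually.of_forall fun t z _ => ?_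
    have h1 : HasDerivAt (fun z : ℂ => Complex.I * z * ((t : ℂ) - β))
        (Complex.I * ((t : ℂ) - β)) z := by
      simpa using ((hasDerivAt_id z).const_mul Complex.I).mul_const ((t : ℂ) - β)
    have h2 := h1.cexp.mul_const (f t)
    refine h2.congr_deriv ?_
    ring

lemma aux_sector (f : ℝ → ℂ) (β : ℝ) (hβ : 0 < β) (hf : IntegrableOn f (Ioc 0 β))
    (a b K : ℝ) (hab : a < b) (hab' : b - a < Real.pi)
    (ha : ∀ z : ℂ, z.im = a → ‖auxH f β (Complex.exp z)‖ ≤ K)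
    (hb : ∀ z : ℂ, z.im = b → ‖auxH f β (Complex.exp z)‖ ≤ K)
    (z : ℂ) (hza : a ≤ z.im) (hzb : z.im ≤ b) : ‖auxH f β (Complex.exp z)‖ ≤ K := by
  refine PhragmenLindelof.horizontal_strip (f := fun z => auxH f β (Complex.exp z))
    (a := a) (b := b) ?_ ⟨1, ?_, β, ?_⟩ ha hb hza hzb
  · exact ((aux_diff f β hβ hf).comp Complex.differentiable_exp).diffContOnCl
  · rw [lt_div_iff₀ (by linarith)]; linarith
  · apply Asymptotics.IsBigO.of_bound (∫ t in Ioc 0 β, ‖f t‖)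
    refine Eventually.of_forall fun z => ?_
    refine (aux_bound f β hf _).trans ?_
    rw [mul_comm, Real.norm_eq_abs, abs_of_pos (Real.exp_pos _)]
    gcongr
    apply max_le (by positivity)
    refine (le_abs_self _).trans ((Complex.abs_im_le_norm _).trans ?_)
    rw [Complex.norm_exp, one_mul]
    exact Real.exp_le_exp.2 (le_abs_self _)

lemma aux_zero (f : ℝ → ℂ) (β : ℝ) (hβ : 0 < β) (hf : IntegrableOn f (Ioc 0 β))
    (θ : ℝ) (hθ : θ ∈ Ioo 0 (Real.pi / 2)) (K : ℝ)
    (hK : ∀ z : ℂ, z.im = θ → ‖auxH f β (Complex.exp z)‖ ≤ K) (z : ℂ) : auxH f β z = 0 := by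
  set M := ∫ t in Ioc 0 β, ‖f t‖ with hM
  have hlow : ∀ z : ℂ, z.im ≤ 0 → ‖auxH f β z‖ ≤ max K M := by
    intro z hz
    have := aux_bound f β hf z
    rw [max_eq_left hz] at this
    simp only [mul_zero, Real.exp_zero, one_mul] at this
    exact this.trans (le_max_right _ _)
  have hK' : ∀ z : ℂ, z.im = θ → ‖auxH f β (Complex.exp z)‖ ≤ max K M :=
    fun z hz => (hK z hz).trans (le_max_left _ _)
  have hall : ∀ z : ℂ, ‖auxH f β z‖ ≤ max K M := by
    intro z
    rcases le_or_gt z.im 0 with hz | hz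
    · exact hlow z hz
    have hz0 : z ≠ 0 := by rintro rfl; simp at hz
    rw [← Complex.exp_log hz0]
    have h0 : 0 ≤ (Complex.log z).im := by
      rw [Complex.log_im]; exact Complex.arg_nonneg_iff.2 hz.le
    have hpi : (Complex.log z).im ≤ Real.pi := by
      rw [Complex.log_im]; exact Complex.arg_le_pi z
    rcases le_total (Complex.log z).im θ with h | h
    · refine aux_sector f β hβ hf 0 θ _ hθ.1 (by linarith [hθ.2, Real.pi_pos]) ?_ hK' _ h0 h
      intro w hw
      apply hlow
      simp [Complex.exp_im, hw]
    · refine aux_sector f β hβ hf θ Real.pi _ (by linarith [hθ.2, Real.pi_pos])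
        (by linarith [hθ.1]) hK' ?_ _ h hpi
      intro w hw
      apply hlow
      simp [Complex.exp_im, hw]
  have hconst : ∀ w, auxH f β w = auxH f β z := fun w =>
    (aux_diff f β hβ hf).apply_eq_apply_of_bounded
      (isBounded_iff_forall_norm_le.2 ⟨max K M, by rintro _ ⟨w, rfl⟩; exact hall w⟩) w z
  have hlim : Tendsto (fun n : ℕ => auxH f β (-Complex.I * n)) atTop (𝓝 0) := by
    have : (0 : ℂ) = ∫ t in Ioc 0 β, (0 : ℂ) := by simp
    rw [this]
    unfold auxH
    refine tendsto_integral_of_dominated_convergence (fun t => ‖f t‖)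
      (fun n => aux_meas f β hf _) hf.norm ?_ ?_
    · intro n
      filter_upwards [ae_restrict_mem measurableSet_Ioc] with t ht
      refine (aux_bound_pt f β _ t ht).trans (le_of_eq ?_)
      simp
    · have hne : ∀ᵐ t ∂(volume.restrict (Ioc 0 β)), t ≠ β :=
        ae_restrict_of_ae (Measure.ae_ne volume β)
      filter_upwards [ae_restrict_mem measurableSet_Ioc, hne] with t ht htβ
      have htlt : t < β := lt_of_le_of_ne ht.2 htβ
      rw [tendsto_zero_iff_norm_tendsto_zero]
      simp only [norm_mul, aux_norm_exp]
      rw [← zero_mul ‖f t‖]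
      refine Tendsto.mul_const _ ?_
      refine Real.tendsto_exp_atBot.comp ?_
      simp only [Complex.neg_im, Complex.mul_im, Complex.neg_re, Complex.I_re, Complex.I_im,
        Complex.natCast_re, Complex.natCast_im, neg_zero, zero_mul, mul_zero, zero_add]
      have h1 : Tendsto (fun n : ℕ => (n : ℝ) * (β - t)) atTop atTop :=
        tendsto_natCast_atTop_atTop.atTop_mul_const (by linarith)
      have h2 := tendsto_neg_atTop_atBot.comp h1
      refine h2.congr fun n => ?_
      simp
  simp only [hconst] at hlim
  exact tendsto_nhds_unique tendsto_const_nhds hlim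

lemma aux_final (f : ℝ → ℂ) (β : ℝ) (hf : IntegrableOn f (Ioc 0 β))
    (h : ∀ z, auxH f β z = 0) : ∀ᵐ t ∂volume.restrict (Ioc 0 β), f t = 0 := by
  rw [ae_restrict_iff' measurableSet_Ioc]
  have := aux_fourier_inj ((Ioc 0 β).indicator f) (hf.integrable_indicator measurableSet_Ioc) ?_
  · filter_upwards [this] with t ht hmem
    simpa [indicator_of_mem hmem] using ht
  · intro x
    rw [Real.fourier_real_eq_integral_exp_smul]
    have h1 : ∀ v : ℝ, Complex.exp (↑(-2 * Real.pi * v * x) * Complex.I) •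
        (Ioc 0 β).indicator f v = (Ioc 0 β).indicator (fun v : ℝ =>
          Complex.exp (Complex.I * (-2 * Real.pi * x : ℝ) * β) *
          (Complex.exp (Complex.I * (-2 * Real.pi * x : ℝ) * ((v : ℂ) - β)) * f v)) v := by
      intro v
      by_cases hv : v ∈ Ioc 0 β
      · rw [indicator_of_mem hv, indicator_of_mem hv, ← mul_assoc, ← Complex.exp_add, smul_eq_mul]
        congr 2
        push_cast
        ring
      · rw [indicator_of_notMem hv, indicator_of_notMem hv, smul_zero]
    simp_rw [h1]
    rw [integral_indicator measurableSet_Ioc, integral_const_mul]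
    have := h ((-2 * Real.pi * x : ℝ) : ℂ)
    unfold auxH at this
    rw [this, mul_zero]

/-- Boundedness on the ray for large radius. -/
lemma aux_ray (f : ℝ → ℂ) (hf : LocallyIntegrableOn f (Ici (0:ℝ)))
    (C y₀ : ℝ) (hC : 0 < C)
    (hbd : ∀ᵐ t ∂volume.restrict (Ici (0:ℝ)), ‖f t‖ ≤ C * Real.exp (y₀ * t))
    (β : ℝ) (hβ : 0 < β) (C' : ℝ) (z : ℂ) (hz : y₀ + 1 ≤ z.im)
    (hest : ‖∫ t in Ioi (0:ℝ), Complex.exp (Complex.I * z * t) * f t‖ ≤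
        C' * Real.exp (-β * z.im)) :
    ‖auxH f β z‖ ≤ C' + C * Real.exp (y₀ * β) := by
  have hnorm : ∀ t : ℝ, ‖Complex.exp (Complex.I * z * t)‖ = Real.exp (-z.im * t) := by
    intro t
    simpa using aux_norm_exp z t 0
  have hneg : y₀ - z.im < 0 := by linarith
  have hsub : Ioi (0:ℝ) ⊆ Ici 0 := Ioi_subset_Ici_self
  have hmeas : AEStronglyMeasurable (fun t : ℝ => Complex.exp (Complex.I * z * t) * f t)
      (volume.restrict (Ioi 0)) := by
    refine AEStronglyMeasurable.mul ?_ (hf.aestronglyMeasurable.mono_set hsub)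
    exact (by fun_prop : Continuous fun t : ℝ =>
      Complex.exp (Complex.I * z * t)).aestronglyMeasurable
  have hb : ∀ᵐ t : ℝ ∂volume.restrict (Ioi (0:ℝ)),
      ‖Complex.exp (Complex.I * z * t) * f t‖ ≤ C * Real.exp ((y₀ - z.im) * t) := by
    filter_upwards [ae_restrict_of_ae_restrict_of_subset hsub hbd] with t ht
    rw [norm_mul, hnorm]
    calc _ ≤ Real.exp (-z.im * t) * (C * Real.exp (y₀ * t)) := by gcongr
      _ = _ := by
        rw [mul_left_comm, ← Real.exp_add]; ring_nf
  have hint : IntegrableOn (fun t : ℝ => Complex.exp (Complex.I * z * t) * f t) (Ioi 0) :=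
    Integrable.mono' ((integrableOn_exp_mul_Ioi hneg 0).const_mul C) hmeas hb
  have htail : ‖∫ t in Ioi β, Complex.exp (Complex.I * z * t) * f t‖ ≤
      C * Real.exp ((y₀ - z.im) * β) := by
    calc _ ≤ ∫ t in Ioi β, C * Real.exp ((y₀ - z.im) * t) := by
          apply norm_integral_le_of_norm_le ((integrableOn_exp_mul_Ioi hneg β).const_mul C)
          exact ae_restrict_of_ae_restrict_of_subset (Ioi_subset_Ioi hβ.le) hb
      _ = C * (Real.exp ((y₀ - z.im) * β) / (z.im - y₀)) := by
          rw [integral_const_mul, integral_exp_mul_Ioi hneg, neg_div, ← div_neg, neg_sub]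
      _ ≤ _ := by
          gcongr
          exact div_le_self (Real.exp_pos _).le (by linarith)
  have hsplit : ∫ t in Ioi (0:ℝ), Complex.exp (Complex.I * z * t) * f t =
      (∫ t in Ioc 0 β, Complex.exp (Complex.I * z * t) * f t) +
      ∫ t in Ioi β, Complex.exp (Complex.I * z * t) * f t := by
    rw [← Ioc_union_Ioi_eq_Ioi hβ.le]
    exact setIntegral_union (Ioc_disjoint_Ioi le_rfl) measurableSet_Ioi
      (hint.mono_set Ioc_subset_Ioi_self) (hint.mono_set (Ioi_subset_Ioi hβ.le))
  have hH : auxH f β z = Complex.exp (Complex.I * z * (-β)) *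
      ∫ t in Ioc 0 β, Complex.exp (Complex.I * z * t) * f t := by
    unfold auxH
    rw [← integral_const_mul]
    congr 1
    ext t
    rw [← mul_assoc, ← Complex.exp_add]
    congr 2
    ring
  have hHn : ‖Complex.exp (Complex.I * z * (-β))‖ = Real.exp (z.im * β) := by
    simpa using aux_norm_exp z 0 β
  rw [hH, norm_mul, hHn, eq_sub_of_add_eq hsplit.symm]
  calc _ ≤ Real.exp (z.im * β) *
        (C' * Real.exp (-β * z.im) + C * Real.exp ((y₀ - z.im) * β)) := by
        gcongr
        exact (norm_sub_le _ _).trans (add_le_add hest htail)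
    _ = _ := by
        rw [mul_add, mul_left_comm, mul_left_comm _ C, ← Real.exp_add, ← Real.exp_add]
        have h1 : z.im * β + -β * z.im = 0 := by ring
        have h2 : z.im * β + (y₀ - z.im) * β = y₀ * β := by ring
        rw [h1, h2, Real.exp_zero, mul_one]

end Aux


/-- **Phragmén–Lindelöf Laplace transform lemma** (Lemma 3.1).
Let `f` be locally integrable on `[0,∞)` with `|f(t)| ≤ C e^{y₀ t}` a.e.
If the Laplace-type transform `∫₀^∞ e^{izt} f(t) dt` is `O(e^{-β Im z})` along
a ray `arg z = θ` in the open first quadrant, then `f = 0` a.e. on `[0,β]`. -/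
theorem laplace_phragmen_lindelof
    (f : ℝ → ℂ) (hf : LocallyIntegrableOn f (Ici (0:ℝ)))
    (C y₀ : ℝ) (hC : 0 < C)
    (hbd : ∀ᵐ t ∂volume.restrict (Ici (0:ℝ)), ‖f t‖ ≤ C * Real.exp (y₀ * t))
    (β θ : ℝ) (hβ : 0 < β) (hθ : θ ∈ Ioo 0 (Real.pi / 2))
    (C' R : ℝ) (hC' : 0 < C') (hR : 0 < R)
    (hest : ∀ r : ℝ, R ≤ r → y₀ < r * Real.sin θ →
      ‖∫ t in Ioi (0:ℝ),
          Complex.exp (Complex.I * ((r : ℂ) * Complex.exp (θ * Complex.I)) * t) * f t‖ ≤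
        C' * Real.exp (-β * (r * Real.sin θ))) :
    ∀ᵐ t ∂volume.restrict (Icc (0:ℝ) β), f t = 0 := by
  have hint : IntegrableOn f (Ioc 0 β) :=
    (hf.integrableOn_compact_subset Icc_subset_Ici_self isCompact_Icc).mono_set Ioc_subset_Icc_self
  rw [← Measure.restrict_congr_set (Ioc_ae_eq_Icc (μ := volume) (a := (0:ℝ)) (b := β))]
  apply aux_final f β hint
  have hsin : 0 < Real.sin θ :=
    Real.sin_pos_of_pos_of_lt_pi hθ.1 (by linarith [hθ.2, Real.pi_pos])
  set R₁ := max R ((y₀ + 1) / Real.sin θ) with hR₁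
  have hM : 0 ≤ ∫ t in Ioc 0 β, ‖f t‖ := integral_nonneg fun _ => norm_nonneg _
  apply aux_zero f β hβ hint θ hθ
    (max (C' + C * Real.exp (y₀ * β)) (Real.exp (β * R₁) * ∫ t in Ioc 0 β, ‖f t‖))
  intro w hw
  have him : (Complex.exp w).im = Real.exp w.re * Real.sin θ := by rw [Complex.exp_im, hw]
  rcases le_total R₁ (Real.exp w.re) with h | h
  · refine le_trans ?_ (le_max_left _ _)
    have hy : y₀ + 1 ≤ Real.exp w.re * Real.sin θ :=
      (div_le_iff₀ hsin).1 ((le_max_right _ _).trans h)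
    have h1 := hest (Real.exp w.re) ((le_max_left _ _).trans h) (by linarith)
    have hw' : (Real.exp w.re : ℂ) * Complex.exp (θ * Complex.I) = Complex.exp w := by
      rw [Complex.ofReal_exp, ← Complex.exp_add, ← hw, Complex.re_add_im]
    rw [hw', ← him] at h1
    exact aux_ray f hf C y₀ hC hbd β hβ C' _ (by rw [him]; exact hy) h1
  · refine le_trans ?_ (le_max_right _ _)
    refine (aux_bound f β hint _).trans ?_
    gcongr
    refine max_le ((Real.exp_pos _).le.trans h) ?_
    refine (le_abs_self _).trans ((Complex.abs_im_le_norm _).trans ?_)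
    rw [Complex.norm_exp]
    exact h
end

section
/- Exponential smallness of the difference of Weyl–Titchmarsh functions (relation (3.9)): Let a > 0, q ∈ L¹(0,a), α ∈ (0,π), and let φ, ψ, φ', ψ' be as in the context. Let γ and γ̂ be Nevanlinna functions, and define for non-real z: m(z) := (ψ'(a;z) − ψ(a;z)γ(z))/(φ'(a;z) − φ(a;z)γ(z)) and m̂(z) := (ψ'(a;z) − ψ(a;z)γ̂(z))/(φ'(a;z) − φ(a;z)γ̂(z)). Then for every θ ∈ (0,π)∪(π,2π) and every ε > 0 there exist C, R > 0 such that for all z = r·e^{iθ} with r ≥ R the denominators φ'(a;z) − φ(a;z)γ(z) and φ'(a;z) − φ(a;z)γ̂(z) are nonzero and |m(z) − m̂(z)| ≤ C·exp(−2a(1−ε)·Re√(−z)), where √(−z) is the principal square root (Re√(−z) > 0). -/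
open MeasureTheory Set

/-- `u` is, for each `z ∈ ℂ`, the continuous solution on `[0,a]` of the Volterra
integral equation `u(x;z) = c₀ + c₁·x + ∫₀ˣ (x-s)(q(s)-z) u(s;z) ds`. -/
def IsRegSolution (a : ℝ) (q : ℝ → ℝ) (c₀ c₁ : ℝ) (u : ℂ → ℝ → ℂ) : Prop :=
  (∀ z : ℂ, ContinuousOn (u z) (Icc 0 a)) ∧
  ∀ z : ℂ, ∀ x ∈ Icc (0:ℝ) a,
    u z x = (c₀ : ℂ) + (x : ℂ) * (c₁ : ℂ) +
      ∫ s in (0:ℝ)..x, ((x : ℂ) - (s : ℂ)) * ((q s : ℂ) - z) * u z s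

/-- A Nevanlinna function: holomorphic on `ℂ∖ℝ`, symmetric w.r.t. conjugation,
with nonnegative imaginary part on the upper half-plane. -/
def IsNevanlinna (γ : ℂ → ℂ) : Prop :=
  DifferentiableOn ℂ γ {z : ℂ | z.im ≠ 0} ∧
  (∀ z : ℂ, z.im ≠ 0 → γ (starRingEnd ℂ z) = starRingEnd ℂ (γ z)) ∧
  (∀ z : ℂ, 0 < z.im → 0 ≤ (γ z).im)

/-- `F` is a primitive of the integrable function `f` on `[0,a]`. -/
def Prim (a : ℝ) (F f : ℝ → ℂ) : Prop :=
  IntervalIntegrable f volume 0 a ∧ ∀ x ∈ Icc (0:ℝ) a, F x = F 0 + ∫ s in (0:ℝ)..x, f s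

lemma ac_const {a : ℝ} (c : ℂ) : AbsolutelyContinuousOnInterval (fun _ : ℝ => c) 0 a :=
  (contDiff_const.contDiffOn).absolutelyContinuousOnInterval

lemma ac_integral {a : ℝ} {f : ℝ → ℂ} (hf : IntervalIntegrable f volume 0 a) :
    AbsolutelyContinuousOnInterval (fun x => ∫ s in (0:ℝ)..x, f s) 0 a := by
  have hre : IntervalIntegrable (fun s => (f s).re) volume 0 a := ⟨hf.1.re, hf.2.re⟩
  have him : IntervalIntegrable (fun s => (f s).im) volume 0 a := ⟨hf.1.im, hf.2.im⟩
  have h1 := (hre.absolutelyContinuousOnInterval_intervalIntegral (c := 0) (by simp)).fun_smul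
    (ac_const (a := a) 1)
  have h2 := (him.absolutelyContinuousOnInterval_intervalIntegral (c := 0) (by simp)).fun_smul
    (ac_const (a := a) Complex.I)
  have h3 := h1.fun_add h2
  -- congruence on the interval
  rw [absolutelyContinuousOnInterval_iff] at h3 ⊢
  intro ε hε
  obtain ⟨δ, hδ, h⟩ := h3 ε hε
  refine ⟨δ, hδ, fun E hE hE' => ?_⟩
  refine lt_of_eq_of_lt (Finset.sum_congr rfl fun i hi => ?_) (h E hE hE')
  have key : ∀ x ∈ uIcc (0:ℝ) a, (∫ s in (0:ℝ)..x, f s) =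
      (∫ s in (0:ℝ)..x, (f s).re) • (1:ℂ) + (∫ s in (0:ℝ)..x, (f s).im) • Complex.I := by
    intro x hx
    have hfx : IntervalIntegrable f volume 0 x :=
      hf.mono_set (uIcc_subset_uIcc_left hx)
    have e1 : (∫ s in (0:ℝ)..x, (f s).re) = (∫ s in (0:ℝ)..x, f s).re := by
      simpa using (Complex.reCLM.intervalIntegral_comp_comm hfx)
    have e2 : (∫ s in (0:ℝ)..x, (f s).im) = (∫ s in (0:ℝ)..x, f s).im := by
      simpa using (Complex.imCLM.intervalIntegral_comp_comm hfx)
    rw [e1, e2]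
    simp
  have := hE.1 i hi
  rw [key _ this.1, key _ this.2]

lemma Prim.intOn {a : ℝ} {F f : ℝ → ℂ} (h : Prim a F f) {x : ℝ} (hx : x ∈ Icc (0:ℝ) a) :
    IntervalIntegrable f volume 0 x :=
  h.1.mono_set (uIcc_subset_uIcc_left (Icc_subset_uIcc hx))

lemma Prim.contOn {a : ℝ} {F f : ℝ → ℂ} (h : Prim a F f) : ContinuousOn F (Icc 0 a) := by
  rcases le_or_gt 0 a with ha | ha
  · have := (ac_integral h.1).continuousOn
    rw [uIcc_of_le ha] at this
    exact ((continuousOn_const (c := F 0)).add this).congr (fun x hx => h.2 x hx)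
  · simp [ha]

lemma ii_mul_cont {a : ℝ} (ha : 0 ≤ a) {f G : ℝ → ℂ} (hf : IntervalIntegrable f volume 0 a)
    (hG : ContinuousOn G (Icc 0 a)) : IntervalIntegrable (fun s => f s * G s) volume 0 a :=
  hf.mul_continuousOn (by rwa [uIcc_of_le ha])

lemma Prim.mul {a : ℝ} (ha : 0 ≤ a) {F f G g : ℝ → ℂ} (hF : Prim a F f) (hG : Prim a G g) :
    Prim a (fun x => F x * G x) (fun x => f x * G x + F x * g x) := by
  have hint : IntervalIntegrable (fun x => f x * G x + F x * g x) volume 0 a := by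
    refine (ii_mul_cont ha hF.1 hG.contOn).add ?_
    simpa [mul_comm] using (ii_mul_cont ha hG.1 hF.contOn)
  refine ⟨hint, ?_⟩
  set P : ℝ → ℂ := fun x => F 0 + ∫ s in (0:ℝ)..x, f s with hP
  set Q : ℝ → ℂ := fun x => G 0 + ∫ s in (0:ℝ)..x, g s with hQ
  have hPac : AbsolutelyContinuousOnInterval P 0 a := (ac_const _).fun_add (ac_integral hF.1)
  have hQac : AbsolutelyContinuousOnInterval Q 0 a := (ac_const _).fun_add (ac_integral hG.1)
  have hH : AbsolutelyContinuousOnInterval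
      (fun x => P x • Q x - ∫ s in (0:ℝ)..x, (f s * G s + F s * g s)) 0 a :=
    (hPac.fun_smul hQac).fun_sub (ac_integral hint)
  obtain ⟨C, hC⟩ := hH.const_of_ae_hasDerivAt_zero (by
    filter_upwards [hF.1.ae_hasDerivAt_integral, hG.1.ae_hasDerivAt_integral,
      hint.ae_hasDerivAt_integral] with x h1 h2 h3 hx
    have d1 : HasDerivAt P (f x) x := (h1 hx 0 (by simp)).const_add _
    have d2 : HasDerivAt Q (g x) x := (h2 hx 0 (by simp)).const_add _
    have d3 := (d1.mul d2).sub (h3 hx 0 (by simp))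
    have hx' : x ∈ Icc 0 a := by rwa [uIcc_of_le ha] at hx
    have eP : P x = F x := (hF.2 x hx').symm
    have eQ : Q x = G x := (hG.2 x hx').symm
    rw [eP, eQ, sub_self] at d3
    exact d3)
  intro x hx
  have c0 := hC 0 (by simp)
  have c1 := hC x (Icc_subset_uIcc hx)
  have eP : P x = F x := (hF.2 x hx).symm
  have eQ : Q x = G x := (hG.2 x hx).symm
  have eP0 : P 0 = F 0 := by simp [hP]
  have eQ0 : Q 0 = G 0 := by simp [hQ]
  simp only [eP, eQ, eP0, eQ0, intervalIntegral.integral_same, smul_eq_mul, sub_zero] at c0 c1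
  rw [← c0] at c1
  linear_combination c1

lemma Prim.add {a : ℝ} {F f G g : ℝ → ℂ} (hF : Prim a F f) (hG : Prim a G g) :
    Prim a (fun x => F x + G x) (fun x => f x + g x) := by
  refine ⟨hF.1.add hG.1, fun x hx => ?_⟩
  rw [intervalIntegral.integral_add (hF.intOn hx) (hG.intOn hx), ← sub_eq_zero]
  linear_combination hF.2 x hx + hG.2 x hx

lemma Prim.sub {a : ℝ} {F f G g : ℝ → ℂ} (hF : Prim a F f) (hG : Prim a G g) :
    Prim a (fun x => F x - G x) (fun x => f x - g x) := by
  refine ⟨hF.1.sub hG.1, fun x hx => ?_⟩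
  rw [intervalIntegral.integral_sub (hF.intOn hx) (hG.intOn hx), ← sub_eq_zero]
  linear_combination hF.2 x hx - hG.2 x hx

lemma Prim.const_mul {a : ℝ} {F f : ℝ → ℂ} (c : ℂ) (hF : Prim a F f) :
    Prim a (fun x => c * F x) (fun x => c * f x) := by
  refine ⟨hF.1.const_mul c, fun x hx => ?_⟩
  rw [intervalIntegral.integral_const_mul]
  linear_combination c * hF.2 x hx

lemma Prim.conj {a : ℝ} {F f : ℝ → ℂ} (hF : Prim a F f) :
    Prim a (fun x => starRingEnd ℂ (F x)) (fun x => starRingEnd ℂ (f x)) := by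
  refine ⟨⟨Complex.conjCLE.toContinuousLinearMap.integrable_comp hF.1.1,
    Complex.conjCLE.toContinuousLinearMap.integrable_comp hF.1.2⟩, fun x hx => ?_⟩
  have := Complex.conjCLE.toContinuousLinearMap.intervalIntegral_comp_comm (hF.intOn hx)
  simp only [ContinuousLinearEquiv.coe_coe, Complex.conjCLE_apply] at this
  simp only [this]
  rw [hF.2 x hx, map_add]

lemma prim_exp (a : ℝ) (k : ℂ) :
    Prim a (fun x => Complex.exp (k * x)) (fun x => k * Complex.exp (k * x)) := by
  have hc : Continuous (fun x : ℝ => k * Complex.exp (k * x)) := by fun_prop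
  refine ⟨hc.intervalIntegrable _ _, fun x _ => ?_⟩
  have hd : ∀ t ∈ uIcc 0 x, HasDerivAt (fun x : ℝ => Complex.exp (k * x))
      (k * Complex.exp (k * t)) t := by
    intro t _
    have h1 : HasDerivAt (fun y : ℝ => k * (y:ℂ)) (k * 1) t :=
      (Complex.ofRealCLM.hasDerivAt (x := t)).const_mul k
    have := h1.cexp
    convert this using 1
    ring
  rw [intervalIntegral.integral_eq_sub_of_hasDerivAt hd (hc.intervalIntegrable _ _)]
  ring

lemma prim_id (a : ℝ) : Prim a (fun x => (x:ℂ)) (fun _ => 1) := by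
  refine ⟨intervalIntegrable_const, fun x _ => ?_⟩
  simp

lemma prim_integral {a : ℝ} {f : ℝ → ℂ} (c : ℂ) (hf : IntervalIntegrable f volume 0 a) :
    Prim a (fun x => c + ∫ s in (0:ℝ)..x, f s) f := ⟨hf, fun x _ => by simp⟩

/-- A solution of the Volterra equation has a quasi-derivative. -/
lemma reg_prim {a : ℝ} (ha : 0 ≤ a) {q : ℝ → ℝ} (hq : IntegrableOn q (Icc 0 a)) {c₀ c₁ : ℝ}
    {u : ℂ → ℝ → ℂ} (hu : IsRegSolution a q c₀ c₁ u) (z : ℂ) :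
    Prim a (u z) (fun x => c₁ + ∫ s in (0:ℝ)..x, ((q s : ℂ) - z) * u z s) ∧
    Prim a (fun x => c₁ + ∫ s in (0:ℝ)..x, ((q s : ℂ) - z) * u z s)
      (fun x => ((q x : ℂ) - z) * u z x) ∧ u z 0 = c₀ := by
  have hqi : IntervalIntegrable (fun s => ((q s : ℂ) - z)) volume 0 a := by
    refine IntervalIntegrable.sub ?_ intervalIntegrable_const
    rw [intervalIntegrable_iff_integrableOn_Icc_of_le ha]
    exact hq.ofReal
  have hg : IntervalIntegrable (fun s => ((q s : ℂ) - z) * u z s) volume 0 a :=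
    ii_mul_cont ha hqi (hu.1 z)
  have hp := prim_integral (c₁:ℂ) hg
  have hu0 : u z 0 = c₀ := by
    have := hu.2 z 0 ⟨le_rfl, ha⟩
    simpa using this
  refine ⟨⟨?_, fun x hx => ?_⟩, hp, hu0⟩
  · exact ContinuousOn.intervalIntegrable (by rw [uIcc_of_le ha]; exact hp.contOn)
  · have hm := (Prim.mul ha (prim_id a) hp)
    have e := hm.2 x hx
    have i1 : IntervalIntegrable (fun x : ℝ => 1 * ((c₁:ℂ) + ∫ s in (0:ℝ)..x,
        ((q s : ℂ) - z) * u z s)) volume 0 x := by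
      apply ContinuousOn.intervalIntegrable
      rw [uIcc_of_le hx.1]
      simpa using hp.contOn.mono (Icc_subset_Icc_right hx.2)
    have i2 : IntervalIntegrable (fun s : ℝ => (s:ℂ) * (((q s : ℂ) - z) * u z s)) volume 0 x := by
      have := ii_mul_cont ha hg (G := fun s => (s:ℂ)) (by fun_prop)
      simpa [mul_comm] using this.mono_set (uIcc_subset_uIcc_left (Icc_subset_uIcc hx))
    rw [intervalIntegral.integral_add i1 i2] at e
    have i3 : IntervalIntegrable (fun s : ℝ => (x:ℂ) * (((q s : ℂ) - z) * u z s)) volume 0 x :=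
      (hp.intOn hx).const_mul _
    have e2 : (∫ s in (0:ℝ)..x, ((x : ℂ) - (s : ℂ)) * ((q s : ℂ) - z) * u z s) =
        (x:ℂ) * (∫ s in (0:ℝ)..x, ((q s : ℂ) - z) * u z s) -
        ∫ s in (0:ℝ)..x, (s:ℂ) * (((q s : ℂ) - z) * u z s) := by
      rw [← intervalIntegral.integral_const_mul, ← intervalIntegral.integral_sub i3 i2]
      congr 1
      ext s
      ring
    rw [hu.2 z x hx, e2, hu0]
    simp only [one_mul] at e
    simp only [Complex.ofReal_zero, zero_mul, zero_add] at e
    linear_combination e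

lemma wronskian_const {a : ℝ} (ha : 0 ≤ a) {p u up v vp : ℝ → ℂ}
    (hu : Prim a u up) (hup : Prim a up (fun x => p x * u x))
    (hv : Prim a v vp) (hvp : Prim a vp (fun x => p x * v x)) :
    u a * vp a - up a * v a = u 0 * vp 0 - up 0 * v 0 := by
  have h := ((hu.mul ha hvp).sub (hup.mul ha hv)).2 a ⟨ha, le_rfl⟩
  have e : (fun x => up x * vp x + u x * (p x * v x) - (p x * u x * v x + up x * vp x)) =
      fun _ => (0:ℂ) := by
    ext x; ring
  rw [e] at h
  simpa using h

lemma energy {a : ℝ} (ha : 0 ≤ a) {q : ℝ → ℝ} {z : ℂ} {u up : ℝ → ℂ}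
    (hu : Prim a u up) (hup : Prim a up (fun x => ((q x : ℂ) - z) * u x)) :
    (starRingEnd ℂ (u a) * up a).im = (starRingEnd ℂ (u 0) * up 0).im
      - z.im * ∫ s in (0:ℝ)..a, ‖u s‖ ^ 2 := by
  have hp := hu.conj.mul ha hup
  have h := hp.2 a ⟨ha, le_rfl⟩
  have h2 := congrArg Complex.im h
  rw [Complex.add_im] at h2
  have e1 := Complex.imCLM.intervalIntegral_comp_comm hp.1
  simp only [Complex.imCLM_apply] at e1
  have e2 : ∀ s : ℝ, (starRingEnd ℂ (up s) * up s +
      starRingEnd ℂ (u s) * (((q s : ℂ) - z) * u s)).im = -z.im * ‖u s‖ ^ 2 := by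
    intro s
    rw [← Complex.normSq_eq_norm_sq, Complex.normSq_apply]
    simp
    ring
  simp only [e2] at e1
  rw [intervalIntegral.integral_const_mul] at e1
  rw [← e1] at h2
  rw [h2]
  ring


lemma weyl_denom {f f' g : ℂ} {y N : ℝ} (hy : y ≠ 0)
    (hE : (starRingEnd ℂ f * f').im = - (y * N)) (hg : 0 ≤ y * g.im) :
    |y| * N ≤ ‖f‖ * ‖f' - f * g‖ := by
  have h1 : (starRingEnd ℂ f * (f' - f * g)).im = -(y * N) - Complex.normSq f * g.im := by
    rw [← hE, Complex.normSq_apply]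
    simp
    ring
  have h2 : |y| * (|y| * N) ≤ |y| * |(starRingEnd ℂ f * (f' - f * g)).im| := by
    rw [h1, ← abs_mul, ← mul_assoc, abs_mul_abs_self, ← abs_neg]
    refine le_trans ?_ (le_abs_self _)
    nlinarith [mul_nonneg (Complex.normSq_nonneg f) hg]
  have h3 := le_of_mul_le_mul_left h2 (abs_pos.mpr hy)
  have h4 := Complex.abs_im_le_norm (starRingEnd ℂ f * (f' - f * g))
  rw [norm_mul, RCLike.norm_conj] at h4
  exact h3.trans h4

lemma weyl_disc {f f' h h' g k : ℂ} {y N : ℝ} (hy : y ≠ 0) (hN : 0 < N)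
    (hW : f * h' - f' * h = 1)
    (hE : (starRingEnd ℂ f * f').im = - (y * N)) (hg : 0 ≤ y * g.im) (hk : 0 ≤ y * k.im) :
    f' - f * g ≠ 0 ∧ f' - f * k ≠ 0 ∧
    ‖(h' - h * g) / (f' - f * g) - (h' - h * k) / (f' - f * k)‖ ≤ 2 / (|y| * N) := by
  have d1 := weyl_denom hy hE hg
  have d2 := weyl_denom hy hE hk
  have hpos : 0 < |y| * N := mul_pos (abs_pos.mpr hy) hN
  have n1 : f' - f * g ≠ 0 := fun h => by rw [h] at d1; simp at d1; linarith
  have n2 : f' - f * k ≠ 0 := fun h => by rw [h] at d2; simp at d2; linarith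
  have nf : f ≠ 0 := fun h => by rw [h] at d2; simp at d2; linarith
  refine ⟨n1, n2, ?_⟩
  have e : (h' - h * g) / (f' - f * g) - (h' - h * k) / (f' - f * k) =
      1 / (f * (f' - f * g)) - 1 / (f * (f' - f * k)) := by
    rw [div_sub_div _ _ n1 n2, div_sub_div _ _ (mul_ne_zero nf n1) (mul_ne_zero nf n2),
      div_eq_div_iff (mul_ne_zero n1 n2)
        (mul_ne_zero (mul_ne_zero nf n1) (mul_ne_zero nf n2))]
    linear_combination (g - k) * f ^ 2 * (f' - f * g) * (f' - f * k) * hW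
  rw [e]
  refine (norm_sub_le _ _).trans ?_
  rw [norm_div, norm_div, norm_mul, norm_mul, norm_one]
  have := one_div_le_one_div_of_le hpos d1
  have := one_div_le_one_div_of_le hpos d2
  have : 2 / (|y| * N) = 1 / (|y| * N) + 1 / (|y| * N) := by ring
  linarith

/-- Duhamel formula for `e^{-kx}(u' + k u)`. -/
lemma duhamel {a : ℝ} (ha : 0 ≤ a) {q : ℝ → ℝ} {k : ℂ} {u up : ℝ → ℂ}
    (hu : Prim a u up) (hup : Prim a up (fun x => ((q x : ℂ) + k ^ 2) * u x))
    {x : ℝ} (hx : x ∈ Icc (0:ℝ) a) :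
    up x + k * u x = Complex.exp (k * x) * (up 0 + k * u 0
      + ∫ s in (0:ℝ)..x, Complex.exp (-k * s) * ((q s : ℂ) * u s)) := by
  have h := ((prim_exp a (-k)).mul ha (hup.add (hu.const_mul k))).2 x hx
  have e : (fun x : ℝ => -k * Complex.exp (-k * x) * (up x + k * u x)
      + Complex.exp (-k * x) * (((q x : ℂ) + k ^ 2) * u x + k * up x)) =
      fun s : ℝ => Complex.exp (-k * s) * ((q s : ℂ) * u s) := by
    ext s; ring
  rw [e] at h
  simp only [Complex.ofReal_zero, mul_zero, Complex.exp_zero, one_mul] at h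
  rw [← h, ← mul_assoc, ← Complex.exp_add]
  simp

/-- Bound of the Duhamel integral. -/
lemma duhamel_bound {a : ℝ} {q : ℝ → ℝ}
    (hq : IntervalIntegrable q volume 0 a) {k : ℂ} {κ M : ℝ}
    (hM : 0 ≤ M) {u : ℝ → ℂ} (hk : |k.re| ≤ κ)
    (hu : ∀ s ∈ Icc (0:ℝ) a, ‖u s‖ ≤ M * Real.exp (κ * s))
    {x : ℝ} (hx : x ∈ Icc (0:ℝ) a) :
    ‖Complex.exp (k * x) * ∫ s in (0:ℝ)..x, Complex.exp (-k * s) * ((q s : ℂ) * u s)‖ ≤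
      Real.exp (κ * x) * (M * ∫ s in (0:ℝ)..a, |q s|) := by
  have hqa : IntervalIntegrable (fun s => |q s|) volume 0 a := hq.abs
  have hqx : IntervalIntegrable (fun s => |q s|) volume 0 x :=
    hqa.mono_set (uIcc_subset_uIcc_left (Icc_subset_uIcc hx))
  rw [← intervalIntegral.integral_const_mul]
  have b : ‖∫ s in (0:ℝ)..x, Complex.exp (k * x) * (Complex.exp (-k * s) * ((q s : ℂ) * u s))‖ ≤
      ∫ s in (0:ℝ)..x, Real.exp (κ * x) * M * |q s| := by
    refine intervalIntegral.norm_integral_le_of_norm_le hx.1 ?_ (hqx.const_mul _)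
    refine Filter.Eventually.of_forall fun s hs => ?_
    have hs' : s ∈ Icc (0:ℝ) a := ⟨hs.1.le, hs.2.trans hx.2⟩
    rw [← mul_assoc, ← Complex.exp_add, norm_mul, norm_mul, Complex.norm_exp, Complex.norm_real,
      Real.norm_eq_abs]
    have hr : (k * x + -k * s).re = k.re * (x - s) := by simp; ring
    rw [hr]
    have h1 : k.re * (x - s) ≤ κ * (x - s) :=
      mul_le_mul_of_nonneg_right ((le_abs_self _).trans hk) (by linarith [hs.2])
    have h2 := Real.exp_le_exp.mpr h1
    have h3 : Real.exp (κ * x) = Real.exp (κ * (x - s)) * Real.exp (κ * s) := by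
      rw [← Real.exp_add]; ring_nf
    rw [h3]
    calc Real.exp (k.re * (x - s)) * (|q s| * ‖u s‖)
        ≤ Real.exp (κ * (x - s)) * (|q s| * (M * Real.exp (κ * s))) := by
          gcongr
          exact hu s hs'
      _ = _ := by ring
  refine b.trans ?_
  rw [intervalIntegral.integral_const_mul, mul_assoc]
  gcongr
  refine intervalIntegral.integral_mono_interval le_rfl hx.1 hx.2 ?_ hqa
  exact Filter.Eventually.of_forall fun s => abs_nonneg _

/-- Exponential lower bound of the solution. -/
lemma growth {a : ℝ} (ha : 0 ≤ a) {q : ℝ → ℝ} (hq : IntervalIntegrable q volume 0 a)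
    {k : ℂ} {u up : ℝ → ℂ} {σ c : ℝ} (hσ : 0 < σ) (hσ1 : σ ≤ 1) (hc : |c| ≤ 1)
    (hu : Prim a u up) (hup : Prim a up (fun x => ((q x : ℂ) + k ^ 2) * u x))
    (hu0 : u 0 = σ) (hup0 : up 0 = c) (hk0 : 0 ≤ k.re) (hk1 : 1 ≤ ‖k‖)
    (hkQ : 2 * (∫ s in (0:ℝ)..a, |q s|) ≤ ‖k‖)
    (hkσ : 2 * (1 + 8 * ∫ s in (0:ℝ)..a, |q s|) ≤ ‖k‖ * σ)
    {x : ℝ} (hx : x ∈ Icc (0:ℝ) a) (hxe : 8 / σ ≤ Real.exp (k.re * x)) :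
    σ / 8 * Real.exp (k.re * x) ≤ ‖u x‖ := by
  set Q := ∫ s in (0:ℝ)..a, |q s| with hQ
  have hup' : Prim a up (fun x => ((q x : ℂ) + (-k) ^ 2) * u x) := by
    simpa only [neg_sq] using hup
  have rep : ∀ x ∈ Icc (0:ℝ) a, 2 * k * u x =
      Complex.exp (k * x) * (c + k * σ) - Complex.exp (-k * x) * (c + -k * σ)
      + Complex.exp (k * x) * (∫ s in (0:ℝ)..x, Complex.exp (-k * s) * ((q s : ℂ) * u s))
      - Complex.exp (-k * x) * (∫ s in (0:ℝ)..x, Complex.exp (- -k * s) * ((q s : ℂ) * u s)) := by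
    intro x hx
    have h1 := duhamel ha hu hup hx
    have h2 := duhamel ha hu hup' hx
    rw [hu0, hup0] at h1 h2
    linear_combination h1 - h2
  have hkp : 0 < ‖k‖ := by linarith
  have ab1 : ‖(c + k * σ : ℂ)‖ ≤ 2 * ‖k‖ := by
    refine (norm_add_le _ _).trans ?_
    rw [norm_mul, Complex.norm_real, Complex.norm_real, Real.norm_eq_abs, Real.norm_eq_abs,
      abs_of_pos hσ]
    nlinarith
  have ab2 : ‖(c + -k * σ : ℂ)‖ ≤ 2 * ‖k‖ := by
    refine (norm_add_le _ _).trans ?_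
    rw [norm_mul, Complex.norm_real, Complex.norm_real, Real.norm_eq_abs, Real.norm_eq_abs,
      abs_of_pos hσ, norm_neg]
    nlinarith
  have ab3 : ‖k‖ * σ - 1 ≤ ‖(c + k * σ : ℂ)‖ := by
    have := norm_sub_le (c + k * σ : ℂ) c
    rw [add_sub_cancel_left, norm_mul, Complex.norm_real, Complex.norm_real, Real.norm_eq_abs,
      Real.norm_eq_abs, abs_of_pos hσ] at this
    linarith
  have ne1 : ∀ x : ℝ, ‖Complex.exp (k * x)‖ = Real.exp (k.re * x) := by
    intro x; rw [Complex.norm_exp]; simp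
  have ne2 : ∀ x : ℝ, 0 ≤ x → ‖Complex.exp (-k * x)‖ ≤ 1 := by
    intro x hx; rw [Complex.norm_exp]; simp; positivity
  have one_le : ∀ x : ℝ, 0 ≤ x → 1 ≤ Real.exp (k.re * x) := by
    intro x hx; exact Real.one_le_exp (by positivity)
  have habs : |k.re| ≤ k.re := (abs_of_nonneg hk0).le
  have habs' : |(-k).re| ≤ k.re := by simpa using habs
  -- the a priori bound
  have apriori : ∀ s ∈ Icc (0:ℝ) a, ‖u s‖ ≤ 4 * Real.exp (k.re * s) := by
    have hcont : ContinuousOn (fun s => ‖u s‖ * Real.exp (-(k.re * s))) (Icc 0 a) :=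
      hu.contOn.norm.mul (by fun_prop)
    obtain ⟨x₀, hx₀, hmax⟩ := isCompact_Icc.exists_isMaxOn ⟨0, ⟨le_rfl, ha⟩⟩ hcont
    set M := ‖u x₀‖ * Real.exp (-(k.re * x₀)) with hM
    have hM0 : 0 ≤ M := by positivity
    have hb : ∀ s ∈ Icc (0:ℝ) a, ‖u s‖ ≤ M * Real.exp (k.re * s) := by
      intro s hs
      have : ‖u s‖ * Real.exp (-(k.re * s)) ≤ M := hmax hs
      rw [Real.exp_neg, ← div_eq_mul_inv, div_le_iff₀ (Real.exp_pos _)] at this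
      exact this
    have hux : ‖u x₀‖ = M * Real.exp (k.re * x₀) := by
      rw [hM, mul_assoc, ← Real.exp_add]; simp
    have r := congrArg norm (rep x₀ hx₀)
    have d1 := duhamel_bound hq hM0 habs hb hx₀
    have d2 := duhamel_bound hq hM0 habs' hb hx₀
    rw [norm_mul, norm_mul, hux] at r
    have t := (norm_sub_le _ _).trans (add_le_add_left ((norm_add_le _ _).trans
      (add_le_add_left (norm_sub_le _ _) _)) _) |> (r.le.trans ·)
    rw [norm_mul (Complex.exp (k * x₀)) (c + k * σ),
      norm_mul (Complex.exp (-k * x₀)) (c + -k * σ), ne1] at t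
    have o := one_le x₀ hx₀.1
    have n2 := ne2 x₀ hx₀.1
    set E := Real.exp (k.re * x₀)
    have p1 : E * ‖(c + k * σ : ℂ)‖ ≤ E * (2 * ‖k‖) := by gcongr
    have p2 : ‖Complex.exp (-k * x₀)‖ * ‖(c + -k * σ : ℂ)‖ ≤ E * (2 * ‖k‖) :=
      mul_le_mul (n2.trans o) ab2 (norm_nonneg _) (by positivity)
    have t2 : E * (2 * ‖k‖ * M) ≤ E * (4 * ‖k‖ + 2 * (M * Q)) := by
      have : ‖(2:ℂ)‖ = 2 := by simp
      rw [this] at t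
      linarith
    have t3 := le_of_mul_le_mul_left t2 (by linarith)
    have t4 : M ≤ 4 := by
      have : ‖k‖ * M ≤ ‖k‖ * 4 := by nlinarith
      exact le_of_mul_le_mul_left this hkp
    intro s hs
    exact (hb s hs).trans (by gcongr)
  have r := rep x hx
  have d1 := duhamel_bound hq (by norm_num) habs apriori hx
  have d2 := duhamel_bound hq (by norm_num) habs' apriori hx
  have o := one_le x hx.1
  have n2 := ne2 x hx.1
  have n1 := ne1 x
  set I1 := Complex.exp (k * x) * (∫ s in (0:ℝ)..x, Complex.exp (-k * s) * ((q s : ℂ) * u s))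
  set I2 := Complex.exp (-k * x) * (∫ s in (0:ℝ)..x, Complex.exp (- -k * s) * ((q s : ℂ) * u s))
  have r2 : Complex.exp (k * x) * (c + k * σ) =
      2 * k * u x + Complex.exp (-k * x) * (c + -k * σ) - I1 + I2 := by
    linear_combination -r
  have r3 := congrArg norm r2
  have t := r3.le.trans ((norm_add_le _ _).trans (add_le_add_left ((norm_sub_le _ _).trans
      (add_le_add_left (norm_add_le _ _) _)) _))
  rw [norm_mul, norm_mul, norm_mul, norm_mul, n1] at t
  have : ‖(2:ℂ)‖ = 2 := by simp
  rw [this] at t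
  set E := Real.exp (k.re * x)
  have p2 : ‖Complex.exp (-k * x)‖ * ‖(c + -k * σ : ℂ)‖ ≤ 1 * (2 * ‖k‖) :=
      mul_le_mul n2 ab2 (norm_nonneg _) (by positivity)
  have p1 : E * (‖k‖ * σ - 1) ≤ E * ‖(c + k * σ : ℂ)‖ := by gcongr
  have hE : 8 ≤ E * σ := by rwa [div_le_iff₀ hσ] at hxe
  have p3 : E * (2 * (1 + 8 * Q)) ≤ E * (‖k‖ * σ) := by gcongr
  have p4 : 8 * ‖k‖ ≤ E * σ * ‖k‖ := by gcongr
  have fin : ‖k‖ * (σ / 8 * E) ≤ ‖k‖ * ‖u x‖ := by nlinarith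
  exact le_of_mul_le_mul_left fin hkp

lemma nev_sign {γ : ℂ → ℂ} (h : IsNevanlinna γ) {z : ℂ} (hz : z.im ≠ 0) :
    0 ≤ z.im * (γ z).im := by
  rcases lt_or_gt_of_ne hz with h1 | h1
  · have h2 := h.2.2 (starRingEnd ℂ z) (by simpa using h1)
    rw [h.2.1 z hz] at h2
    simp only [Complex.conj_im] at h2
    nlinarith
  · exact mul_nonneg h1.le (h.2.2 z h1)

lemma sqrt_facts (w : ℂ) : (w ^ (1/2 : ℂ)) ^ 2 = w ∧ 0 ≤ (w ^ (1/2 : ℂ)).re ∧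
    ‖w ^ (1/2 : ℂ)‖ ^ 2 = ‖w‖ ∧ |w.im| ≤ 2 * (w ^ (1/2 : ℂ)).re * ‖w ^ (1/2 : ℂ)‖ := by
  have h1 : (w ^ (1/2 : ℂ)) ^ 2 = w := by
    have := Complex.cpow_nat_inv_pow w (n := 2) (by norm_num)
    simpa using this
  have h2 : 0 ≤ (w ^ (1/2 : ℂ)).re := by
    rw [one_div, Complex.cpow_inv_two_re]
    positivity
  refine ⟨h1, h2, ?_, ?_⟩
  · rw [← norm_pow, h1]
  · set k := w ^ (1/2 : ℂ)
    have : w.im = 2 * k.re * k.im := by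
      rw [← h1, sq, Complex.mul_im]; ring
    rw [this, abs_mul, abs_of_nonneg (by positivity)]
    gcongr
    exact Complex.abs_im_le_norm k

set_option maxHeartbeats 1000000

/-- **Exponential smallness of the difference of Weyl–Titchmarsh functions** (relation (3.9)).
For two Nevanlinna boundary parameters `γ, γ̂` of the same regular Sturm–Liouville problem
on `[0,a]`, the corresponding Weyl–Titchmarsh functions differ along every non-real ray by
`O(exp(-2a(1-ε) Re √(-z)))`, for every `ε > 0`. -/
theorem weyl_difference_exponentially_small
    (a : ℝ) (ha : 0 < a)
    (q : ℝ → ℝ) (hq : IntegrableOn q (Icc 0 a))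
    (α : ℝ) (hα : α ∈ Ioo 0 Real.pi)
    (φ ψ : ℂ → ℝ → ℂ)
    (hφ : IsRegSolution a q (Real.sin α) (Real.cos α) φ)
    (hψ : IsRegSolution a q (-Real.cos α) (Real.sin α) ψ)
    (φ' : ℂ → ℂ) (hφ' : ∀ z : ℂ,
      φ' z = (Real.cos α : ℂ) + ∫ s in (0:ℝ)..a, ((q s : ℂ) - z) * φ z s)
    (ψ' : ℂ → ℂ) (hψ' : ∀ z : ℂ,
      ψ' z = (Real.sin α : ℂ) + ∫ s in (0:ℝ)..a, ((q s : ℂ) - z) * ψ z s)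
    (γ γhat : ℂ → ℂ) (hγ : IsNevanlinna γ) (hγhat : IsNevanlinna γhat)
    (m mhat : ℂ → ℂ)
    (hm : ∀ z : ℂ, z.im ≠ 0 → m z = (ψ' z - ψ z a * γ z) / (φ' z - φ z a * γ z))
    (hmhat : ∀ z : ℂ, z.im ≠ 0 →
      mhat z = (ψ' z - ψ z a * γhat z) / (φ' z - φ z a * γhat z))
    (θ : ℝ) (hθ : θ ∈ Ioo 0 Real.pi ∨ θ ∈ Ioo Real.pi (2 * Real.pi))
    (ε : ℝ) (hε : 0 < ε) :
    ∃ C : ℝ, 0 < C ∧ ∃ R : ℝ, 0 < R ∧ ∀ r : ℝ, R ≤ r →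
      (φ' ((r : ℂ) * Complex.exp (θ * Complex.I)) -
          φ ((r : ℂ) * Complex.exp (θ * Complex.I)) a *
            γ ((r : ℂ) * Complex.exp (θ * Complex.I)) ≠ 0) ∧
      (φ' ((r : ℂ) * Complex.exp (θ * Complex.I)) -
          φ ((r : ℂ) * Complex.exp (θ * Complex.I)) a *
            γhat ((r : ℂ) * Complex.exp (θ * Complex.I)) ≠ 0) ∧
      ‖m ((r : ℂ) * Complex.exp (θ * Complex.I)) -
          mhat ((r : ℂ) * Complex.exp (θ * Complex.I))‖ ≤
        C * Real.exp (-(2 * a * (1 - ε)) *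
          ((-((r : ℂ) * Complex.exp (θ * Complex.I))) ^ (1/2 : ℂ)).re) := by
  have hσ : 0 < Real.sin α := Real.sin_pos_of_pos_of_lt_pi hα.1 hα.2
  have hσ1 : Real.sin α ≤ 1 := Real.sin_le_one α
  have hc1 : |Real.cos α| ≤ 1 := Real.abs_cos_le_one α
  have hsθ : Real.sin θ ≠ 0 := by
    rcases hθ with h | h
    · exact (Real.sin_pos_of_pos_of_lt_pi h.1 h.2).ne'
    · have : 0 < Real.sin (θ - Real.pi) :=
        Real.sin_pos_of_pos_of_lt_pi (by linarith [h.1]) (by linarith [h.2])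
      rw [Real.sin_sub_pi] at this
      linarith
  have hs : 0 < |Real.sin θ| := abs_pos.mpr hsθ
  have hqi : IntervalIntegrable q volume 0 a := by
    rwa [intervalIntegrable_iff_integrableOn_Icc_of_le ha.le]
  set σ := Real.sin α with hσdef
  set s := |Real.sin θ| with hsdef
  set Q := ∫ t in (0:ℝ)..a, |q t| with hQ
  have hQ0 : 0 ≤ Q := intervalIntegral.integral_nonneg ha.le fun _ _ => abs_nonneg _
  set δ := min ε (1/2) with hδ
  have hδ0 : 0 < δ := lt_min hε (by norm_num)
  have hδε : δ ≤ ε := min_le_left _ _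
  have hδ2 : δ ≤ 1/2 := min_le_right _ _
  set b := a * (1 - δ) with hb
  have hb0 : 0 < b := mul_pos ha (by linarith)
  have hba : a - b = a * δ := by rw [hb]; ring
  have hbd : 0 < a * δ := mul_pos ha hδ0
  set T := 1 + 2 * Q + 2 * (1 + 8 * Q) / σ + 16 / (σ * b * s) with hT
  have hT1 : 0 ≤ 2 * (1 + 8 * Q) / σ := by positivity
  have hT2 : 0 ≤ 16 / (σ * b * s) := by positivity
  have hTpos : 1 ≤ T := by linarith
  refine ⟨128 / (s * (a * δ) * σ ^ 2), by positivity, T ^ 2, by positivity, fun r hr => ?_⟩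
  have hr1 : 1 ≤ r := by nlinarith
  set z : ℂ := (r : ℂ) * Complex.exp (θ * Complex.I) with hz
  have hzim : z.im = r * Real.sin θ := by
    rw [hz, Complex.im_ofReal_mul, Complex.exp_ofReal_mul_I_im]
  have hznorm : ‖z‖ = r := by
    rw [hz, norm_mul, Complex.norm_exp_ofReal_mul_I, Complex.norm_real, mul_one,
      Real.norm_of_nonneg (by linarith)]
  have hzne : z.im ≠ 0 := by rw [hzim]; exact mul_ne_zero (by linarith) hsθ
  obtain ⟨hk2, hkre, hknorm, hkim⟩ := sqrt_facts (-z)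
  set k := (-z) ^ (1/2 : ℂ) with hk
  rw [norm_neg, hznorm] at hknorm
  have habsim : |z.im| = r * s := by rw [hzim, abs_mul, abs_of_pos (by linarith)]
  rw [Complex.neg_im, abs_neg, habsim, ← hknorm] at hkim
  have hkT : T ≤ ‖k‖ := by
    rw [← hknorm] at hr
    exact le_of_sq_le_sq hr (norm_nonneg _)
  have hkp : 0 < ‖k‖ := by linarith
  have hκ : ‖k‖ * s / 2 ≤ k.re := by
    have : ‖k‖ * (‖k‖ * s / 2) ≤ ‖k‖ * k.re := by nlinarith
    exact le_of_mul_le_mul_left this hkp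
  have hκb : 8 / σ ≤ Real.exp (k.re * b) := by
    have h1 : 16 / (σ * b * s) ≤ ‖k‖ := by linarith
    have h2 : 16 / (σ * b * s) * s / 2 * b ≤ k.re * b := by
      refine mul_le_mul_of_nonneg_right (le_trans ?_ hκ) hb0.le
      gcongr
    have h3 : 16 / (σ * b * s) * s / 2 * b = 8 / σ := by field_simp; norm_num
    have h4 := Real.add_one_le_exp (k.re * b)
    linarith
  have hkσ : 2 * (1 + 8 * Q) ≤ ‖k‖ * σ := by
    rw [← div_le_iff₀ hσ]; linarith
  obtain ⟨pφ, pφ', φ0⟩ := reg_prim ha.le hq hφ z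
  obtain ⟨pψ, pψ', ψ0⟩ := reg_prim ha.le hq hψ z
  have pφk : Prim a (fun x => (Real.cos α : ℂ) + ∫ s in (0:ℝ)..x, ((q s : ℂ) - z) * φ z s)
      (fun x => ((q x : ℂ) + k ^ 2) * φ z x) := by
    simpa only [hk2, ← sub_eq_add_neg] using pφ'
  have hlow : ∀ x ∈ Icc b a, σ ^ 2 / 64 * Real.exp (2 * k.re * b) ≤ ‖φ z x‖ ^ 2 := by
    intro x hx
    have hx' : x ∈ Icc 0 a := ⟨hb0.le.trans hx.1, hx.2⟩
    have hmono : Real.exp (k.re * b) ≤ Real.exp (k.re * x) :=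
      Real.exp_le_exp.mpr (mul_le_mul_of_nonneg_left hx.1 hkre)
    have g := growth ha.le hqi hσ hσ1 hc1 pφ pφk φ0 (by simp) hkre (by linarith)
      (by linarith) hkσ hx' (hκb.trans hmono)
    have g2 : σ / 8 * Real.exp (k.re * b) ≤ ‖φ z x‖ := le_trans (by gcongr) g
    have g3 := pow_le_pow_left₀ (by positivity) g2 2
    refine le_trans (le_of_eq ?_) g3
    rw [mul_pow, ← Real.exp_nat_mul]
    push_cast
    ring_nf
  set N := ∫ t in (0:ℝ)..a, ‖φ z t‖ ^ 2 with hN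
  have hcont : ContinuousOn (fun t => ‖φ z t‖ ^ 2) (Icc 0 a) := (hφ.1 z).norm.pow 2
  have hNlow : a * δ * (σ ^ 2 / 64 * Real.exp (2 * k.re * b)) ≤ N := by
    have hbla : b ≤ a := by linarith
    have hii : IntervalIntegrable (fun t => ‖φ z t‖ ^ 2) volume 0 a :=
      ContinuousOn.intervalIntegrable (by rwa [uIcc_of_le ha.le])
    have h1 : (∫ t in b..a, ‖φ z t‖ ^ 2) ≤ N :=
      intervalIntegral.integral_mono_interval hb0.le hbla le_rfl
        (Filter.Eventually.of_forall fun t => by positivity) hii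
    have h2 : (∫ t in b..a, σ ^ 2 / 64 * Real.exp (2 * k.re * b)) ≤ ∫ t in b..a, ‖φ z t‖ ^ 2 := by
      refine intervalIntegral.integral_mono_on hbla intervalIntegrable_const ?_ hlow
      refine ContinuousOn.intervalIntegrable ?_
      rw [uIcc_of_le hbla]
      exact hcont.mono (Icc_subset_Icc_left hb0.le)
    rw [intervalIntegral.integral_const, smul_eq_mul, hba] at h2
    exact h2.trans h1
  have hNpos : 0 < N := lt_of_lt_of_le (by positivity) hNlow
  have hW := wronskian_const ha.le pφ pφ' pψ pψ'
  have hE := energy ha.le pφ pφ'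
  simp only [intervalIntegral.integral_same, add_zero, φ0, ψ0, ← hφ' z, ← hψ' z] at hW hE
  have hW1 : φ z a * ψ' z - φ' z * ψ z a = 1 := by
    rw [hW, hσdef]
    have h := Complex.sin_sq_add_cos_sq (α : ℂ)
    push_cast
    linear_combination h
  have hE1 : (starRingEnd ℂ (φ z a) * φ' z).im = -(z.im * N) := by
    rw [hE]; simp [← Complex.ofReal_cos, ← Complex.ofReal_sin, hN]
  obtain ⟨n1, n2, hfin⟩ := weyl_disc hzne hNpos hW1 hE1 (nev_sign hγ hzne) (nev_sign hγhat hzne)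
  refine ⟨n1, n2, ?_⟩
  rw [hm z hzne, hmhat z hzne]
  refine hfin.trans ?_
  rw [habsim]
  have hexp : Real.exp (-(2 * k.re * b)) ≤ Real.exp (-(2 * a * (1 - ε)) * k.re) := by
    refine Real.exp_le_exp.mpr ?_
    rw [hb]
    have : 0 ≤ 2 * a * k.re * (ε - δ) :=
      mul_nonneg (by positivity) (by linarith)
    nlinarith
  have hden : s * (a * δ * (σ ^ 2 / 64 * Real.exp (2 * k.re * b))) ≤ r * s * N := by
    have h1 : s ≤ r * s := by nlinarith
    exact mul_le_mul h1 hNlow (by positivity) (by positivity)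
  calc 2 / (r * s * N) ≤ 2 / (s * (a * δ * (σ ^ 2 / 64 * Real.exp (2 * k.re * b)))) := by
        gcongr
    _ = 128 / (s * (a * δ) * σ ^ 2) * Real.exp (-(2 * k.re * b)) := by
        rw [Real.exp_neg]
        field_simp
        norm_num
    _ ≤ _ := by gcongr
end

section
/- Krein's representation criterion (Statement 2.4°): Let 0 < ℓ ≤ ∞ and let Φ : [0,2ℓ) → ℝ be continuous with Φ(0) = 0. Then the following are equivalent: (i) there exists a Borel measure τ on ℝ such that Φ(t) = ∫_ℝ c(λ,t) dτ(λ) for all t ∈ [0,2ℓ); (ii) the kernel K_Φ(s,t) := Φ(t+s) − Φ(|t−s|), 0 ≤ s,t < ℓ, is positive definite, i.e. for all n ∈ ℕ, t₁,…,t_n ∈ [0,ℓ) and c₁,…,c_n ∈ ℂ one has ∑_{i,j=1}^n K_Φ(t_i,t_j)·c_i·conj(c_j) ≥ 0. -/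
open MeasureTheory Set

/-- The kernel `c(λ,t)` : `(1 - cos(√λ t))/λ` for `λ > 0`,
`(1 - cosh(√(-λ) t))/λ` for `λ < 0`, and `t²/2` for `λ = 0`. -/
noncomputable def cker (lam t : ℝ) : ℝ :=
  if 0 < lam then (1 - Real.cos (Real.sqrt lam * t)) / lam
  else if lam < 0 then (1 - Real.cosh (Real.sqrt (-lam) * t)) / lam
  else t ^ 2 / 2

/-- Membership of `x` in the interval `[0, ℓ)`, where `0 < ℓ ≤ ∞`. -/
def InDom (ℓ : ENNReal) (x : ℝ) : Prop := 0 ≤ x ∧ ENNReal.ofReal x < ℓ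


namespace Krein
open Polynomial

/-- squares and weighted squares with degree bounds -/
def SOSset (d : ℕ) : Set ℝ[X] :=
  {f | (∃ p : ℝ[X], 2 * p.natDegree ≤ d ∧ f = p ^ 2) ∨
    (∃ q : ℝ[X], 2 * q.natDegree + 1 ≤ d ∧ f = (X + 1) * q ^ 2)}

/-- the cone of polynomials `∑ p² + (X+1) ∑ q²` with degree bounds -/
noncomputable def SOS (d : ℕ) : AddSubmonoid ℝ[X] := AddSubmonoid.closure (SOSset d)

lemma SOS_mono {d e : ℕ} (h : d ≤ e) : SOS d ≤ SOS e := by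
  apply AddSubmonoid.closure_mono
  rintro f (⟨p, hp, rfl⟩ | ⟨q, hq, rfl⟩)
  · exact Or.inl ⟨p, hp.trans h, rfl⟩
  · exact Or.inr ⟨q, hq.trans h, rfl⟩

lemma SOSset_mul {d e : ℕ} {f g : ℝ[X]} (hf : f ∈ SOSset d) (hg : g ∈ SOSset e) :
    f * g ∈ SOSset (d + e) := by
  rcases hf with ⟨p, hp, rfl⟩ | ⟨p, hp, rfl⟩ <;> rcases hg with ⟨q, hq, rfl⟩ | ⟨q, hq, rfl⟩
  · refine Or.inl ⟨p * q, ?_, by ring⟩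
    have := natDegree_mul_le (p := p) (q := q)
    omega
  · refine Or.inr ⟨p * q, ?_, by ring⟩
    have := natDegree_mul_le (p := p) (q := q)
    omega
  · refine Or.inr ⟨p * q, ?_, by ring⟩
    have := natDegree_mul_le (p := p) (q := q)
    omega
  · refine Or.inl ⟨(X + 1) * (p * q), ?_, by ring⟩
    have := natDegree_mul_le (p := p) (q := q)
    have h2 := natDegree_mul_le (p := (X + 1 : ℝ[X])) (q := p * q)
    have h3 : (X + 1 : ℝ[X]).natDegree = 1 := natDegree_X_add_C (1 : ℝ)
    omega

lemma SOS_mul {d e : ℕ} {f g : ℝ[X]} (hf : f ∈ SOS d) (hg : g ∈ SOS e) :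
    f * g ∈ SOS (d + e) := by
  induction hf using AddSubmonoid.closure_induction with
  | zero => rw [zero_mul]; exact zero_mem _
  | add x y _ _ hx hy => rw [add_mul]; exact add_mem hx hy
  | mem x hx =>
    induction hg using AddSubmonoid.closure_induction with
    | zero => rw [mul_zero]; exact zero_mem _
    | add x y _ _ hx hy => rw [mul_add]; exact add_mem hx hy
    | mem y hy => exact AddSubmonoid.subset_closure (SOSset_mul hx hy)

lemma SOS_const {c : ℝ} (hc : 0 ≤ c) (d : ℕ) : (C c : ℝ[X]) ∈ SOS d := by
  apply AddSubmonoid.subset_closure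
  refine Or.inl ⟨C (Real.sqrt c), by simp, ?_⟩
  rw [← C_pow, Real.sq_sqrt hc]

/-- nonnegativity off a finite set suffices -/
lemma nonneg_of_off_finite (g : ℝ[X]) (s : Set ℝ) (hs : s.Finite)
    (h : ∀ x > -1, x ∉ s → 0 ≤ g.eval x) : ∀ x ≥ -1, 0 ≤ g.eval x := by
  intro x hx
  have hd : Dense sᶜ := hs.countable.dense_compl ℝ
  have h1 : Ioi (-1 : ℝ) ⊆ closure (Ioi (-1) ∩ sᶜ) := hd.open_subset_closure_inter isOpen_Ioi
  have h2 : x ∈ closure (Ioi (-1 : ℝ) ∩ sᶜ) := by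
    have : x ∈ closure (Ioi (-1 : ℝ)) := by rw [closure_Ioi]; exact hx
    exact closure_minimal h1 isClosed_closure this
  have h3 : IsClosed {x : ℝ | 0 ≤ g.eval x} := isClosed_le continuous_const g.continuous
  exact closure_minimal (fun y hy => h y hy.1 hy.2) h3 h2

lemma SOS_of_nonneg : ∀ (n : ℕ) (g : ℝ[X]), g.natDegree ≤ n →
    (∀ x ≥ -1, 0 ≤ g.eval x) → g ∈ SOS g.natDegree := by
  intro n
  induction n using Nat.strong_induction_on with
  | _ n ih =>
  intro g hgn hg
  by_cases hdeg : g.natDegree = 0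
  · rw [eq_C_of_natDegree_eq_zero hdeg]
    apply SOS_const
    have := hg 0 (by norm_num)
    rw [eq_C_of_natDegree_eq_zero hdeg] at this
    simpa using this
  have hg0 : g ≠ 0 := by rintro rfl; simp at hdeg
  obtain ⟨z, hz⟩ := IsAlgClosed.exists_aeval_eq_zero ℂ g (by
    intro h; exact hdeg (natDegree_eq_of_degree_eq_some h))
  -- generic division step
  have key : ∀ (m g1 : ℝ[X]), g = m * g1 → 0 < m.natDegree → m ∈ SOS m.natDegree →
      (∀ x > -1, m.eval x ≠ 0 → 0 < m.eval x) → g ∈ SOS g.natDegree := by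
    intro m g1 hm hmd hmS hmpos
    have hm0 : m ≠ 0 := by rintro rfl; simp at hmd
    have hg10 : g1 ≠ 0 := by rintro rfl; simp at hm; exact hg0 hm
    have hd : g.natDegree = m.natDegree + g1.natDegree := by rw [hm, natDegree_mul hm0 hg10]
    have hg1 : ∀ x ≥ -1, 0 ≤ g1.eval x := by
      refine nonneg_of_off_finite g1 {x | m.IsRoot x} (by
        exact (m.finite_setOfPred_isRoot hm0)) ?_
      intro x hx hxs
      have h1 := hg x (le_of_lt hx)
      have h2 := hmpos x hx hxs
      rw [hm, eval_mul] at h1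
      exact nonneg_of_mul_nonneg_right h1 h2
    have := ih g1.natDegree (by omega) g1 le_rfl hg1
    rw [hd]
    nth_rewrite 1 [hm]
    exact SOS_mul hmS this
  by_cases him : z.im = 0
  · -- real root
    set a := z.re with ha
    have hza : z = (a : ℂ) := by apply Complex.ext <;> simp [ha, him]
    have hroot : g.IsRoot a := by
      rw [hza] at hz
      have : (algebraMap ℝ ℂ) (g.eval a) = 0 := by
        rw [← hz, ← Complex.coe_algebraMap, aeval_algebraMap_apply]; simp
      simpa using this
    obtain ⟨g1, hg1⟩ := dvd_iff_isRoot.mpr hroot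
    by_cases haneg : a ≤ -1
    · refine key (X - C a) g1 hg1 (by simp) ?_ ?_
      · rw [natDegree_X_sub_C]
        have : (X - C a : ℝ[X]) = C (-1 - a) + (X + 1) * 1 ^ 2 := by simp; ring
        rw [this]
        refine add_mem (SOS_const (by linarith) _) (AddSubmonoid.subset_closure ?_)
        exact Or.inr ⟨1, by simp, rfl⟩
      · intro x hx _
        simp only [eval_sub, eval_X, eval_C]
        linarith
    · push Not at haneg
      have hr : 0 ≤ g1.eval a := by
        have ht : Filter.Tendsto (fun x => g1.eval x) (nhdsWithin a (Ioi a)) (nhds (g1.eval a)) :=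
          g1.continuous.continuousWithinAt
        refine ge_of_tendsto ht ?_
        filter_upwards [self_mem_nhdsWithin] with x hx
        have h1 := hg x (by linarith [show a < x from hx])
        rw [hg1, eval_mul] at h1
        simp only [eval_sub, eval_X, eval_C] at h1
        exact nonneg_of_mul_nonneg_right h1 (sub_pos.mpr hx)
      have hl : g1.eval a ≤ 0 := by
        have ht : Filter.Tendsto (fun x => g1.eval x) (nhdsWithin a (Iio a)) (nhds (g1.eval a)) :=
          g1.continuous.continuousWithinAt
        refine le_of_tendsto ht ?_
        filter_upwards [Ioo_mem_nhdsLT haneg] with x hx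
        have h1 := hg x (le_of_lt hx.1)
        rw [hg1, eval_mul] at h1
        simp only [eval_sub, eval_X, eval_C] at h1
        have := hx.2
        by_contra hc
        push Not at hc
        nlinarith
      obtain ⟨g2, hg2⟩ := dvd_iff_isRoot.mpr (show g1.IsRoot a from le_antisymm hl hr)
      refine key ((X - C a) ^ 2) g2 (by rw [hg1, hg2]; ring) (by simp) ?_ ?_
      · refine AddSubmonoid.subset_closure (Or.inl ⟨X - C a, by simp, rfl⟩)
      · intro x hx hne
        simp only [eval_pow, eval_sub, eval_X, eval_C] at hne ⊢
        positivity
  · obtain ⟨g1, hg1⟩ := g.quadratic_dvd_of_aeval_eq_zero_im_ne_zero hz him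
    have hm : (X ^ 2 - C (2 * z.re) * X + C (‖z‖ ^ 2) : ℝ[X]) = (X - C z.re) ^ 2 + C (z.im ^ 2) := by
      rw [Complex.sq_norm, Complex.normSq_apply]
      simp only [C_mul, C_add, C_pow, map_ofNat]
      ring
    rw [hm] at hg1
    have hd2 : ((X - C z.re) ^ 2 + C (z.im ^ 2) : ℝ[X]).natDegree = 2 := by
      rw [natDegree_add_C]; simp
    refine key _ g1 hg1 (by omega) ?_ ?_
    · rw [hd2]
      refine add_mem (AddSubmonoid.subset_closure (Or.inl ⟨X - C z.re, by simp, rfl⟩))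
        (SOS_const (by positivity) _)
    · intro x _ _
      simp only [eval_add, eval_pow, eval_sub, eval_X, eval_C]
      positivity

end Krein


namespace Krein
open Polynomial

/-- `V_i = U_i + U_{i-1}`, i.e. `sin((i+1/2)θ)/sin(θ/2)` in `x = cos θ`. -/
noncomputable def V (i : ℕ) : ℝ[X] := Chebyshev.U ℝ i + Chebyshev.U ℝ ((i : ℤ) - 1)

/-- `Q_k = (1 - T_k)/(1 - X)`. -/
noncomputable def Q (k : ℕ) : ℝ[X] := ∑ i ∈ Finset.range k, V i

lemma V_mul (i : ℕ) : (1 - X) * V i = Chebyshev.T ℝ i - Chebyshev.T ℝ ((i : ℤ) + 1) := by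
  have h1 := Chebyshev.T_eq_U_sub_X_mul_U ℝ (i : ℤ)
  have h2 := Chebyshev.T_eq_X_mul_U_sub_U ℝ ((i : ℤ) - 1)
  rw [show (i : ℤ) - 1 + 2 = i + 1 by ring, show (i : ℤ) - 1 + 1 = i by ring] at h2
  rw [h1, h2, V]; ring

lemma Q_mul (k : ℕ) : (1 - X) * Q k = 1 - Chebyshev.T ℝ k := by
  induction k with
  | zero => simp [Q]
  | succ k ih =>
    rw [Q, Finset.sum_range_succ, mul_add, ← Q, ih, V_mul]
    push_cast
    ring

lemma one_sub_X_ne : (1 - X : ℝ[X]) ≠ 0 := by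
  intro h
  have := congrArg (eval 0) h
  simp at this

lemma V_mul_V (i j : ℕ) : V i * V j = Q (i + j + 1) - Q (((i : ℤ) - j).natAbs) := by
  apply mul_left_cancel₀ (pow_ne_zero 2 one_sub_X_ne)
  have h1 : (1 - X) ^ 2 * (V i * V j) = ((1 - X) * V i) * ((1 - X) * V j) := by ring
  have h2 : (1 - X : ℝ[X]) ^ 2 * (Q (i + j + 1) - Q (((i : ℤ) - j).natAbs))
     = (1 - X) * ((1 - X) * Q (i + j + 1) - (1 - X) * Q (((i : ℤ) - j).natAbs)) := by ring
  rw [h1, h2, V_mul, V_mul, Q_mul, Q_mul, Chebyshev.T_natAbs]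
  push_cast
  have e1 := Chebyshev.T_mul_T ℝ (i : ℤ) j
  have e2 := Chebyshev.T_mul_T ℝ (i : ℤ) (j + 1)
  have e3 := Chebyshev.T_mul_T ℝ ((i : ℤ) + 1) j
  have e4 := Chebyshev.T_mul_T ℝ ((i : ℤ) + 1) (j + 1)
  have e5 := Chebyshev.T_add_one ℝ ((i : ℤ) - j)
  have e6 := Chebyshev.T_add_one ℝ ((i : ℤ) + j + 1)
  rw [show (i : ℤ) + (j + 1) = i + j + 1 by ring, show (i : ℤ) - (j + 1) = i - j - 1 by ring] at e2
  rw [show (i : ℤ) + 1 + j = i + j + 1 by ring, show (i : ℤ) + 1 - j = i - j + 1 by ring] at e3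
  rw [show (i : ℤ) + 1 + (j + 1) = i + j + 1 + 1 by ring,
    show (i : ℤ) + 1 - (j + 1) = i - j by ring] at e4
  rw [show (i : ℤ) + j + 1 - 1 = i + j by ring] at e6
  apply mul_left_cancel₀ (two_ne_zero : (2 : ℝ[X]) ≠ 0)
  linear_combination e1 - e2 - e3 + e4 - e5 + e6

lemma U_mul_U (i j : ℕ) : 2 * ((X + 1) * (Chebyshev.U ℝ i * Chebyshev.U ℝ j)) =
    Q (i + j + 2) - Q (((i : ℤ) - j).natAbs) := by
  have hne : (1 - X : ℝ[X]) * (1 - X ^ 2) ≠ 0 := by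
    intro h
    have := congrArg (eval 0) h
    simp at this
  apply mul_left_cancel₀ hne
  have h1 : (1 - X : ℝ[X]) * (1 - X ^ 2) * (2 * ((X + 1) * (Chebyshev.U ℝ i * Chebyshev.U ℝ j)))
      = 2 * (((1 - X ^ 2) * Chebyshev.U ℝ i) * ((1 - X ^ 2) * Chebyshev.U ℝ j)) := by ring
  have h2 : (1 - X : ℝ[X]) * (1 - X ^ 2) * (Q (i + j + 2) - Q (((i : ℤ) - j).natAbs))
     = (1 - X ^ 2) * ((1 - X) * Q (i + j + 2) - (1 - X) * Q (((i : ℤ) - j).natAbs)) := by ring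
  rw [h1, h2, Q_mul, Q_mul, Chebyshev.T_natAbs, Chebyshev.one_sub_X_sq_mul_U_eq_pol_in_T,
    Chebyshev.one_sub_X_sq_mul_U_eq_pol_in_T]
  push_cast
  have e1 := Chebyshev.T_mul_T ℝ ((i : ℤ) + 1) (j + 1)
  have e2 := Chebyshev.T_mul_T ℝ ((i : ℤ) + 1) (j + 2)
  have e3 := Chebyshev.T_mul_T ℝ ((i : ℤ) + 2) (j + 1)
  have e4 := Chebyshev.T_mul_T ℝ ((i : ℤ) + 2) (j + 2)
  have e5 := Chebyshev.T_add_one ℝ ((i : ℤ) - j)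
  have e6 := Chebyshev.T_add_one ℝ ((i : ℤ) + j + 3)
  rw [show (i : ℤ) + 1 + (j + 1) = i + j + 2 by ring,
    show (i : ℤ) + 1 - (j + 1) = i - j by ring] at e1
  rw [show (i : ℤ) + 1 + (j + 2) = i + j + 3 by ring,
    show (i : ℤ) + 1 - (j + 2) = i - j - 1 by ring] at e2
  rw [show (i : ℤ) + 2 + (j + 1) = i + j + 3 by ring,
    show (i : ℤ) + 2 - (j + 1) = i - j + 1 by ring] at e3
  rw [show (i : ℤ) + 2 + (j + 2) = i + j + 3 + 1 by ring,
    show (i : ℤ) + 2 - (j + 2) = i - j by ring] at e4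
  rw [show (i : ℤ) + j + 3 - 1 = i + j + 2 by ring] at e6
  linear_combination X ^ 2 * e1 - X * e2 - X * e3 + e4 + e6 - X * e5

lemma natDegree_U_le (i : ℕ) : (Chebyshev.U ℝ i).degree = i := Chebyshev.degree_U_natCast ℝ i

lemma degree_V (i : ℕ) : (V i).degree = i := by
  cases i with
  | zero => simp [V]
  | succ i =>
    rw [V, show ((i + 1 : ℕ) : ℤ) - 1 = (i : ℕ) by simp]
    rw [degree_add_eq_left_of_degree_lt, Chebyshev.degree_U_natCast]
    rw [Chebyshev.degree_U_natCast, Chebyshev.degree_U_natCast]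
    exact_mod_cast Nat.lt_succ_self i

lemma degree_Q (i : ℕ) : (Q (i + 1)).degree = i := by
  induction i with
  | zero => simp [Q, degree_V]
  | succ i ih =>
    rw [Q, Finset.sum_range_succ, ← Q, degree_add_eq_right_of_degree_lt, degree_V]
    rw [ih, degree_V]
    exact_mod_cast Nat.lt_succ_self i

noncomputable def seqQ : Polynomial.Sequence ℝ := ⟨fun i => Q (i + 1), degree_Q⟩
noncomputable def seqV : Polynomial.Sequence ℝ := ⟨V, degree_V⟩
noncomputable def seqU : Polynomial.Sequence ℝ :=
  ⟨fun i => Chebyshev.U ℝ i, fun i => Chebyshev.degree_U_natCast ℝ i⟩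

lemma seq_unit (S : Polynomial.Sequence ℝ) (i : ℕ) : IsUnit (S i).leadingCoeff :=
  (leadingCoeff_ne_zero.mpr (S.ne_zero i)).isUnit

lemma seq_expand (S : Polynomial.Sequence ℝ) (p : ℝ[X]) (m : ℕ) (hp : p.natDegree ≤ m) :
    ∃ α : Fin (m + 1) → ℝ, p = ∑ i, C (α i) * S i := by
  have h1 := S.span_degreeLE (m := m) (fun i _ => seq_unit S i)
  have h2 : p ∈ degreeLE ℝ m := by
    rw [mem_degreeLE]; exact natDegree_le_iff_degree_le.mp hp
  rw [← h1] at h2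
  have h3 : Set.image S (Set.Iic m) = Set.range (fun i : Fin (m + 1) => S i) := by
    ext x; constructor
    · rintro ⟨i, hi, rfl⟩; exact ⟨⟨i, Nat.lt_succ_of_le hi⟩, rfl⟩
    · rintro ⟨i, rfl⟩; exact ⟨i, Nat.le_of_lt_succ i.2, rfl⟩
  rw [h3, Submodule.mem_span_range_iff_exists_fun] at h2
  obtain ⟨c, hc⟩ := h2
  exact ⟨c, by rw [← hc]; simp only [smul_eq_C_mul]⟩

/-- real positive definiteness of the kernel -/
def RPD (ℓ : ENNReal) (Φ : ℝ → ℝ) : Prop :=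
  ∀ (n : ℕ) (t : Fin n → ℝ) (c : Fin n → ℝ), (∀ i, InDom ℓ (t i)) →
    0 ≤ ∑ i, ∑ j, (Φ (t i + t j) - Φ |t i - t j|) * c i * c j

/-- The functional on polynomials with `Q k ↦ Φ (k h)`. -/
noncomputable def Lfun (Φ : ℝ → ℝ) (h : ℝ) : ℝ[X] →ₗ[ℝ] ℝ :=
  (seqQ.basis (seq_unit _)).constr ℝ (fun i : ℕ => Φ (((i + 1 : ℕ) : ℝ) * h))

lemma Lfun_Q (Φ : ℝ → ℝ) (hΦ0 : Φ 0 = 0) (h : ℝ) (k : ℕ) : Lfun Φ h (Q k) = Φ (k * h) := by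
  cases k with
  | zero => simp [Q, hΦ0]
  | succ i =>
    have h1 := (seqQ.basis (seq_unit _)).constr_basis ℝ (fun i : ℕ => Φ (((i + 1 : ℕ) : ℝ) * h)) i
    rw [Polynomial.Sequence.basis_eq_self] at h1
    exact h1

lemma abs_natAbs (i j : ℕ) : ((((i : ℤ) - j).natAbs : ℕ) : ℝ) = |(i : ℝ) - j| := by
  rw [Nat.cast_natAbs]; push_cast; rfl

lemma InDom_half {ℓ : ENNReal} {x : ℝ} (hx : InDom (2 * ℓ) x) {y : ℝ} (hy : 0 ≤ y)
    (hyx : 2 * y ≤ x) : InDom ℓ y := by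
  refine ⟨hy, ?_⟩
  have h1 : ENNReal.ofReal (2 * y) < 2 * ℓ := lt_of_le_of_lt (ENNReal.ofReal_le_ofReal hyx) hx.2
  rw [ENNReal.ofReal_mul (by norm_num)] at h1
  simp only [ENNReal.ofReal_ofNat] at h1
  exact lt_of_mul_lt_mul_left' h1

lemma Lfun_SOS {ℓ : ENNReal} {Φ : ℝ → ℝ} (hΦ0 : Φ 0 = 0) (hpd : RPD ℓ Φ) {h : ℝ} (hh : 0 < h)
    (d : ℕ) (hd : InDom (2 * ℓ) ((d + 1 : ℕ) * h)) (f : ℝ[X]) (hf : f ∈ SOS d) :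
    0 ≤ Lfun Φ h f := by
  induction hf using AddSubmonoid.closure_induction with
  | zero => simp
  | add x y _ _ hx hy => rw [map_add]; exact add_nonneg hx hy
  | mem x hx =>
    rcases hx with ⟨p, hp, rfl⟩ | ⟨q, hq, rfl⟩
    · obtain ⟨m, hm⟩ : ∃ m, m = p.natDegree := ⟨_, rfl⟩
      obtain ⟨α, hα⟩ := seq_expand seqV p m hm.ge
      have e : Lfun Φ h (p ^ 2) = ∑ i : Fin (m + 1), ∑ j : Fin (m + 1),
          (Φ ((((i : ℕ) : ℝ) + 1 / 2) * h + (((j : ℕ) : ℝ) + 1 / 2) * h)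
            - Φ |(((i : ℕ) : ℝ) + 1 / 2) * h - (((j : ℕ) : ℝ) + 1 / 2) * h|) * α i * α j := by
        have : p ^ 2 = ∑ i, ∑ j, C (α i * α j) *
            (Q (i + j + 1) - Q ((((i : ℕ) : ℤ) - (j : ℕ)).natAbs)) := by
          rw [sq]; rw [hα]
          rw [Finset.sum_mul_sum]
          refine Finset.sum_congr rfl fun i _ => Finset.sum_congr rfl fun j _ => ?_
          rw [← V_mul_V, C_mul]
          change C (α i) * V i * (C (α j) * V j) = _
          ring
        rw [this, map_sum]
        refine Finset.sum_congr rfl fun i _ => ?_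
        rw [map_sum]
        refine Finset.sum_congr rfl fun j _ => ?_
        rw [← smul_eq_C_mul, map_smul, map_sub, Lfun_Q Φ hΦ0, Lfun_Q Φ hΦ0, abs_natAbs,
          show (((i : ℕ) : ℝ) + 1 / 2) * h - (((j : ℕ) : ℝ) + 1 / 2) * h
            = (((i : ℕ) : ℝ) - (j : ℕ)) * h by ring, abs_mul, abs_of_pos hh,
          show (((i : ℕ) : ℝ) + 1 / 2) * h + (((j : ℕ) : ℝ) + 1 / 2) * h
            = (((i + j + 1 : ℕ)) : ℝ) * h by push_cast; ring]
        simp only [smul_eq_mul]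
        ring
      rw [e]
      refine hpd _ (fun i => (((i : ℕ) : ℝ) + 1 / 2) * h) α fun i => ?_
      refine InDom_half hd (by positivity) ?_
      have h1 : 2 * (i : ℕ) ≤ d := by have := i.2; omega
      have h2 : 2 * ((i : ℕ) : ℝ) ≤ d := by exact_mod_cast h1
      push_cast
      nlinarith
    · obtain ⟨m, hm⟩ : ∃ m, m = q.natDegree := ⟨_, rfl⟩
      obtain ⟨α, hα⟩ := seq_expand seqU q m hm.ge
      have e : 2 * Lfun Φ h ((X + 1) * q ^ 2) =
          ∑ i : Fin (m + 1), ∑ j : Fin (m + 1),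
          (Φ ((((i : ℕ) : ℝ) + 1) * h + (((j : ℕ) : ℝ) + 1) * h)
            - Φ |(((i : ℕ) : ℝ) + 1) * h - (((j : ℕ) : ℝ) + 1) * h|) * α i * α j := by
        have : (2 : ℝ) • ((X + 1) * q ^ 2) = ∑ i, ∑ j, C (α i * α j) *
            (Q (i + j + 2) - Q ((((i : ℕ) : ℤ) - (j : ℕ)).natAbs)) := by
          rw [sq]; rw [hα]
          rw [Finset.sum_mul_sum, smul_eq_C_mul, Finset.mul_sum, Finset.mul_sum]
          refine Finset.sum_congr rfl fun i _ => ?_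
          rw [Finset.mul_sum, Finset.mul_sum]
          refine Finset.sum_congr rfl fun j _ => ?_
          rw [← U_mul_U, C_mul]
          change C 2 * ((X + 1) * (C (α i) * Chebyshev.U ℝ (i : ℕ) *
            (C (α j) * Chebyshev.U ℝ (j : ℕ)))) = _
          rw [map_ofNat]
          ring
        rw [← smul_eq_mul, ← map_smul, this, map_sum]
        refine Finset.sum_congr rfl fun i _ => ?_
        rw [map_sum]
        refine Finset.sum_congr rfl fun j _ => ?_
        rw [← smul_eq_C_mul, map_smul, map_sub, Lfun_Q Φ hΦ0, Lfun_Q Φ hΦ0, abs_natAbs,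
          show (((i : ℕ) : ℝ) + 1) * h - (((j : ℕ) : ℝ) + 1) * h
            = (((i : ℕ) : ℝ) - (j : ℕ)) * h by ring, abs_mul, abs_of_pos hh,
          show (((i : ℕ) : ℝ) + 1) * h + (((j : ℕ) : ℝ) + 1) * h
            = (((i + j + 2 : ℕ)) : ℝ) * h by push_cast; ring]
        simp only [smul_eq_mul]
        ring
      have : 0 ≤ 2 * Lfun Φ h ((X + 1) * q ^ 2) := by
        rw [e]
        refine hpd _ (fun i => (((i : ℕ) : ℝ) + 1) * h) α fun i => ?_
        refine InDom_half hd (by positivity) ?_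
        have h1 : 2 * (i : ℕ) + 1 ≤ d := by have := i.2; omega
        have h2 : 2 * ((i : ℕ) : ℝ) + 1 ≤ d := by exact_mod_cast h1
        push_cast
        nlinarith
      linarith

/-- Every point `x > -1`, `x ≠ 1` comes from some `λ ≤ (π/h)²`. -/
lemma exists_lam {h : ℝ} (hh : 0 < h) {x : ℝ} (hx : -1 < x) (hx1 : x ≠ 1) :
    ∃ lam ≤ (Real.pi / h) ^ 2, ∃ r > 0, ∀ k : ℕ, cker lam (k * h) = r * (Q k).eval x := by
  have hQ : ∀ k : ℕ, (1 - x) * (Q k).eval x = 1 - (Chebyshev.T ℝ k).eval x := by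
    intro k
    have := congrArg (eval x) (Q_mul k)
    simpa using this
  rcases lt_or_gt_of_ne hx1 with hlt | hgt
  · have hθ : 0 < Real.arccos x := Real.arccos_pos.mpr hlt
    have hθ2 := Real.arccos_le_pi x
    have hpos : 0 < (Real.arccos x / h) ^ 2 := by positivity
    refine ⟨(Real.arccos x / h) ^ 2, by gcongr, (1 - x) / (Real.arccos x / h) ^ 2, by
      have : 0 < 1 - x := by linarith
      positivity, fun k => ?_⟩
    rw [cker, if_pos hpos, Real.sqrt_sq (by positivity), div_mul_eq_mul_div (1 - x), hQ]
    congr 2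
    have := Chebyshev.T_real_cos (Real.arccos x) k
    rw [Real.cos_arccos hx.le hlt.le] at this
    rw [this]; congr 1
    field_simp
    simp
  · have hθ : 0 < Real.arcosh x := Real.arcosh_pos hgt
    have hpos : 0 < (Real.arcosh x / h) ^ 2 := by positivity
    refine ⟨-(Real.arcosh x / h) ^ 2, by
        have : 0 ≤ (Real.pi / h) ^ 2 := by positivity
        linarith, (1 - x) / -(Real.arcosh x / h) ^ 2, by
      rw [← neg_div_neg_eq, neg_neg]
      have : 0 < -(1 - x) := by linarith
      positivity, fun k => ?_⟩
    rw [cker, if_neg (by linarith), if_pos (by linarith), neg_neg, Real.sqrt_sq (by positivity),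
      div_mul_eq_mul_div (1 - x), hQ]
    congr 2
    have := Chebyshev.T_real_cosh (Real.arcosh x) k
    rw [Real.cosh_arcosh hgt.le] at this
    rw [this]; congr 1
    field_simp
    simp

/-- The core positivity lemma on a grid. -/
lemma core {ℓ : ENNReal} {Φ : ℝ → ℝ} (hΦ0 : Φ 0 = 0) (hpd : RPD ℓ Φ) {h : ℝ} (hh : 0 < h)
    (a : ℕ →₀ ℝ) (ha : ∀ k ∈ a.support, InDom (2 * ℓ) (k * h))
    (hpos : ∀ lam ≤ (Real.pi / h) ^ 2, 0 ≤ ∑ k ∈ a.support, a k * cker lam (k * h)) :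
    0 ≤ ∑ k ∈ a.support, a k * Φ (k * h) := by
  set g : ℝ[X] := ∑ k ∈ a.support, C (a k) * Q k with hg
  have hLg : Lfun Φ h g = ∑ k ∈ a.support, a k * Φ (k * h) := by
    rw [hg, map_sum]
    refine Finset.sum_congr rfl fun k _ => ?_
    rw [← smul_eq_C_mul, map_smul, Lfun_Q Φ hΦ0, smul_eq_mul]
  have hgpos : ∀ x ≥ -1, 0 ≤ g.eval x := by
    refine nonneg_of_off_finite g {1} (Set.finite_singleton 1) fun x hx hx1 => ?_
    obtain ⟨lam, hlam, r, hr, hk⟩ := exists_lam hh hx hx1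
    have h1 := hpos lam hlam
    have h2 : ∑ k ∈ a.support, a k * cker lam (k * h) = r * g.eval x := by
      rw [hg, eval_finsetSum, Finset.mul_sum]
      refine Finset.sum_congr rfl fun k _ => ?_
      rw [hk, eval_mul, eval_C]; ring
    rw [h2] at h1
    exact nonneg_of_mul_nonneg_right h1 hr
  rw [← hLg]
  by_cases hM : ∃ m ∈ a.support, 0 < m
  · obtain ⟨m, hm, hm0⟩ := hM
    obtain ⟨M, hMs, hMmax⟩ := a.support.exists_max_image id ⟨m, hm⟩
    have hMpos : 0 < M := lt_of_lt_of_le hm0 (hMmax m hm)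
    obtain ⟨d, rfl⟩ : ∃ d, M = d + 1 := ⟨M - 1, by omega⟩
    have hdeg : g.natDegree ≤ d := by
      rw [hg]
      refine natDegree_sum_le_of_forall_le _ _ fun k hk => ?_
      refine (natDegree_C_mul_le _ _).trans ?_
      cases k with
      | zero => simp [Q]
      | succ k =>
        rw [natDegree_eq_of_degree_eq_some (degree_Q k)]
        have := hMmax _ hk
        simp only [id] at this
        omega
    exact Lfun_SOS hΦ0 hpd hh d (ha _ hMs) g (SOS_mono hdeg (SOS_of_nonneg _ g le_rfl hgpos))
  · push Not at hM
    rw [hLg]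
    refine Finset.sum_nonneg fun k hk => ?_
    have : k = 0 := by have := hM k hk; omega
    simp [this, hΦ0]

end Krein


namespace Krein

/-- `sinh u / u`, continuously extended. -/
noncomputable def shc : ℝ → ℝ := dslope Real.sinh 0

lemma shc_zero : shc 0 = 1 := by simp [shc]

lemma shc_of_ne {u : ℝ} (hu : u ≠ 0) : shc u = Real.sinh u / u := by
  rw [shc, dslope_of_ne _ hu, slope_def_field]; simp

lemma continuous_shc : Continuous shc := by
  rw [continuous_iff_continuousAt]
  intro u
  by_cases hu : u = 0
  · subst hu
    exact continuousAt_dslope_same.mpr Real.differentiable_sinh.differentiableAt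
  · exact (continuousAt_dslope_of_ne hu).mpr Real.continuous_sinh.continuousAt

lemma one_sub_cos (y : ℝ) : 1 - Real.cos y = 2 * Real.sin (y / 2) ^ 2 := by
  have := Real.cos_two_mul (y / 2)
  rw [show 2 * (y / 2) = y by ring] at this
  have h2 := Real.sin_sq_add_cos_sq (y / 2)
  linarith

lemma cosh_sub_one (y : ℝ) : Real.cosh y - 1 = 2 * Real.sinh (y / 2) ^ 2 := by
  have h1 := Real.cosh_two_mul (y / 2)
  have h2 := Real.cosh_sq (y / 2)
  rw [show 2 * (y / 2) = y by ring] at h1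
  linarith

lemma cker_pos_eq {lam : ℝ} (h : 0 < lam) (t : ℝ) :
    cker lam t = 2 * Real.sin (Real.sqrt lam * t / 2) ^ 2 / lam := by
  rw [cker, if_pos h, one_sub_cos]

lemma cker_neg_eq {lam : ℝ} (h : lam < 0) (t : ℝ) :
    cker lam t = 2 * Real.sinh (Real.sqrt (-lam) * t / 2) ^ 2 / (-lam) := by
  rw [cker, if_neg (by linarith), if_pos h, ← cosh_sub_one, ← neg_div_neg_eq]; congr 1; ring

lemma cker_zero_eq (t : ℝ) : cker 0 t = t ^ 2 / 2 := by simp [cker]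

lemma cker_formula (lam t : ℝ) : cker lam t =
    t ^ 2 / 2 * Real.sinc (Real.sqrt lam * t / 2) ^ 2 * shc (Real.sqrt (-lam) * t / 2) ^ 2 := by
  by_cases ht : t = 0
  · subst ht
    rcases lt_trichotomy lam 0 with h | h | h
    · rw [cker_neg_eq h]; simp
    · rw [h, cker_zero_eq]; simp
    · rw [cker_pos_eq h]; simp
  rcases lt_trichotomy lam 0 with h | h | h
  · rw [cker_neg_eq h, Real.sqrt_eq_zero_of_nonpos h.le]
    have h0 : 0 < Real.sqrt (-lam) := Real.sqrt_pos.mpr (by linarith)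
    have h1 : Real.sqrt (-lam) * t / 2 ≠ 0 := by
      have := h0.ne'
      positivity
    have h2 : Real.sqrt (-lam) ^ 2 = -lam := Real.sq_sqrt (by linarith)
    rw [shc_of_ne h1]
    simp only [zero_mul, zero_div, Real.sinc_zero, div_pow, mul_pow, h2]
    have : -lam ≠ 0 := by linarith
    field_simp
  · subst h; rw [cker_zero_eq]; simp [shc_zero]
  · rw [cker_pos_eq h, Real.sqrt_eq_zero_of_nonpos (x := -lam) (by linarith)]
    have h0 : 0 < Real.sqrt lam := Real.sqrt_pos.mpr h
    have h1 : Real.sqrt lam * t / 2 ≠ 0 := by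
      have := h0.ne'
      positivity
    have h2 : Real.sqrt lam ^ 2 = lam := Real.sq_sqrt h.le
    rw [Real.sinc_of_ne_zero h1]
    simp only [zero_mul, zero_div, shc_zero, div_pow, mul_pow, h2]
    field_simp

lemma cker_nonneg (lam t : ℝ) : 0 ≤ cker lam t := by
  rw [cker_formula]; positivity

lemma continuous_cker_left (t : ℝ) : Continuous (fun lam => cker lam t) := by
  have h1 := Real.continuous_sinc
  have h2 := continuous_shc
  simp only [cker_formula]
  fun_prop

lemma continuous_cker_right (lam : ℝ) : Continuous (fun t => cker lam t) := by
  have h1 := Real.continuous_sinc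
  have h2 := continuous_shc
  simp only [cker_formula]
  fun_prop

lemma cker_t_zero (lam : ℝ) : cker lam 0 = 0 := by rw [cker_formula]; simp

lemma cker_le_sq {lam : ℝ} (h : 0 ≤ lam) (t : ℝ) : cker lam t ≤ t ^ 2 / 2 := by
  rw [cker_formula, Real.sqrt_eq_zero_of_nonpos (x := -lam) (by linarith)]
  simp only [zero_mul, zero_div, shc_zero, one_pow, mul_one]
  have h1 : Real.sinc (Real.sqrt lam * t / 2) ^ 2 ≤ 1 := by
    rw [sq_le_one_iff_abs_le_one]; exact Real.abs_sinc_le_one _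
  have : 0 ≤ t ^ 2 / 2 := by positivity
  nlinarith

lemma cker_le_inv {lam : ℝ} (h : 0 < lam) (t : ℝ) : cker lam t ≤ 2 / lam := by
  rw [cker_pos_eq h]
  gcongr
  have := Real.sin_sq_le_one (Real.sqrt lam * t / 2)
  linarith

lemma cker_mono_neg {lam : ℝ} (h : lam < 0) {s t : ℝ} (hs : 0 ≤ s) (hst : s ≤ t) :
    cker lam s ≤ cker lam t := by
  rw [cker_neg_eq h, cker_neg_eq h]
  have h0 : 0 < -lam := by linarith
  have h1 : 0 ≤ Real.sinh (Real.sqrt (-lam) * s / 2) := Real.sinh_nonneg_iff.mpr (by positivity)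
  gcongr
  exact Real.sinh_le_sinh.mpr (by gcongr)

lemma cker_ratio_neg {lam : ℝ} (h : lam < 0) {s t : ℝ} (hs : 0 ≤ s) (hst : s < t) :
    cker lam s ≤ 4 / (-lam * (t - s) ^ 2) * cker lam t := by
  rw [cker_neg_eq h, cker_neg_eq h]
  have h0 : 0 < -lam := by linarith
  set y := Real.sqrt (-lam) with hy
  have hyp : 0 < y := Real.sqrt_pos.mpr h0
  have hy2 : y ^ 2 = -lam := Real.sq_sqrt h0.le
  set a := Real.sinh (y * s / 2) with ha
  have h1 : 0 ≤ a := Real.sinh_nonneg_iff.mpr (by positivity)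
  set c := y * (t - s) / 2 with hc
  have hts : 0 < t - s := by linarith
  have hcp : 0 < c := by positivity
  have h2 : Real.sinh (y * t / 2) = a * Real.cosh c + Real.cosh (y * s / 2) * Real.sinh c := by
    rw [ha, ← Real.sinh_add]; congr 1; rw [hc]; ring
  have h3 : c ≤ Real.cosh c := by
    have e1 := Real.self_le_sinh_iff.mpr hcp.le
    have e2 := Real.sinh_lt_cosh c
    linarith
  have h4 : a * c ≤ Real.sinh (y * t / 2) := by
    rw [h2]
    have : 0 ≤ Real.cosh (y * s / 2) * Real.sinh c :=
      mul_nonneg (Real.cosh_pos _).le (Real.sinh_nonneg_iff.mpr hcp.le)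
    nlinarith
  have h5 : (a * c) ^ 2 ≤ Real.sinh (y * t / 2) ^ 2 := by gcongr
  have h6 : 4 * c ^ 2 = -lam * (t - s) ^ 2 := by rw [hc, ← hy2]; ring
  rw [← h6, div_mul_div_comm, div_le_div_iff₀ h0 (by positivity)]
  have : a ^ 2 * c ^ 2 ≤ Real.sinh (y * t / 2) ^ 2 := by rw [← mul_pow]; exact h5
  nlinarith

lemma cker_pos {lam t : ℝ} (ht : 0 < t) (h : lam < (2 * Real.pi / t) ^ 2) : 0 < cker lam t := by
  rcases lt_trichotomy lam 0 with h0 | h0 | h0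
  · rw [cker_neg_eq h0]
    have h1 : 0 < -lam := by linarith
    have h2 : 0 < Real.sqrt (-lam) := Real.sqrt_pos.mpr h1
    have h3 : 0 < Real.sinh (Real.sqrt (-lam) * t / 2) := Real.sinh_pos_iff.mpr (by positivity)
    positivity
  · rw [h0, cker_zero_eq]; positivity
  · rw [cker_pos_eq h0]
    have h2 : 0 < Real.sqrt lam := Real.sqrt_pos.mpr h0
    have h4 : Real.sqrt lam < 2 * Real.pi / t := by
      rw [Real.sqrt_lt' (by positivity)]; exact h
    have h5 : Real.sqrt lam * t < 2 * Real.pi := by rwa [lt_div_iff₀ ht] at h4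
    have h3 : 0 < Real.sin (Real.sqrt lam * t / 2) :=
      Real.sin_pos_of_pos_of_lt_pi (by positivity) (by linarith)
    positivity

/-- `s(λ,t)` : `sin(√λ t)/√λ` and its analogues. -/
noncomputable def sker (lam t : ℝ) : ℝ :=
  if 0 < lam then Real.sin (Real.sqrt lam * t) / Real.sqrt lam
  else if lam < 0 then Real.sinh (Real.sqrt (-lam) * t) / Real.sqrt (-lam)
  else t

lemma cker_abs (lam t : ℝ) : cker lam |t| = cker lam t := by
  rcases abs_choice t with h | h <;> rw [h]
  unfold cker; simp

lemma cker_diff (lam s t : ℝ) :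
    cker lam (s + t) - cker lam |s - t| = 2 * (sker lam s * sker lam t) := by
  rw [cker_abs]
  unfold cker sker
  split_ifs with h1 h2
  · have h3 : Real.sqrt lam ^ 2 = lam := Real.sq_sqrt h1.le
    have h0 : 0 < Real.sqrt lam := Real.sqrt_pos.mpr h1
    rw [mul_add, mul_sub, Real.cos_add, Real.cos_sub, div_mul_div_comm, ← sq, h3]
    ring
  · have h0 : 0 < -lam := by linarith
    have h3 : Real.sqrt (-lam) ^ 2 = -lam := Real.sq_sqrt h0.le
    rw [mul_add, mul_sub, Real.cosh_add, Real.cosh_sub, div_mul_div_comm, ← sq, h3, div_neg]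
    ring
  · ring

/-- Dirichlet kernel estimate. -/
lemma sum_cos_le (k : ℕ) {θ : ℝ} (h0 : 0 < θ) (hpi : θ ≤ Real.pi) :
    ∑ j ∈ Finset.Icc 1 k, Real.cos (j * θ) ≤ Real.pi / (2 * θ) := by
  have key : 2 * Real.sin (θ / 2) * ∑ j ∈ Finset.Icc 1 k, Real.cos (j * θ)
      = Real.sin ((k + 1 / 2) * θ) - Real.sin (θ / 2) := by
    induction k with
    | zero => simp; ring_nf; 
    | succ k ih =>
      rw [Finset.sum_Icc_succ_top (by omega), mul_add, ih]
      push_cast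
      have e1 : ((k : ℝ) + 1 + 1 / 2) * θ = (k + 1) * θ + θ / 2 := by ring
      have e2 : ((k : ℝ) + 1 / 2) * θ = (k + 1) * θ - θ / 2 := by ring
      rw [e1, e2, Real.sin_add, Real.sin_sub]; ring
  have hs : 2 / Real.pi * (θ / 2) ≤ Real.sin (θ / 2) :=
    Real.mul_le_sin (by linarith) (by linarith)
  have hpi0 := Real.pi_pos
  have hs' : θ / Real.pi ≤ Real.sin (θ / 2) := by
    calc θ / Real.pi = 2 / Real.pi * (θ / 2) := by ring
      _ ≤ _ := hs
  have hsp : 0 < Real.sin (θ / 2) := lt_of_lt_of_le (by positivity) hs'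
  have h1 : 2 * Real.sin (θ / 2) * ∑ j ∈ Finset.Icc 1 k, Real.cos (j * θ) ≤ 1 := by
    rw [key]; linarith [Real.sin_le_one ((k + 1 / 2) * θ)]
  by_contra hc
  push Not at hc
  have h2 : 1 ≤ 2 * Real.sin (θ / 2) * (Real.pi / (2 * θ)) := by
    calc 1 = 2 * (θ / Real.pi) * (Real.pi / (2 * θ)) := by field_simp
      _ ≤ _ := by gcongr
  have h3 := mul_lt_mul_of_pos_left hc (show 0 < 2 * Real.sin (θ / 2) by positivity)
  linarith

lemma tail_avg (k : ℕ) (hk : 0 < k) {h lam : ℝ} (hh : 0 < h) (hlam : 0 < lam)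
    (h1 : Real.sqrt lam * h ≤ Real.pi) (h2 : Real.pi ≤ k * (Real.sqrt lam * h)) :
    1 / lam ≤ ∑ j ∈ Finset.Icc 1 k, 2 / (k : ℝ) * cker lam (j * h) := by
  have hs : 0 < Real.sqrt lam := Real.sqrt_pos.mpr hlam
  have hθ : 0 < Real.sqrt lam * h := by positivity
  have e := sum_cos_le k hθ h1
  have hkp : (0 : ℝ) < k := by exact_mod_cast hk
  have e2 : Real.pi / (2 * (Real.sqrt lam * h)) ≤ k / 2 := by
    rw [div_le_div_iff₀ (by positivity) (by norm_num)]; linarith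
  have e3 : ∑ j ∈ Finset.Icc 1 k, 2 / (k : ℝ) * cker lam (j * h)
      = 2 / (k * lam) * (k - ∑ j ∈ Finset.Icc 1 k, Real.cos (j * (Real.sqrt lam * h))) := by
    have : (k : ℝ) = ∑ j ∈ Finset.Icc 1 k, (1 : ℝ) := by simp
    nth_rewrite 3 [this]
    rw [← Finset.sum_sub_distrib, Finset.mul_sum]
    refine Finset.sum_congr rfl fun j _ => ?_
    rw [cker, if_pos hlam, div_mul_div_comm, show Real.sqrt lam * (j * h) = j * (Real.sqrt lam * h) by ring]
    ring
  rw [e3]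
  calc 1 / lam = 2 / (k * lam) * (k - k / 2) := by field_simp; norm_num
    _ ≤ _ := by gcongr; linarith

end Krein


namespace Krein
open Filter Topology

/-- grid step `1/n!` -/
noncomputable def hs (n : ℕ) : ℝ := 1 / (n.factorial : ℝ)

lemma hs_pos (n : ℕ) : 0 < hs n := by
  have := n.factorial_pos
  unfold hs; positivity

lemma hs_tendsto : Tendsto hs atTop (𝓝 0) := by
  unfold hs
  exact tendsto_one_div_atTop_nhds_zero_nat.comp (tendsto_atTop_mono Nat.self_le_factorial tendsto_id)

/-- linear combination over the grid -/
noncomputable def LC (F : ℝ → ℝ) (n : ℕ) : (ℕ →₀ ℝ) →ₗ[ℝ] ℝ :=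
  Finsupp.linearCombination ℝ (fun k : ℕ => F (k * hs n))

lemma LC_apply (F : ℝ → ℝ) (n : ℕ) (a : ℕ →₀ ℝ) :
    LC F n a = ∑ k ∈ a.support, a k * F (k * hs n) := by
  simp [LC, Finsupp.linearCombination_apply, Finsupp.sum]

/-- `f` is dominated by a grid combination with value at most `β`. -/
def P (ℓ : ENNReal) (Φ : ℝ → ℝ) (f : ℝ → ℝ) (β : ℝ) : Prop :=
  ∀ᶠ n in atTop, ∃ a : ℕ →₀ ℝ, (∀ k, a k ≠ 0 → InDom (2 * ℓ) (k * hs n)) ∧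
    (∀ lam ≤ (Real.pi / hs n) ^ 2, f lam ≤ LC (cker lam) n a) ∧ LC Φ n a ≤ β

variable {ℓ : ENNReal} {Φ : ℝ → ℝ}

lemma P_mono {f f' : ℝ → ℝ} {β β' : ℝ} (h : P ℓ Φ f' β') (hf : ∀ x, f x ≤ f' x) (hβ : β' ≤ β) :
    P ℓ Φ f β := by
  filter_upwards [h] with n ⟨a, h1, h2, h3⟩
  exact ⟨a, h1, fun lam hl => (hf lam).trans (h2 lam hl), h3.trans hβ⟩

lemma P_zero : P ℓ Φ 0 0 := by
  refine Eventually.of_forall fun n => ⟨0, by simp, by simp, by simp⟩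

lemma P_add {f f' : ℝ → ℝ} {β β' : ℝ} (h : P ℓ Φ f β) (h' : P ℓ Φ f' β') :
    P ℓ Φ (f + f') (β + β') := by
  filter_upwards [h, h'] with n ⟨a, h1, h2, h3⟩ ⟨a', h1', h2', h3'⟩
  refine ⟨a + a', fun k hk => ?_, fun lam hl => ?_, ?_⟩
  · by_cases hak : a k = 0
    · refine h1' k fun hc => hk ?_
      simp [hak, hc]
    · exact h1 k hak
  · rw [map_add]; exact add_le_add (h2 lam hl) (h2' lam hl)
  · rw [map_add]; exact add_le_add h3 h3'

lemma P_smul {f : ℝ → ℝ} {β r : ℝ} (hr : 0 ≤ r) (h : P ℓ Φ f β) : P ℓ Φ (r • f) (r * β) := by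
  filter_upwards [h] with n ⟨a, h1, h2, h3⟩
  refine ⟨r • a, fun k hk => h1 k fun hc => hk ?_, fun lam hl => ?_, ?_⟩
  · simp [hc]
  · rw [map_smul]; exact mul_le_mul_of_nonneg_left (h2 lam hl) hr
  · rw [map_smul]; exact mul_le_mul_of_nonneg_left h3 hr

lemma P_pos (hΦ0 : Φ 0 = 0) (hpd : RPD ℓ Φ) {β : ℝ} (h : P ℓ Φ 0 β) : 0 ≤ β := by
  obtain ⟨n, a, h1, h2, h3⟩ := h.exists
  refine le_trans ?_ h3
  rw [LC_apply]
  refine core hΦ0 hpd (hs_pos n) a (fun k hk => h1 k (Finsupp.mem_support_iff.mp hk)) ?_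
  intro lam hl
  rw [← LC_apply]
  exact h2 lam hl

/-- rational points lie on the grid eventually -/
lemma rat_grid {q : ℚ} (hq : 0 ≤ q) : ∀ᶠ n in atTop, ∃ k : ℕ, (q : ℝ) = k * hs n := by
  filter_upwards [eventually_ge_atTop q.den] with n hn
  obtain ⟨m, hm⟩ := Nat.dvd_factorial q.den_pos hn
  refine ⟨q.num.toNat * m, ?_⟩
  have h1 : ((q.num.toNat : ℤ)) = q.num := Int.toNat_of_nonneg (Rat.num_nonneg.mpr hq)
  have h2 : ((q.num.toNat : ℕ) : ℝ) = (q.num : ℝ) := by exact_mod_cast congrArg (Int.cast (R := ℝ)) h1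
  have hd : (q.den : ℝ) ≠ 0 := by exact_mod_cast q.den_nz
  have hm0 : (m : ℝ) ≠ 0 := by
    have : m ≠ 0 := by rintro rfl; simp at hm; exact n.factorial_ne_zero hm
    exact_mod_cast this
  rw [hs, hm, Rat.cast_def]
  push_cast
  rw [h2]
  field_simp

lemma P_cker_smul {q : ℚ} (hq : InDom (2 * ℓ) q) (r : ℝ) :
    P ℓ Φ (fun lam => r * cker lam q) (r * Φ q) := by
  filter_upwards [rat_grid (q := q) (by exact_mod_cast hq.1)] with n ⟨k, hk⟩
  refine ⟨Finsupp.single k r, fun j hj => ?_, fun lam _ => ?_, ?_⟩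
  · have : j = k := by
      by_contra hc
      exact hj (Finsupp.single_eq_of_ne hc)
    rw [this, ← hk]; exact hq
  · rw [LC, Finsupp.linearCombination_single, ← hk, smul_eq_mul]
  · rw [LC, Finsupp.linearCombination_single, ← hk, smul_eq_mul]

/-- tail function -/
noncomputable def tailf (R lam : ℝ) : ℝ := if R < lam then 1 / lam else 0

lemma InDom_le {x y : ℝ} {m : ENNReal} (h : InDom m y) (hx : 0 ≤ x) (hxy : x ≤ y) : InDom m x :=
  ⟨hx, lt_of_le_of_lt (ENNReal.ofReal_le_ofReal hxy) h.2⟩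

lemma exists_InDom {m : ENNReal} (hm : 0 < m) : ∃ x : ℝ, 0 < x ∧ InDom m x := by
  obtain ⟨q, h1, h2⟩ := ENNReal.lt_iff_exists_real_btwn.mp hm
  refine ⟨q, ?_, h1, h2.2⟩
  exact ENNReal.ofReal_pos.mp h2.1

lemma P_tail (hℓ : 0 < ℓ) (hΦc : ContinuousOn Φ {t : ℝ | InDom (2 * ℓ) t}) (hΦ0 : Φ 0 = 0)
    {ε : ℝ} (hε : 0 < ε) : ∃ R > 0, P ℓ Φ (tailf R) ε := by
  have h2ℓ : 0 < 2 * ℓ := by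
    rw [pos_iff_ne_zero] at hℓ ⊢
    simp [hℓ]
  obtain ⟨x0, hx0, hx0d⟩ := exists_InDom h2ℓ
  have h0d : InDom (2 * ℓ) 0 := InDom_le hx0d le_rfl hx0.le
  have hc := hΦc 0 h0d
  rw [Metric.continuousWithinAt_iff] at hc
  obtain ⟨δ1, hδ1, hc⟩ := hc (ε / 2) (by positivity)
  set δ := min x0 (δ1 / 2) with hδ
  have hδp : 0 < δ := lt_min hx0 (by positivity)
  have hδd : InDom (2 * ℓ) δ := InDom_le hx0d hδp.le (min_le_left _ _)
  have hsm : ∀ s, 0 ≤ s → s ≤ δ → Φ s ≤ ε / 2 := by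
    intro s hs0 hsδ
    have h1 := hc (x := s) (InDom_le hδd hs0 hsδ) (by
      rw [Real.dist_eq, sub_zero, abs_of_nonneg hs0]
      have := min_le_right x0 (δ1 / 2)
      linarith)
    rw [Real.dist_eq, hΦ0, sub_zero] at h1
    exact (le_abs_self _).trans h1.le
  have hpi := Real.pi_pos
  refine ⟨(2 * Real.pi / δ) ^ 2, by positivity, ?_⟩
  filter_upwards [hs_tendsto.eventually_lt_const (show 0 < δ / 2 by positivity)] with n hn
  have hh := hs_pos n
  set h := hs n with hdef
  set k := ⌊δ / h⌋₊ with hk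
  have hk1 : (k : ℝ) * h ≤ δ := by
    rw [← le_div_iff₀ hh]; exact Nat.floor_le (by positivity)
  have hk2 : δ < (k + 1) * h := by
    rw [← div_lt_iff₀ hh]; exact Nat.lt_floor_add_one _
  have hk3 : δ / 2 ≤ k * h := by linarith
  have hkpos : 0 < k := by
    rcases Nat.eq_zero_or_pos k with h0 | h0
    · rw [h0] at hk3; simp at hk3; linarith
    · exact h0
  have hkR : (0 : ℝ) < k := by exact_mod_cast hkpos
  have hjδ : ∀ j ∈ Finset.Icc 1 k, (j : ℝ) * h ≤ δ := by
    intro j hj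
    have : (j : ℝ) ≤ k := by exact_mod_cast (Finset.mem_Icc.mp hj).2
    nlinarith
  refine ⟨∑ j ∈ Finset.Icc 1 k, Finsupp.single j (2 / (k : ℝ)), ?_, ?_, ?_⟩
  · intro j hj
    rw [Finsupp.finsetSum_apply] at hj
    obtain ⟨i, hi, hne⟩ := Finset.exists_ne_zero_of_sum_ne_zero hj
    have : j = i := by
      by_contra hc
      exact hne (Finsupp.single_eq_of_ne hc)
    rw [this]
    exact InDom_le hδd (by positivity) (hjδ i hi)
  · intro lam hl
    rw [map_sum]
    simp only [LC, Finsupp.linearCombination_single, smul_eq_mul]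
    rw [tailf]
    split_ifs with hR
    · have hlp : 0 < lam := lt_trans (by positivity) hR
      refine tail_avg k hkpos hh hlp ?_ ?_
      · rw [← le_div_iff₀ hh]
        exact Real.sqrt_le_iff.mpr ⟨by positivity, hl⟩
      · have h1 : 2 * Real.pi / δ ≤ Real.sqrt lam := Real.le_sqrt_of_sq_le hR.le
        have h2 : 2 * Real.pi ≤ Real.sqrt lam * δ := by rwa [div_le_iff₀ hδp] at h1
        have h3 := Real.sqrt_nonneg lam
        nlinarith
    · refine Finset.sum_nonneg fun j _ => mul_nonneg (by positivity) (cker_nonneg _ _)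
  · rw [map_sum]
    simp only [LC, Finsupp.linearCombination_single, smul_eq_mul]
    calc ∑ j ∈ Finset.Icc 1 k, 2 / (k : ℝ) * Φ (j * h)
        ≤ ∑ j ∈ Finset.Icc 1 k, 2 / (k : ℝ) * (ε / 2) := by
          refine Finset.sum_le_sum fun j hj => ?_
          have := hsm _ (by positivity) (hjδ j hj)
          gcongr
      _ = ε := by simp; field_simp

/-- bounded functions on compacts are dominated -/
lemma P_compact (hℓ : 0 < ℓ) (R : ℝ) (M : ℝ) (f : ℝ → ℝ) (hf : ∀ x, f x ≤ M)
    (hsupp : ∀ x, R < |x| → f x ≤ 0) : ∃ β, P ℓ Φ f β := by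
  have h2ℓ : 0 < 2 * ℓ := by
    rw [pos_iff_ne_zero] at hℓ ⊢
    simp [hℓ]
  obtain ⟨x0, hx0, hx0d⟩ := exists_InDom h2ℓ
  have hpi := Real.pi_pos
  set R' := max R 1 with hR'
  have hR'1 : 1 ≤ R' := le_max_right _ _
  obtain ⟨q, hq0, hq1⟩ := exists_rat_btwn (show (0 : ℝ) < min x0 (1 / R') by positivity)
  have hqd : InDom (2 * ℓ) q := InDom_le hx0d hq0.le (hq1.le.trans (min_le_left _ _))
  have hq2 : (q : ℝ) < 1 / R' := lt_of_lt_of_le hq1 (min_le_right _ _)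
  have hpos : ∀ x ∈ Icc (-R') R', 0 < cker x q := by
    intro x hx
    refine cker_pos hq0 (lt_of_le_of_lt hx.2 ?_)
    have h1 : R' < 1 / q := by
      rw [lt_div_iff₀ hq0]; rw [lt_div_iff₀ (by linarith)] at hq2; linarith
    have h2 : 1 / (q : ℝ) ≤ 2 * Real.pi / q := by
      gcongr; linarith [Real.pi_gt_three]
    nlinarith
  obtain ⟨y, hy, hymin⟩ := isCompact_Icc.exists_isMinOn (⟨R', by constructor <;> linarith⟩ : (Icc (-R') R').Nonempty)
    (continuous_cker_left (q : ℝ)).continuousOn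
  have hy0 := hpos y hy
  set A := |M| / cker y q with hA
  refine ⟨A * Φ q, P_mono (P_cker_smul hqd A) ?_ le_rfl⟩
  intro x
  have hA0 : 0 ≤ A := by positivity
  by_cases hx : |x| ≤ R'
  · have h1 : cker y q ≤ cker x q := hymin (abs_le.mp hx)
    calc f x ≤ |M| := (hf x).trans (le_abs_self M)
      _ = A * cker y q := by rw [hA]; field_simp
      _ ≤ _ := by gcongr
  · push Not at hx
    have := hsupp x (lt_of_le_of_lt (le_max_left _ _) hx)
    exact this.trans (mul_nonneg hA0 (cker_nonneg _ _))

/-- the space of dominated functions -/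
def E (ℓ : ENNReal) (Φ : ℝ → ℝ) : Submodule ℝ (ℝ → ℝ) where
  carrier := {f | ∃ β, P ℓ Φ f β ∧ P ℓ Φ (-f) β}
  zero_mem' := ⟨0, P_zero, by rw [neg_zero]; exact P_zero⟩
  add_mem' := by
    rintro f g ⟨β, h1, h2⟩ ⟨γ, h3, h4⟩
    exact ⟨β + γ, P_add h1 h3, by rw [neg_add]; exact P_add h2 h4⟩
  smul_mem' := by
    rintro r f ⟨β, h1, h2⟩
    rcases le_total 0 r with hr | hr
    · exact ⟨r * β, P_smul hr h1, by rw [← smul_neg]; exact P_smul hr h2⟩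
    · refine ⟨(-r) * β, ?_, ?_⟩
      · have := P_smul (neg_nonneg.mpr hr) h2
        rwa [neg_smul_neg] at this
      · have := P_smul (neg_nonneg.mpr hr) h1
        rwa [neg_smul] at this

/-- the cone used in the Riesz extension -/
def cone (ℓ : ENNReal) (Φ : ℝ → ℝ) : PointedCone ℝ (E ℓ Φ × ℝ) where
  carrier := {z | ∀ ε > 0, P ℓ Φ (-(z.1 : ℝ → ℝ)) (z.2 + ε)}
  zero_mem' := by
    intro ε hε
    refine P_mono P_zero (fun x => ?_) (by simpa using hε.le)
    simp
  add_mem' := by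
    intro z w hz hw ε hε
    have := P_add (hz (ε / 2) (by positivity)) (hw (ε / 2) (by positivity))
    refine P_mono this (fun x => ?_) ?_
    · simp [add_comm]
    · simp only [Prod.snd_add]; linarith
  smul_mem' := by
    intro r z hz ε hε
    rcases eq_or_ne r 0 with rfl | hr
    · refine P_mono P_zero (fun x => ?_) (by simpa using hε.le)
      simp
    · have hr0 : (0 : ℝ) < r := lt_of_le_of_ne r.2 (fun h => hr (Subtype.ext h.symm))
      have := P_smul hr0.le (hz (ε / r) (by positivity))
      refine P_mono this (fun x => ?_) ?_
      · simp
        exact le_of_eq rfl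
      · rw [mul_add, mul_div_cancel₀ _ hr0.ne']
        rfl

lemma exists_functional (hΦ0 : Φ 0 = 0) (hpd : RPD ℓ Φ) :
    ∃ g : E ℓ Φ →ₗ[ℝ] ℝ, ∀ (f : E ℓ Φ) (β : ℝ), P ℓ Φ f β → g f ≤ β := by
  let f0 : (E ℓ Φ × ℝ) →ₗ.[ℝ] ℝ :=
    ⟨LinearMap.range (LinearMap.inr ℝ (E ℓ Φ) ℝ),
      (LinearMap.snd ℝ (E ℓ Φ) ℝ).domRestrict _⟩
  have hf0 : ∀ x : f0.domain, f0 x = (x : E ℓ Φ × ℝ).2 := fun x => rfl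
  obtain ⟨g, hg1, hg2⟩ := riesz_extension (cone ℓ Φ) f0 (by
    rintro ⟨x, b, rfl⟩ hx
    rw [hf0]
    change 0 ≤ b
    refine le_of_forall_pos_le_add fun ε hε => ?_
    have := hx ε hε
    refine P_pos hΦ0 hpd (P_mono this (fun x => ?_) le_rfl)
    simp) (by
    rintro ⟨f, b⟩
    obtain ⟨β, h1, h2⟩ := f.2
    refine ⟨⟨LinearMap.inr ℝ (E ℓ Φ) ℝ (β - b), ⟨_, rfl⟩⟩, ?_⟩
    intro ε hε
    refine P_mono h2 (fun x => ?_) ?_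
    · simp
    · simp [hε.le])
  have hgr : ∀ b : ℝ, g (0, b) = b := fun b => hg1 ⟨LinearMap.inr ℝ (E ℓ Φ) ℝ b, ⟨_, rfl⟩⟩
  refine ⟨g.comp (LinearMap.inl ℝ (E ℓ Φ) ℝ), fun f β hP => ?_⟩
  have h1 : 0 ≤ g (-f, β) := by
    apply hg2
    intro ε hε
    refine P_mono hP (fun x => ?_) ?_
    · simp
    · simp [hε.le]
  have h2 : ((-f, β) : E ℓ Φ × ℝ) = -(LinearMap.inl ℝ (E ℓ Φ) ℝ f) + (0, β) := by
    ext <;> simp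
  rw [h2, map_add, map_neg, hgr] at h1
  simp only [LinearMap.comp_apply]
  linarith

end Krein


namespace Krein
open Filter Topology

variable {ℓ : ENNReal} {Φ : ℝ → ℝ}

lemma mem_E_of_compact (hℓ : 0 < ℓ) {f : ℝ → ℝ} (hf : Continuous f) (hs : HasCompactSupport f) :
    f ∈ E ℓ Φ := by
  obtain ⟨M, hM⟩ := hf.bounded_above_of_compact_support hs
  obtain ⟨R, hR⟩ := hs.isCompact.isBounded.subset_closedBall (0 : ℝ)
  have h0 : ∀ x, R < |x| → f x = 0 := by
    intro x hx
    by_contra hc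
    have := hR (subset_tsupport f hc)
    rw [mem_closedBall_zero_iff, Real.norm_eq_abs] at this
    linarith
  obtain ⟨β, hβ⟩ := P_compact (Φ := Φ) hℓ R M f (fun x => (le_abs_self _).trans (hM x))
    (fun x hx => (h0 x hx).le)
  obtain ⟨γ, hγ⟩ := P_compact (Φ := Φ) hℓ R M (-f) (fun x => (neg_le_abs _).trans (hM x))
    (fun x hx => by simp [h0 x hx])
  exact ⟨max β γ, P_mono hβ (fun _ => le_rfl) (le_max_left _ _),
    P_mono hγ (fun _ => le_rfl) (le_max_right _ _)⟩

lemma exists_measure (hℓ : 0 < ℓ) (hΦ0 : Φ 0 = 0) (hpd : RPD ℓ Φ) :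
    ∃ (g : E ℓ Φ →ₗ[ℝ] ℝ) (τ : Measure ℝ), IsFiniteMeasureOnCompacts τ ∧
      (∀ (f : E ℓ Φ) (β : ℝ), P ℓ Φ f β → g f ≤ β) ∧
      ∀ (f : ℝ → ℝ) (h : f ∈ E ℓ Φ), Continuous f → HasCompactSupport f →
        ∫ x, f x ∂τ = g ⟨f, h⟩ := by
  obtain ⟨g, hg⟩ := exists_functional hΦ0 hpd
  let L0 : CompactlySupportedContinuousMap ℝ ℝ →ₗ[ℝ] ℝ :=
    { toFun := fun f => g ⟨f, mem_E_of_compact hℓ f.continuous f.hasCompactSupport⟩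
      map_add' := fun f f' => by
        rw [← map_add]; rfl
      map_smul' := fun r f => by
        rw [RingHom.id_apply, ← map_smul]; rfl }
  let L : CompactlySupportedContinuousMap ℝ ℝ →ₚ[ℝ] ℝ := PositiveLinearMap.mk₀ L0 (by
    intro f hf
    have h1 : g (-⟨f, mem_E_of_compact hℓ f.continuous f.hasCompactSupport⟩) ≤ 0 := by
      refine hg _ _ (P_mono P_zero (fun x => ?_) le_rfl)
      simpa using hf x
    rw [map_neg] at h1
    exact neg_nonpos.mp h1)
  refine ⟨g, RealRMK.rieszMeasure L, inferInstance, hg, fun f h hc hs => ?_⟩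
  exact RealRMK.integral_rieszMeasure L ⟨⟨f, hc⟩, hs⟩

/-- cutoff function -/
noncomputable def chi (N x : ℝ) : ℝ := max 0 (min 1 (N + 1 - |x|))

lemma chi_nonneg (N x : ℝ) : 0 ≤ chi N x := le_max_left _ _
lemma chi_le_one (N x : ℝ) : chi N x ≤ 1 := max_le zero_le_one (min_le_left _ _)
lemma chi_one {N x : ℝ} (h : |x| ≤ N) : chi N x = 1 := by
  unfold chi
  rw [min_eq_left (by linarith), max_eq_right zero_le_one]
lemma chi_continuous (N : ℝ) : Continuous (chi N) := by unfold chi; fun_prop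
lemma chi_compact (N : ℝ) : HasCompactSupport (chi N) := by
  refine HasCompactSupport.intro (isCompact_Icc (a := -(N + 1)) (b := N + 1)) fun x hx => ?_
  have : N + 1 < |x| := by
    by_contra hc
    push Not at hc
    exact hx (abs_le.mp hc)
  unfold chi
  rw [max_eq_left]
  exact (min_le_right _ _).trans (by linarith)

section
variable {g : E ℓ Φ →ₗ[ℝ] ℝ} {τ : Measure ℝ} [IsFiniteMeasureOnCompacts τ]

lemma integral_bound (hℓ : 0 < ℓ) (hg : ∀ (f : E ℓ Φ) (β : ℝ), P ℓ Φ f β → g f ≤ β)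
    (hτ : ∀ (f : ℝ → ℝ) (h : f ∈ E ℓ Φ), Continuous f → HasCompactSupport f →
        ∫ x, f x ∂τ = g ⟨f, h⟩)
    {f : ℝ → ℝ} (hf : Continuous f) (hf0 : ∀ x, 0 ≤ f x) {β : ℝ} (hP : P ℓ Φ f β) :
    Integrable f τ ∧ ∫ x, f x ∂τ ≤ β := by
  have hcov : AECover τ atTop (fun n : ℕ => Icc (-(n : ℝ)) n) :=
    aecover_Icc (tendsto_neg_atTop_atBot.comp tendsto_natCast_atTop_atTop)
      tendsto_natCast_atTop_atTop
  have hb : ∀ n : ℕ, ∫ x in Icc (-(n : ℝ)) n, f x ∂τ ≤ β := by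
    intro n
    have hc : Continuous (fun x => f x * chi n x) := hf.mul (chi_continuous n)
    have hs : HasCompactSupport (fun x => f x * chi n x) := (chi_compact (n : ℝ)).mul_left
    have h1 := hτ _ (mem_E_of_compact hℓ hc hs) hc hs
    have h2 := hg ⟨_, mem_E_of_compact hℓ hc hs⟩ β (P_mono hP (fun x => by
      exact mul_le_of_le_one_right (hf0 x) (chi_le_one _ _)) le_rfl)
    rw [← h1] at h2
    refine le_trans ?_ h2
    rw [← integral_indicator measurableSet_Icc]
    refine integral_mono_of_nonneg (ae_of_all _ fun x => ?_)
      (hc.integrable_of_hasCompactSupport hs) (ae_of_all _ fun x => ?_)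
    · exact indicator_nonneg (fun x _ => hf0 x) x
    · dsimp only
      by_cases hx : x ∈ Icc (-(n : ℝ)) n
      · rw [indicator_of_mem hx, chi_one (abs_le.mpr hx), mul_one]
      · rw [indicator_of_notMem hx]
        exact mul_nonneg (hf0 x) (chi_nonneg _ _)
  have hi : Integrable f τ :=
    hcov.integrable_of_integral_bounded_of_nonneg_ae β
      (fun n => hf.continuousOn.integrableOn_compact isCompact_Icc)
      (ae_of_all _ hf0) (Eventually.of_forall hb)
  exact ⟨hi, le_of_tendsto' (hcov.integral_tendsto_of_countably_generated hi) hb⟩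

lemma exists_rat_InDom {m : ENNReal} {t : ℝ} (ht : InDom m t) :
    ∃ q : ℚ, t < q ∧ InDom m q := by
  obtain ⟨r, h1, h2, h3⟩ := ENNReal.lt_iff_exists_real_btwn.mp ht.2
  have h4 : t < r := (ENNReal.ofReal_lt_ofReal_iff_of_nonneg ht.1).mp h2
  obtain ⟨q, h5, h6⟩ := exists_rat_btwn h4
  exact ⟨q, h5, InDom_le ⟨h1, h3⟩ (ht.1.trans h5.le) h6.le⟩

lemma rat_case (hℓ : 0 < ℓ) (hΦc : ContinuousOn Φ {t : ℝ | InDom (2 * ℓ) t}) (hΦ0 : Φ 0 = 0)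
    (hg : ∀ (f : E ℓ Φ) (β : ℝ), P ℓ Φ f β → g f ≤ β)
    (hτ : ∀ (f : ℝ → ℝ) (h : f ∈ E ℓ Φ), Continuous f → HasCompactSupport f →
        ∫ x, f x ∂τ = g ⟨f, h⟩)
    {t : ℚ} (ht : InDom (2 * ℓ) t) :
    Integrable (fun lam => cker lam t) τ ∧ ∫ lam, cker lam t ∂τ = Φ t := by
  have hP1 : P ℓ Φ (fun lam => cker lam t) (Φ t) := by simpa using P_cker_smul (Φ := Φ) ht 1
  have hP2 : P ℓ Φ (-(fun lam => cker lam t)) (-Φ t) := by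
    refine P_mono (P_cker_smul (Φ := Φ) ht (-1)) (fun x => ?_) (by simp)
    simp
  have hfc := continuous_cker_left (t : ℝ)
  obtain ⟨hi, hle⟩ := integral_bound hℓ hg hτ hfc (fun x => cker_nonneg x t) hP1
  refine ⟨hi, le_antisymm hle ?_⟩
  have hmem : (fun lam => cker lam t) ∈ E ℓ Φ :=
    ⟨|Φ t|, P_mono hP1 (fun _ => le_rfl) (le_abs_self _),
      P_mono hP2 (fun _ => le_rfl) (neg_le_abs _)⟩
  refine le_of_forall_pos_le_add fun ε hε => ?_
  obtain ⟨R, hR, hPR⟩ := P_tail hℓ hΦc hΦ0 (show 0 < ε / 4 by positivity)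
  obtain ⟨t', htt, ht'⟩ := exists_rat_InDom ht
  have hd : (0 : ℝ) < t' - t := sub_pos.mpr htt
  set A := 4 / ((t' : ℝ) - t) ^ 2 with hA
  have hA0 : 0 < A := by positivity
  obtain ⟨N, hN1, hN2⟩ : ∃ N : ℝ, R ≤ N ∧ A * |Φ t'| * 2 / ε ≤ N :=
    ⟨max R (A * |Φ t'| * 2 / ε), le_max_left _ _, le_max_right _ _⟩
  have hN0 : 0 < N := hR.trans_le hN1
  have hc : Continuous (fun x => cker x t * chi N x) := hfc.mul (chi_continuous N)
  have hs : HasCompactSupport (fun x => cker x t * chi N x) := (chi_compact N).mul_left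
  have hm := mem_E_of_compact (Φ := Φ) hℓ hc hs
  have h1 := hτ _ hm hc hs
  have h2 : ∫ x, cker x t * chi N x ∂τ ≤ ∫ x, cker x t ∂τ := by
    refine integral_mono (hc.integrable_of_hasCompactSupport hs) hi fun x => ?_
    exact mul_le_of_le_one_right (cker_nonneg x t) (chi_le_one _ _)
  have h3 : g (⟨_, hmem⟩ - ⟨_, hm⟩) ≤ ε := by
    refine hg _ _ (P_mono (P_add (P_cker_smul (Φ := Φ) ht' (A / N))
      (P_smul (show (0 : ℝ) ≤ 2 by norm_num) hPR)) (fun x => ?_) ?_)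
    · change cker x t - cker x t * chi N x ≤ A / N * cker x t' + 2 * tailf R x
      have ha : 0 ≤ A / N * cker x t' := mul_nonneg (by positivity) (cker_nonneg _ _)
      have hb : 0 ≤ 2 * tailf R x := by
        unfold tailf
        split_ifs with hx
        · have : 0 < x := hR.trans hx
          positivity
        · simp
      have hcc : 0 ≤ cker x t * chi N x := mul_nonneg (cker_nonneg _ _) (chi_nonneg _ _)
      by_cases hx : |x| ≤ N
      · rw [chi_one hx]; linarith
      · push Not at hx
        rcases lt_abs.mp hx with hx | hx
        · have := cker_le_inv (hN0.trans hx) (t : ℝ)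
          have h5 : tailf R x = 1 / x := by
            unfold tailf; rw [if_pos (lt_of_le_of_lt hN1 hx)]
          have h6 : 2 * (1 / x) = 2 / x := by ring
          rw [h5] at hb ⊢
          linarith
        · have h5 := cker_ratio_neg (show x < 0 by linarith) ht.1 htt
          have h6 : 4 / (-x * ((t' : ℝ) - t) ^ 2) ≤ A / N := by
            rw [hA, div_div, mul_comm (((t' : ℝ) - t) ^ 2)]
            gcongr
          have := mul_le_mul_of_nonneg_right h6 (cker_nonneg x t')
          linarith
    · have h5 : A / N * Φ t' ≤ ε / 2 := by
        have h6 : A / N * Φ t' ≤ A / N * |Φ t'| := by gcongr; exact le_abs_self _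
        refine h6.trans ?_
        rw [div_le_iff₀ hε] at hN2
        rw [div_mul_eq_mul_div, div_le_iff₀ hN0]
        linarith
      linarith
  have h4 : g (-⟨_, hmem⟩) ≤ -Φ t := hg _ _ hP2
  rw [map_neg] at h4
  rw [map_sub, ← h1] at h3
  linarith

/-- integrable majorant on the half line -/
noncomputable def vmaj (x : ℝ) : ℝ := max 0 (1 + min x 0) / (1 + max x 0)

lemma vmaj_nonneg (x : ℝ) : 0 ≤ vmaj x := by unfold vmaj; positivity

lemma vmaj_continuous : Continuous vmaj := by
  unfold vmaj
  refine Continuous.div (by fun_prop) (by fun_prop) fun x => ?_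
  positivity

lemma vmaj_integrable (hℓ : 0 < ℓ) (hΦc : ContinuousOn Φ {t : ℝ | InDom (2 * ℓ) t}) (hΦ0 : Φ 0 = 0)
    (hg : ∀ (f : E ℓ Φ) (β : ℝ), P ℓ Φ f β → g f ≤ β)
    (hτ : ∀ (f : ℝ → ℝ) (h : f ∈ E ℓ Φ), Continuous f → HasCompactSupport f →
        ∫ x, f x ∂τ = g ⟨f, h⟩) : Integrable vmaj τ := by
  obtain ⟨R, hR, hPR⟩ := P_tail hℓ hΦc hΦ0 (show (0 : ℝ) < 1 by positivity)
  obtain ⟨β, hβ⟩ := P_compact (Φ := Φ) hℓ (max R 1) 1 (fun x => if |x| ≤ max R 1 then 1 else 0)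
    (fun x => by split_ifs <;> norm_num)
    (fun x hx => by rw [if_neg (not_le.mpr hx)])
  refine (integral_bound hℓ hg hτ vmaj_continuous vmaj_nonneg
    (P_mono (P_add hPR hβ) (fun x => ?_) le_rfl)).1
  change vmaj x ≤ tailf R x + if |x| ≤ max R 1 then 1 else 0
  have hb : 0 ≤ tailf R x := by
    unfold tailf
    split_ifs with hx
    · have : 0 < x := hR.trans hx
      positivity
    · simp
  split_ifs with hx
  · have : vmaj x ≤ 1 := by
      unfold vmaj
      rw [div_le_one (by positivity)]
      have := min_le_right x 0
      have := le_max_right x 0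
      exact max_le (by linarith) (by linarith)
    linarith
  · push Not at hx
    have hx1 := (le_max_left R 1).trans_lt hx
    have hx2 := (le_max_right R 1).trans_lt hx
    rcases le_or_gt x 0 with h0 | h0
    · rw [abs_of_nonpos h0] at hx2
      have : vmaj x = 0 := by
        unfold vmaj
        rw [min_eq_left h0, max_eq_left (by linarith), zero_div]
      linarith
    · rw [abs_of_pos h0] at hx1
      unfold vmaj tailf
      rw [if_pos hx1, min_eq_right h0.le, max_eq_left h0.le, add_zero, add_zero,
        max_eq_right zero_le_one]
      gcongr
      linarith

lemma cker_le_maj {s T : ℝ} (hs : 0 ≤ s) (hT : s ≤ T) (x : ℝ) :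
    cker x s ≤ cker x T + (T ^ 2 / 2 + 2) * vmaj x := by
  rcases lt_or_ge x 0 with h0 | h0
  · have := cker_mono_neg h0 hs hT
    have := vmaj_nonneg x
    have : 0 ≤ (T ^ 2 / 2 + 2) * vmaj x := by positivity
    linarith
  · have h1 : vmaj x = 1 / (1 + x) := by
      unfold vmaj
      rw [min_eq_right h0, max_eq_left h0, add_zero, max_eq_right zero_le_one]
    have h2 := cker_le_sq h0 s
    have h3 : x * cker x s ≤ 2 := by
      rcases h0.eq_or_lt with rfl | h0
      · simp
      · have := cker_le_inv h0 s
        rw [le_div_iff₀ h0] at this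
        linarith
    have h4 : cker x s ≤ (T ^ 2 / 2 + 2) * vmaj x := by
      rw [h1, mul_one_div, le_div_iff₀ (by linarith)]
      nlinarith
    linarith [cker_nonneg x T]

lemma real_case (hℓ : 0 < ℓ) (hΦc : ContinuousOn Φ {t : ℝ | InDom (2 * ℓ) t}) (hΦ0 : Φ 0 = 0)
    (hg : ∀ (f : E ℓ Φ) (β : ℝ), P ℓ Φ f β → g f ≤ β)
    (hτ : ∀ (f : ℝ → ℝ) (h : f ∈ E ℓ Φ), Continuous f → HasCompactSupport f →
        ∫ x, f x ∂τ = g ⟨f, h⟩)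
    {t : ℝ} (ht : InDom (2 * ℓ) t) :
    Integrable (fun lam => cker lam t) τ ∧ Φ t = ∫ lam, cker lam t ∂τ := by
  obtain ⟨T, hT, hTd⟩ := exists_rat_InDom ht
  have hmaj : Integrable (fun x => cker x T + ((T : ℝ) ^ 2 / 2 + 2) * vmaj x) τ :=
    (rat_case hℓ hΦc hΦ0 hg hτ hTd).1.add ((vmaj_integrable hℓ hΦc hΦ0 hg hτ).const_mul _)
  have hbnd : ∀ s : ℝ, 0 ≤ s → s ≤ T → ∀ x, ‖cker x s‖ ≤ cker x T + ((T : ℝ) ^ 2 / 2 + 2) * vmaj x := by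
    intro s h1 h2 x
    rw [Real.norm_of_nonneg (cker_nonneg _ _)]
    exact cker_le_maj h1 h2 x
  refine ⟨hmaj.mono' (continuous_cker_left t).aestronglyMeasurable
    (ae_of_all _ (hbnd t ht.1 hT.le)), ?_⟩
  have hex : ∀ n : ℕ, ∃ q : ℚ, t < q ∧ (q : ℝ) < min (T : ℝ) (t + 1 / ((n : ℝ) + 1)) := fun n =>
    exists_rat_btwn (lt_min hT (by have : (0 : ℝ) < 1 / ((n : ℝ) + 1) := by positivity
                                   linarith))
  choose q hq1 hq2 using hex
  have hqT : ∀ n, (q n : ℝ) ≤ T := fun n => (hq2 n).le.trans (min_le_left _ _)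
  have hq0 : ∀ n, (0 : ℝ) ≤ q n := fun n => ht.1.trans (hq1 n).le
  have hqlim : Tendsto (fun n => (q n : ℝ)) atTop (𝓝 t) := by
    refine tendsto_of_tendsto_of_tendsto_of_le_of_le tendsto_const_nhds
      (?_ : Tendsto (fun n : ℕ => t + 1 / ((n : ℝ) + 1)) atTop (𝓝 t))
      (fun n => (hq1 n).le) (fun n => (hq2 n).le.trans (min_le_right _ _))
    simpa using tendsto_const_nhds.add (tendsto_one_div_add_atTop_nhds_zero_nat (𝕜 := ℝ))
  have hqd : ∀ n, InDom (2 * ℓ) (q n) := fun n => InDom_le hTd (hq0 n) (hqT n)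
  have hl1 : Tendsto (fun n => Φ (q n)) atTop (𝓝 (Φ t)) :=
    (hΦc t ht).tendsto.comp (tendsto_nhdsWithin_iff.mpr ⟨hqlim, Eventually.of_forall hqd⟩)
  have hl2 : Tendsto (fun n => ∫ x, cker x (q n) ∂τ) atTop (𝓝 (∫ x, cker x t ∂τ)) := by
    refine tendsto_integral_of_dominated_convergence _
      (fun n => (continuous_cker_left (q n : ℝ)).aestronglyMeasurable) hmaj
      (fun n => ae_of_all _ (hbnd _ (hq0 n) (hqT n))) (ae_of_all _ fun x => ?_)
    exact ((continuous_cker_right x).tendsto t).comp hqlim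
  refine tendsto_nhds_unique hl1 (hl2.congr fun n => ?_)
  exact (rat_case hℓ hΦc hΦ0 hg hτ (hqd n)).2

end

lemma InDom_add {s t : ℝ} (hs : InDom ℓ s) (ht : InDom ℓ t) : InDom (2 * ℓ) (s + t) := by
  refine ⟨add_nonneg hs.1 ht.1, ?_⟩
  rw [ENNReal.ofReal_add hs.1 ht.1, two_mul]
  exact ENNReal.add_lt_add hs.2 ht.2

lemma InDom_abs_sub {s t : ℝ} (hs : InDom ℓ s) (ht : InDom ℓ t) : InDom (2 * ℓ) |s - t| := by
  refine InDom_le (InDom_add hs ht) (abs_nonneg _) ?_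
  rw [abs_le]
  constructor <;> linarith [hs.1, ht.1]

lemma rpd_of_rep {τ : Measure ℝ} (h : ∀ t : ℝ, InDom (2 * ℓ) t →
        Integrable (fun lam : ℝ => cker lam t) τ ∧ Φ t = ∫ lam : ℝ, cker lam t ∂τ) : RPD ℓ Φ := by
  intro n t c ht
  have h1 : ∀ i j, Integrable (fun x => 2 * (sker x (t i) * sker x (t j))) τ ∧
      Φ (t i + t j) - Φ |t i - t j| = ∫ x, 2 * (sker x (t i) * sker x (t j)) ∂τ := by
    intro i j
    obtain ⟨a1, a2⟩ := h _ (InDom_add (ht i) (ht j))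
    obtain ⟨b1, b2⟩ := h _ (InDom_abs_sub (ht i) (ht j))
    simp_rw [← cker_diff]
    refine ⟨a1.sub b1, ?_⟩
    rw [integral_sub a1 b1, a2, b2]
  have h2 : ∀ i j, (Φ (t i + t j) - Φ |t i - t j|) * c i * c j =
      ∫ x, 2 * (sker x (t i) * sker x (t j)) * c i * c j ∂τ := by
    intro i j
    rw [(h1 i j).2, integral_mul_const, integral_mul_const]
  simp_rw [h2]
  have h3 : ∀ i j, Integrable (fun x => 2 * (sker x (t i) * sker x (t j)) * c i * c j) τ :=
    fun i j => ((h1 i j).1.mul_const _).mul_const _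
  simp_rw [← integral_finsetSum _ (fun j _ => h3 _ j)]
  rw [← integral_finsetSum _ (fun i _ => integrable_finsetSum _ (fun j _ => h3 i j))]
  refine integral_nonneg fun x => ?_
  have h4 : ∑ i, ∑ j, 2 * (sker x (t i) * sker x (t j)) * c i * c j
      = 2 * ((∑ i, sker x (t i) * c i) * (∑ j, sker x (t j) * c j)) := by
    rw [Finset.sum_mul_sum, Finset.mul_sum]
    refine Finset.sum_congr rfl fun i _ => ?_
    rw [Finset.mul_sum]
    exact Finset.sum_congr rfl fun j _ => by ring
  change 0 ≤ ∑ i, ∑ j, 2 * (sker x (t i) * sker x (t j)) * c i * c j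
  rw [h4]
  exact mul_nonneg zero_le_two (mul_self_nonneg _)

end Krein

/-- **Krein's representation criterion** (Statement 2.4°). A continuous function
`Φ : [0,2ℓ) → ℝ` with `Φ(0) = 0` admits a representation
`Φ(t) = ∫_ℝ c(λ,t) dτ(λ)` with some measure `τ` if and only if the kernel
`K_Φ(s,t) = Φ(t+s) - Φ(|t-s|)`, `0 ≤ s,t < ℓ`, is positive definite. -/
theorem krein_representation_criterion
    (ℓ : ENNReal) (hℓ : 0 < ℓ)
    (Φ : ℝ → ℝ) (hΦc : ContinuousOn Φ {t : ℝ | InDom (2 * ℓ) t}) (hΦ0 : Φ 0 = 0) :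
    (∃ τ : Measure ℝ, ∀ t : ℝ, InDom (2 * ℓ) t →
        Integrable (fun lam : ℝ => cker lam t) τ ∧ Φ t = ∫ lam : ℝ, cker lam t ∂τ) ↔
    (∀ (n : ℕ) (t : Fin n → ℝ) (c : Fin n → ℂ), (∀ i, InDom ℓ (t i)) →
        0 ≤ (∑ i, ∑ j, ((Φ (t i + t j) - Φ |t i - t j| : ℝ) : ℂ) *
              c i * (starRingEnd ℂ) (c j)).re ∧
        (∑ i, ∑ j, ((Φ (t i + t j) - Φ |t i - t j| : ℝ) : ℂ) *
              c i * (starRingEnd ℂ) (c j)).im = 0) := by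
  constructor
  · rintro ⟨τ, hτ⟩ n t c ht
    have hpd := Krein.rpd_of_rep hτ
    constructor
    · have h1 := hpd n t (fun i => (c i).re) ht
      have h2 := hpd n t (fun i => (c i).im) ht
      have h3 := add_nonneg h1 h2
      simp_rw [← Finset.sum_add_distrib] at h3
      simp_rw [Complex.re_sum]
      refine h3.trans_eq (Finset.sum_congr rfl fun i _ => Finset.sum_congr rfl fun j _ => ?_)
      rw [mul_assoc (Complex.ofReal _), Complex.re_ofReal_mul, Complex.mul_re, Complex.conj_re, Complex.conj_im]
      ring
    · simp_rw [Complex.im_sum]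
      have h1 : ∀ i j, (((Φ (t i + t j) - Φ |t i - t j| : ℝ) : ℂ) *
              c i * (starRingEnd ℂ) (c j)).im =
          -(((Φ (t j + t i) - Φ |t j - t i| : ℝ) : ℂ) *
              c j * (starRingEnd ℂ) (c i)).im := by
        intro i j
        rw [mul_assoc, mul_assoc, Complex.im_ofReal_mul, Complex.im_ofReal_mul, Complex.mul_im,
          Complex.mul_im, Complex.conj_re, Complex.conj_im, Complex.conj_re, Complex.conj_im,
          add_comm (t j), abs_sub_comm (t j)]
        ring
      have h2 : ∀ S : ℝ, S = -S → S = 0 := fun S hS => by linarith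
      apply h2
      conv_lhs => rw [Finset.sum_comm]
      simp_rw [← Finset.sum_neg_distrib]
      exact Finset.sum_congr rfl fun i _ => Finset.sum_congr rfl fun j _ => h1 j i
  · intro h
    have hpd : Krein.RPD ℓ Φ := by
      intro n t c ht
      refine (h n t (fun i => (c i : ℂ)) ht).1.trans_eq ?_
      simp_rw [Complex.re_sum]
      refine Finset.sum_congr rfl fun i _ => Finset.sum_congr rfl fun j _ => ?_
      rw [Complex.conj_ofReal, ← Complex.ofReal_mul, ← Complex.ofReal_mul, Complex.ofReal_re]
    obtain ⟨g, τ, hfin, hg, hτ⟩ := Krein.exists_measure hℓ hΦ0 hpd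
    exact ⟨τ, fun t ht => Krein.real_case hℓ hΦc hΦ0 hg hτ ht⟩
end

section
/- Screw functions have positive definite difference kernels: Let τ be a Borel measure on ℝ with ∫_ℝ dτ(λ)/(1+λ²) < ∞, let α ∈ ℝ and β ∈ ℝ, and define g(t) := α + iβt + ∫_ℝ e(λ,t) dτ(λ) for t ∈ ℝ, where e(λ,t) := (e^{iλt} − 1 − iλt/(1+λ²))/λ² for λ ≠ 0 and e(0,t) := −t²/2. Then g : ℝ → ℂ is continuous and the kernel G_g(s,t) := g(s−t) − g(s) − conj(g(t)) + g(0), s,t ∈ ℝ, is positive definite, i.e. for all n ∈ ℕ, t₁,…,t_n ∈ ℝ and c₁,…,c_n ∈ ℂ one has ∑_{i,j=1}^n G_g(t_i,t_j)·c_i·conj(c_j) ≥ 0. -/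
open MeasureTheory Set

/-- The kernel `e(λ,t) = (e^{iλt} - 1 - iλt/(1+λ²))/λ²` for `λ ≠ 0`,
and `e(0,t) = -t²/2`. -/
noncomputable def eker (lam t : ℝ) : ℂ :=
  if lam = 0 then -(t ^ 2) / 2
  else (Complex.exp (Complex.I * lam * t) - 1 -
          Complex.I * lam * t / (1 + (lam : ℂ) ^ 2)) / (lam : ℂ) ^ 2

lemma norm_exp_sub_one_sub_le (x : ℝ) :
    ‖Complex.exp (Complex.I * x) - 1 - Complex.I * x‖ ≤ 2 * x ^ 2 := by
  have hn : ‖Complex.I * (x : ℂ)‖ = |x| := by simp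
  rcases le_total |x| 1 with h | h
  · have := Complex.norm_exp_sub_one_sub_id_le (x := Complex.I * x) (by rw [hn]; exact h)
    rw [hn, sq_abs] at this
    nlinarith [sq_nonneg x]
  · have h1 := Real.norm_exp_I_mul_ofReal_sub_one_le (x := x)
    rw [Real.norm_eq_abs] at h1
    have h2 := norm_sub_le (Complex.exp (Complex.I * x) - 1) (Complex.I * x)
    rw [hn] at h2
    nlinarith [sq_abs x]

lemma norm_one_add_sq (lam : ℝ) : ‖(1 + (lam : ℂ) ^ 2)‖ = 1 + lam ^ 2 := by
  have : (1 + (lam : ℂ) ^ 2) = ((1 + lam ^ 2 : ℝ) : ℂ) := by push_cast; ring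
  rw [this, Complex.norm_real, Real.norm_of_nonneg (by positivity)]

lemma one_add_sq_ne (lam : ℝ) : (1 + (lam : ℂ) ^ 2) ≠ 0 := by
  rw [← norm_pos_iff, norm_one_add_sq]; positivity

lemma norm_eker_le (lam t : ℝ) :
    ‖eker lam t‖ ≤ (4 + 2 * |t| + 4 * t ^ 2) * (1 / (1 + lam ^ 2)) := by
  have hp : 0 < 1 + lam ^ 2 := by positivity
  have ht := abs_nonneg t
  rw [mul_one_div, le_div_iff₀ hp]
  unfold eker
  split_ifs with h
  · subst h
    have : (-((t : ℂ) ^ 2) / 2) = ((-(t ^ 2) / 2 : ℝ) : ℂ) := by push_cast; ring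
    rw [this, Complex.norm_real, Real.norm_eq_abs, abs_div, abs_neg, abs_of_nonneg (sq_nonneg t),
      abs_of_pos (by norm_num : (0 : ℝ) < 2)]
    nlinarith [sq_nonneg t]
  · have hl : 0 < lam ^ 2 := by positivity
    have hnl : ‖(lam : ℂ) ^ 2‖ = lam ^ 2 := by
      rw [norm_pow, Complex.norm_real, Real.norm_eq_abs, sq_abs]
    have hE : Complex.I * lam * t = Complex.I * ((lam * t : ℝ) : ℂ) := by push_cast; ring
    have hnI : ‖Complex.I * lam * t‖ = |lam| * |t| := by simp
    rw [norm_div, hnl, div_mul_eq_mul_div, div_le_iff₀ hl]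
    have hla := abs_nonneg lam
    have hsq := sq_abs lam
    rcases le_total |lam| 1 with h1 | h1
    · have e1 : Complex.exp (Complex.I * lam * t) - 1 -
          Complex.I * lam * t / (1 + (lam : ℂ) ^ 2) =
          (Complex.exp (Complex.I * lam * t) - 1 - Complex.I * lam * t) +
          Complex.I * lam * t * (lam : ℂ) ^ 2 / (1 + (lam : ℂ) ^ 2) := by
        have := one_add_sq_ne lam
        field_simp
        ring
      have b1 := norm_exp_sub_one_sub_le (lam * t)
      rw [← hE] at b1
      have b2 : ‖Complex.I * lam * t * (lam : ℂ) ^ 2 / (1 + (lam : ℂ) ^ 2)‖ ≤ |t| * lam ^ 2 := by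
        rw [norm_div, norm_mul, hnI, hnl, norm_one_add_sq, div_le_iff₀ hp]
        have : |lam| * |t| ≤ |t| := by nlinarith
        have h3 : |lam| * |t| * lam ^ 2 ≤ |t| * lam ^ 2 := by gcongr
        nlinarith [mul_nonneg ht hl.le, mul_nonneg (mul_nonneg ht hl.le) hl.le]
      have b3 := norm_add_le (Complex.exp (Complex.I * lam * t) - 1 - Complex.I * lam * t)
        (Complex.I * lam * t * (lam : ℂ) ^ 2 / (1 + (lam : ℂ) ^ 2))
      rw [← e1] at b3
      set N := ‖Complex.exp (Complex.I * lam * t) - 1 -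
          Complex.I * lam * t / (1 + (lam : ℂ) ^ 2)‖
      have hN : N ≤ (2 * t ^ 2 + |t|) * lam ^ 2 := by nlinarith
      have hl1 : 1 + lam ^ 2 ≤ 2 := by nlinarith
      calc N * (1 + lam ^ 2) ≤ ((2 * t ^ 2 + |t|) * lam ^ 2) * 2 := by gcongr
        _ ≤ _ := by nlinarith
    · have a1 : ‖Complex.exp (Complex.I * lam * t)‖ = 1 := by
        rw [hE, mul_comm, Complex.norm_exp_ofReal_mul_I]
      have b1 := norm_sub_le (Complex.exp (Complex.I * lam * t)) 1
      rw [a1, norm_one] at b1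
      have b2 : ‖Complex.I * lam * t / (1 + (lam : ℂ) ^ 2)‖ ≤ |t| := by
        rw [norm_div, hnI, norm_one_add_sq, div_le_iff₀ hp]
        have : |lam| ≤ 1 + lam ^ 2 := by nlinarith
        nlinarith
      have b3 := norm_sub_le (Complex.exp (Complex.I * lam * t) - 1)
        (Complex.I * lam * t / (1 + (lam : ℂ) ^ 2))
      set N := ‖Complex.exp (Complex.I * lam * t) - 1 -
          Complex.I * lam * t / (1 + (lam : ℂ) ^ 2)‖
      have hN : N ≤ 2 + |t| := by linarith
      have hl1 : 1 + lam ^ 2 ≤ 2 * lam ^ 2 := by nlinarith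
      calc N * (1 + lam ^ 2) ≤ (2 + |t|) * (2 * lam ^ 2) := by gcongr
        _ ≤ _ := by nlinarith [mul_nonneg (sq_nonneg t) hl.le]

lemma measurable_eker (t : ℝ) : Measurable fun lam => eker lam t := by
  unfold eker
  refine Measurable.ite (measurableSet_singleton 0) measurable_const ?_
  fun_prop

lemma continuous_eker (lam : ℝ) : Continuous fun t => eker lam t := by
  unfold eker
  split_ifs <;> fun_prop

/-- The factor: `φ(λ,t) = (e^{iλt}-1)/λ`, with value `i t` at `0`. -/
noncomputable def phiker (lam t : ℝ) : ℂ :=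
  if lam = 0 then Complex.I * t else (Complex.exp (Complex.I * lam * t) - 1) / lam

lemma eker_kernel (lam s t : ℝ) :
    eker lam (s - t) - eker lam s - (starRingEnd ℂ) (eker lam t) + eker lam 0 =
      phiker lam s * (starRingEnd ℂ) (phiker lam t) := by
  unfold eker phiker
  split_ifs with h
  · have h2 : (starRingEnd ℂ) (2 : ℂ) = 2 := Complex.conj_ofNat 2
    simp only [map_div₀, map_neg, map_pow, map_mul, h2, Complex.conj_I, Complex.conj_ofReal,
      Complex.ofReal_sub, Complex.ofReal_zero]
    linear_combination (s * t : ℂ) * Complex.I_sq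
  · have hl : (lam : ℂ) ≠ 0 := by exact_mod_cast h
    have h1 := one_add_sq_ne lam
    have hx : Complex.exp (Complex.I * lam * (s - t : ℝ)) =
        Complex.exp (Complex.I * lam * s) * Complex.exp (-(Complex.I * lam * t)) := by
      rw [← Complex.exp_add]; push_cast; ring_nf
    rw [hx]
    simp only [map_div₀, map_sub, map_mul, map_pow, map_add, map_one, ← Complex.exp_conj,
      Complex.conj_I, Complex.conj_ofReal, neg_mul, Complex.ofReal_zero, mul_zero,
      Complex.exp_zero, Complex.ofReal_sub]
    field_simp
    ring

/-- **Screw functions have positive definite difference kernels.**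
If `g(t) = α + iβt + ∫_ℝ e(λ,t) dτ(λ)` with `∫ dτ(λ)/(1+λ²) < ∞`, then `g` is
continuous and the kernel `G_g(s,t) = g(s-t) - g(s) - conj(g(t)) + g(0)` is
positive definite. -/
theorem screw_function_kernel_posdef
    (τ : Measure ℝ)
    (hτ : ∫⁻ lam : ℝ, ENNReal.ofReal (1 / (1 + lam ^ 2)) ∂τ < ⊤)
    (α β : ℝ)
    (g : ℝ → ℂ)
    (hg : ∀ t : ℝ, g t = (α : ℂ) + Complex.I * β * t + ∫ lam : ℝ, eker lam t ∂τ) :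
    Continuous g ∧
    ∀ (n : ℕ) (t : Fin n → ℝ) (c : Fin n → ℂ),
      0 ≤ (∑ i, ∑ j, (g (t i - t j) - g (t i) - (starRingEnd ℂ) (g (t j)) + g 0) *
            c i * (starRingEnd ℂ) (c j)).re ∧
      (∑ i, ∑ j, (g (t i - t j) - g (t i) - (starRingEnd ℂ) (g (t j)) + g 0) *
            c i * (starRingEnd ℂ) (c j)).im = 0 := by
  have hint : Integrable (fun lam : ℝ => 1 / (1 + lam ^ 2)) τ := by
    refine ⟨Measurable.aestronglyMeasurable (by fun_prop), ?_⟩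
    rw [hasFiniteIntegral_iff_ofReal (Filter.Eventually.of_forall fun x => by positivity)]
    exact hτ
  have hI : ∀ t, Integrable (fun lam => eker lam t) τ := fun t =>
    (hint.const_mul (4 + 2 * |t| + 4 * t ^ 2)).mono' (measurable_eker t).aestronglyMeasurable
      (Filter.Eventually.of_forall fun lam => norm_eker_le lam t)
  refine ⟨?_, ?_⟩
  · have hc : Continuous fun t => ∫ lam, eker lam t ∂τ := by
      rw [continuous_iff_continuousAt]
      intro t₀
      refine continuousAt_of_dominated
        (bound := fun lam => (4 + 2 * (|t₀| + 1) + 4 * (|t₀| + 1) ^ 2) * (1 / (1 + lam ^ 2)))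
        (Filter.Eventually.of_forall fun t => (measurable_eker t).aestronglyMeasurable) ?_
        (hint.const_mul _)
        (Filter.Eventually.of_forall fun lam => (continuous_eker lam).continuousAt)
      have : ∀ᶠ t in nhds t₀, |t| < |t₀| + 1 :=
        (continuous_abs.tendsto t₀).eventually_lt_const (by linarith)
      filter_upwards [this] with t ht
      refine Filter.Eventually.of_forall fun lam => (norm_eker_le lam t).trans ?_
      rw [← sq_abs t]
      gcongr
    have : g = fun t : ℝ => (α : ℂ) + Complex.I * β * t + ∫ lam : ℝ, eker lam t ∂τ := funext hg
    rw [this]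
    exact Continuous.add (by fun_prop) hc
  · intro n t c
    have hIc : ∀ t, Integrable (fun lam => (starRingEnd ℂ) (eker lam t)) τ := fun t =>
      (hI t).congr' ((Complex.continuous_conj.measurable.comp
        (measurable_eker t)).aestronglyMeasurable)
        (Filter.Eventually.of_forall fun lam => by simp)
    have hG : ∀ s t : ℝ, Integrable (fun lam => phiker lam s * (starRingEnd ℂ) (phiker lam t)) τ ∧
        g (s - t) - g s - (starRingEnd ℂ) (g t) + g 0 =
        ∫ lam, phiker lam s * (starRingEnd ℂ) (phiker lam t) ∂τ := by
      intro s t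
      simp_rw [← eker_kernel]
      refine ⟨(((hI _).sub (hI _)).sub (hIc _)).add (hI _), ?_⟩
      have i1 : Integrable (fun lam => eker lam (s - t) - eker lam s) τ := (hI _).sub (hI _)
      have i2 : Integrable (fun lam => eker lam (s - t) - eker lam s -
        (starRingEnd ℂ) (eker lam t)) τ := i1.sub (hIc _)
      rw [integral_add i2 (hI _), integral_sub i1 (hIc _), integral_sub (hI _) (hI _), integral_conj,
        hg, hg, hg, hg]
      simp only [map_add, map_mul, Complex.conj_I, Complex.conj_ofReal, Complex.ofReal_sub,
        Complex.ofReal_zero]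
      ring
    have key : (∑ i, ∑ j, (g (t i - t j) - g (t i) - (starRingEnd ℂ) (g (t j)) + g 0) *
            c i * (starRingEnd ℂ) (c j)) =
        ((∫ lam, Complex.normSq (∑ i, c i * phiker lam (t i)) ∂τ : ℝ) : ℂ) := by
      rw [← integral_complex_ofReal]
      have : ∀ lam, ((Complex.normSq (∑ i, c i * phiker lam (t i)) : ℝ) : ℂ) =
          ∑ i, ∑ j, phiker lam (t i) * (starRingEnd ℂ) (phiker lam (t j)) *
            (c i * (starRingEnd ℂ) (c j)) := by
        intro lam
        rw [← Complex.mul_conj, map_sum, Finset.sum_mul_sum]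
        refine Finset.sum_congr rfl fun i _ => Finset.sum_congr rfl fun j _ => ?_
        rw [map_mul]; ring
      simp_rw [this]
      rw [integral_finsetSum _ fun i _ => integrable_finsetSum _ fun j _ =>
        (hG (t i) (t j)).1.mul_const _]
      refine Finset.sum_congr rfl fun i _ => ?_
      rw [integral_finsetSum _ fun j _ => (hG (t i) (t j)).1.mul_const _]
      refine Finset.sum_congr rfl fun j _ => ?_
      rw [integral_mul_const, (hG (t i) (t j)).2, mul_assoc]
    rw [key]
    exact ⟨by rw [Complex.ofReal_re]; exact integral_nonneg fun _ => Complex.normSq_nonneg _,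
      Complex.ofReal_im _⟩
end

section
/- Laplace transform of the transfer function (relation (2.11)): Let κ ≥ 0 and let τ be a Borel measure on ℝ supported in [−κ²,∞) with ∫_ℝ dτ(λ)/(1+|λ|) < ∞. Then Φ_τ(t) := ∫_ℝ c(λ,t) dτ(λ) is finite for every t ≥ 0, there exist constants C > 0 such that |Φ_τ(t)| ≤ C·e^{κ t}·(1+t²) for t ≥ 0, and for every z ∈ ℂ with Im z > κ one has ∫₀^∞ e^{izt} Φ_τ(t) dt = (i/z)·∫_ℝ dτ(λ)/(λ − z²), all integrals converging absolutely. -/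
open MeasureTheory Set

theorem cker_measurable : Measurable (fun p : ℝ × ℝ => cker p.1 p.2) := by
  unfold cker
  refine Measurable.ite (measurableSet_lt measurable_const measurable_fst) (by fun_prop) ?_
  exact Measurable.ite (measurableSet_lt measurable_fst measurable_const) (by fun_prop) (by fun_prop)

theorem cosh_sub_one_le {x : ℝ} (hx : 0 ≤ x) :
    Real.cosh x - 1 ≤ x ^ 2 / 2 * Real.exp x := by
  have h1 : Real.cosh x - 1 = 2 * Real.sinh (x / 2) ^ 2 := by
    have := Real.cosh_two_mul (x / 2)
    rw [show 2 * (x / 2) = x by ring, Real.cosh_sq] at this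
    linarith
  have h2 : Real.sinh (x / 2) ≤ x / 2 * Real.exp (x / 2) := by
    rw [Real.sinh_eq]
    have h3 := Real.add_one_le_exp (-x)
    have h4 : Real.exp (-(x / 2)) = Real.exp (-x) * Real.exp (x / 2) := by
      rw [← Real.exp_add]; congr 1; ring
    rw [h4]
    nlinarith [Real.exp_pos (x / 2)]
  have h0 : 0 ≤ Real.sinh (x / 2) := Real.sinh_nonneg_iff.2 (by linarith)
  have h5 : Real.exp x = Real.exp (x / 2) ^ 2 := by
    rw [← Real.exp_nat_mul]; congr 1; push_cast; ring
  rw [h1, h5]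
  have := pow_le_pow_left₀ h0 h2 2
  nlinarith

theorem cker_bound {κ lam t : ℝ} (hκ : 0 ≤ κ) (hl : -κ ^ 2 ≤ lam) (ht : 0 ≤ t) :
    |cker lam t| ≤ (2 * (1 + κ ^ 2)) * (Real.exp (κ * t) * (1 + t ^ 2)) * (1 / (1 + |lam|)) := by
  have he : 1 ≤ Real.exp (κ * t) := Real.one_le_exp (by positivity)
  have hA : 2 * (1 + t ^ 2) ≤ (2 * (1 + κ ^ 2)) * (Real.exp (κ * t) * (1 + t ^ 2)) := by
    have : (1:ℝ) * (1 * (1 + t ^ 2)) ≤ (1 + κ ^ 2) * (Real.exp (κ * t) * (1 + t ^ 2)) := by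
      gcongr
      nlinarith [sq_nonneg κ]
    linarith
  rw [mul_one_div, le_div_iff₀ (by positivity)]
  unfold cker
  split_ifs with h1 h2
  · refine le_trans ?_ hA
    have hc := Real.cos_le_one (Real.sqrt lam * t)
    have hc' := Real.neg_one_le_cos (Real.sqrt lam * t)
    have hc2 := Real.one_sub_sq_div_two_le_cos (x := Real.sqrt lam * t)
    rw [mul_pow, Real.sq_sqrt h1.le] at hc2
    rw [abs_of_nonneg (div_nonneg (by linarith) h1.le), abs_of_pos h1, div_mul_eq_mul_div,
      div_le_iff₀ h1]
    nlinarith [mul_nonneg h1.le (sq_nonneg t)]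
  · set x := Real.sqrt (-lam) with hx
    have hx0 : 0 ≤ x := Real.sqrt_nonneg _
    have hx2 : x ^ 2 = -lam := Real.sq_sqrt (by linarith)
    have hxκ : x ≤ κ := Real.sqrt_le_iff.2 ⟨hκ, by linarith⟩
    have hb := cosh_sub_one_le (x := x * t) (by positivity)
    have h3 : Real.exp (x * t) ≤ Real.exp (κ * t) := by gcongr
    have hco := Real.one_le_cosh (x * t)
    rw [abs_of_nonneg (div_nonneg_of_nonpos (by linarith) h2.le), abs_of_neg h2]
    have h4 : (1 - Real.cosh (x * t)) / lam ≤ t ^ 2 / 2 * Real.exp (κ * t) := by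
      rw [div_le_iff_of_neg h2]
      have : (x * t) ^ 2 / 2 * Real.exp (x * t) ≤ (x * t) ^ 2 / 2 * Real.exp (κ * t) := by gcongr
      have e : t ^ 2 / 2 * Real.exp (κ * t) * lam = -((x * t) ^ 2 / 2 * Real.exp (κ * t)) := by
        rw [mul_pow, hx2]; ring
      rw [e]; linarith
    calc _ ≤ t ^ 2 / 2 * Real.exp (κ * t) * (1 + κ ^ 2) := by
          apply mul_le_mul h4 (by linarith) (by linarith) (by positivity)
      _ ≤ 2 * (1 + t ^ 2) * Real.exp (κ * t) * (1 + κ ^ 2) := by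
          gcongr; nlinarith [sq_nonneg t]
      _ = _ := by ring
  · have : lam = 0 := le_antisymm (not_lt.1 h1) (not_lt.1 h2)
    subst this
    refine le_trans ?_ hA
    rw [abs_of_nonneg (by positivity)]
    simp only [abs_zero]
    nlinarith [sq_nonneg t]

theorem laplace_cosh {a s : ℂ} (hs : s ≠ 0) (h1 : (a + s).re < 0) (h2 : (a - s).re < 0) :
    ∫ t in Ioi (0:ℝ), Complex.exp (a * t) * ((Complex.cosh (s * t) - 1) / s ^ 2)
      = -1 / (a * (a ^ 2 - s ^ 2)) := by
  have h0 : a.re < 0 := by simp at h1 h2; linarith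
  have e : ∀ t : ℝ, Complex.exp (a * t) * ((Complex.cosh (s * t) - 1) / s ^ 2) =
      (1 / (2 * s ^ 2)) * (Complex.exp ((a + s) * t) + Complex.exp ((a - s) * t))
        - (1 / s ^ 2) * Complex.exp (a * t) := by
    intro t
    rw [Complex.cosh, add_mul, sub_mul, sub_eq_add_neg (a * (t:ℂ)), Complex.exp_add,
      Complex.exp_add]
    field_simp
  simp_rw [e]
  have i1 := integrableOn_exp_mul_complex_Ioi h1 0
  have i2 := integrableOn_exp_mul_complex_Ioi h2 0
  have i0 := integrableOn_exp_mul_complex_Ioi h0 0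
  have i3 : IntegrableOn (fun t : ℝ => Complex.exp ((a + s) * t) + Complex.exp ((a - s) * t))
      (Ioi 0) := i1.add i2
  rw [integral_sub (i3.const_mul _) (i0.const_mul _), integral_const_mul,
    integral_const_mul, integral_add i1 i2, integral_exp_mul_complex_Ioi h1,
    integral_exp_mul_complex_Ioi h2, integral_exp_mul_complex_Ioi h0]
  have n1 : a + s ≠ 0 := fun h => by simp [h] at h1
  have n2 : a - s ≠ 0 := fun h => by simp [h] at h2
  have n0 : a ≠ 0 := fun h => by simp [h] at h0
  have : a ^ 2 - s ^ 2 = (a + s) * (a - s) := by ring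
  rw [this]
  simp only [Complex.ofReal_zero, mul_zero, Complex.exp_zero]
  field_simp
  ring

theorem integrable_weight {d : ℝ} (hd : 0 < d) :
    IntegrableOn (fun t : ℝ => Real.exp (-d * t) * (1 + t ^ 2)) (Ioi 0) := by
  have h1 := integrableOn_rpow_mul_exp_neg_mul_rpow (s := 2) (p := 1) (by norm_num) one_pos hd
  have h2 := integrableOn_exp_mul_Ioi (a := -d) (by linarith) 0
  refine (h2.add h1).congr_fun (fun t _ => ?_) measurableSet_Ioi
  simp
  ring

theorem pow_exp_tendsto {a : ℂ} (ha : a.re < 0) (k : ℕ) :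
    Filter.Tendsto (fun t : ℝ => Complex.exp (a * t) * (t:ℂ) ^ k) Filter.atTop (nhds 0) := by
  rw [tendsto_zero_iff_norm_tendsto_zero]
  have := tendsto_rpow_mul_exp_neg_mul_atTop_nhds_zero k (-a.re) (by linarith)
  refine this.congr' ?_
  filter_upwards [Filter.eventually_ge_atTop 0] with t ht
  rw [norm_mul, Complex.norm_exp, norm_pow, Complex.norm_real, Real.norm_of_nonneg ht]
  simp [mul_comm]

theorem laplace_sq {a : ℂ} (ha : a.re < 0) :
    ∫ t in Ioi (0:ℝ), Complex.exp (a * t) * ((t:ℂ) ^ 2 / 2) = -1 / (a * a ^ 2) := by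
  have n0 : a ≠ 0 := fun h => by simp [h] at ha
  have hd : ∀ t ∈ Ici (0:ℝ), HasDerivAt (fun t : ℝ => Complex.exp (a * t) * (t:ℂ) ^ 2 * (1 / (2 * a))
      - Complex.exp (a * t) * (t:ℂ) ^ 1 * (1 / a ^ 2) + Complex.exp (a * t) * (t:ℂ) ^ 0 * (1 / a ^ 3))
      (Complex.exp (a * t) * ((t:ℂ) ^ 2 / 2)) t := by
    intro t _
    have hid : HasDerivAt (fun t : ℝ => (t:ℂ)) 1 t := Complex.ofRealCLM.hasDerivAt
    have he := (hid.const_mul a).cexp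
    have := (((he.mul (hid.pow 2)).mul_const (1 / (2 * a))).sub
      ((he.mul (hid.pow 1)).mul_const (1 / a ^ 2))).add ((he.mul (hid.pow 0)).mul_const (1 / a ^ 3))
    refine this.congr_deriv ?_
    simp
    field_simp
    ring
  have hi : IntegrableOn (fun t : ℝ => Complex.exp (a * t) * ((t:ℂ) ^ 2 / 2)) (Ioi 0) := by
    refine (integrable_weight (d := -a.re) (by linarith)).mono' (by fun_prop) ?_
    filter_upwards with t
    rw [norm_mul, Complex.norm_exp, norm_div, norm_pow, Complex.norm_real]
    simp
    gcongr
    nlinarith [sq_nonneg t]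
  have ht := (((pow_exp_tendsto ha 2).mul_const (1 / (2 * a))).sub
      ((pow_exp_tendsto ha 1).mul_const (1 / a ^ 2))).add
      ((pow_exp_tendsto ha 0).mul_const (1 / a ^ 3))
  rw [integral_Ioi_of_hasDerivAt_of_tendsto' hd hi ht]
  simp
  field_simp

theorem laplace_cker {κ lam : ℝ} (hκ : 0 ≤ κ) (hl : -κ ^ 2 ≤ lam) {z : ℂ} (hz : κ < z.im) :
    ∫ t in Ioi (0:ℝ), Complex.exp (Complex.I * z * t) * ((cker lam t : ℝ) : ℂ)
      = (Complex.I / z) * (1 / ((lam : ℂ) - z ^ 2)) := by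
  have hre : (Complex.I * z).re < 0 := by simp; linarith
  have z0 : z ≠ 0 := fun h => by simp [h] at hre
  have key : ∀ w : ℂ, -1 / (Complex.I * z * w) = Complex.I / z * (1 / w) := by
    intro w
    rw [← Complex.I_mul_I]
    by_cases hw : w = 0
    · simp [hw]
    · field_simp [Complex.I_ne_zero]
  rcases lt_trichotomy lam 0 with h | h | h
  · set x := Real.sqrt (-lam) with hx
    have hx0 : 0 < x := Real.sqrt_pos.2 (by linarith)
    have hx2 : x ^ 2 = -lam := Real.sq_sqrt (by linarith)
    have hxκ : x ≤ κ := Real.sqrt_le_iff.2 ⟨hκ, by linarith⟩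
    have hx2' : (x:ℂ) ^ 2 = -lam := by exact_mod_cast hx2
    have := laplace_cosh (a := Complex.I * z) (s := x) (by exact_mod_cast hx0.ne')
      (by simp; linarith) (by simp; linarith)
    rw [key, hx2', mul_pow, Complex.I_sq] at this
    rw [show (lam:ℂ) - z ^ 2 = -1 * z ^ 2 - -lam by ring, ← this]
    congr 1; ext t
    simp only [cker, not_lt.2 h.le, h, if_true, if_false, ← hx]
    push_cast
    rw [div_neg, ← neg_div, neg_sub]
  · subst h
    have := laplace_sq hre
    rw [key, mul_pow, Complex.I_sq] at this
    rw [show ((0:ℝ):ℂ) - z ^ 2 = -1 * z ^ 2 by simp, ← this]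
    congr 1; ext t
    simp [cker]
  · set x := Real.sqrt lam with hx
    have hx0 : 0 < x := Real.sqrt_pos.2 (by linarith)
    have hx2 : x ^ 2 = lam := Real.sq_sqrt (by linarith)
    have hx2' : (x:ℂ) ^ 2 = lam := by exact_mod_cast hx2
    have := laplace_cosh (a := Complex.I * z) (s := x * Complex.I)
      (mul_ne_zero (by exact_mod_cast hx0.ne') Complex.I_ne_zero)
      (by simp; linarith) (by simp; linarith)
    rw [key, mul_pow, mul_pow, Complex.I_sq, hx2'] at this
    rw [show (lam:ℂ) - z ^ 2 = -1 * z ^ 2 - lam * -1 by ring, ← this]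
    congr 1; ext t
    simp only [cker, h, if_true, ← hx]
    push_cast
    rw [show (x:ℂ) * Complex.I * t = x * t * Complex.I by ring, Complex.cosh_mul_I, mul_neg_one,
      div_neg, ← neg_div, neg_sub]

theorem sfinite_of_weight (τ : Measure ℝ)
    (hτ : ∫⁻ lam : ℝ, ENNReal.ofReal (1 / (1 + |lam|)) ∂τ < ⊤) : SFinite τ := by
  have hm : Measurable (fun lam : ℝ => ENNReal.ofReal (1 / (1 + |lam|))) := by fun_prop
  have h := withDensity_inv_same (μ := τ) hm
    (Filter.Eventually.of_forall fun x => by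
      have : 0 < 1 / (1 + |x|) := by positivity
      simpa using this) (Filter.Eventually.of_forall fun x => ENNReal.ofReal_ne_top)
  have : IsFiniteMeasure (τ.withDensity (fun lam : ℝ => ENNReal.ofReal (1 / (1 + |lam|)))) :=
    isFiniteMeasure_withDensity hτ.ne
  rw [← h]
  infer_instance

/-- **Laplace transform of the transfer function** (relation (2.11)).
If `τ` is supported in `[-κ²,∞)` with `∫ dτ(λ)/(1+|λ|) < ∞`, then
`Φ_τ(t) = ∫_ℝ c(λ,t) dτ(λ)` is finite, of exponential growth
`|Φ_τ(t)| ≤ C e^{κt}(1+t²)`, and for `Im z > κ`: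
`∫₀^∞ e^{izt} Φ_τ(t) dt = (i/z) ∫_ℝ dτ(λ)/(λ - z²)`, with absolute convergence. -/
theorem laplace_transform_of_transferFn
    (κ : ℝ) (hκ : 0 ≤ κ)
    (τ : Measure ℝ) (hsupp : τ (Iio (-κ ^ 2)) = 0)
    (hτ : ∫⁻ lam : ℝ, ENNReal.ofReal (1 / (1 + |lam|)) ∂τ < ⊤) :
    (∀ t : ℝ, 0 ≤ t → Integrable (fun lam : ℝ => cker lam t) τ) ∧
    (∃ C : ℝ, 0 < C ∧ ∀ t : ℝ, 0 ≤ t →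
      |∫ lam : ℝ, cker lam t ∂τ| ≤ C * Real.exp (κ * t) * (1 + t ^ 2)) ∧
    (∀ z : ℂ, κ < z.im →
      IntegrableOn
        (fun t : ℝ => Complex.exp (Complex.I * z * t) * ((∫ lam : ℝ, cker lam t ∂τ : ℝ) : ℂ))
        (Ioi (0:ℝ)) ∧
      Integrable (fun lam : ℝ => 1 / ((lam : ℂ) - z ^ 2)) τ ∧
      ∫ t in Ioi (0:ℝ),
          Complex.exp (Complex.I * z * t) * ((∫ lam : ℝ, cker lam t ∂τ : ℝ) : ℂ) =
        (Complex.I / z) * ∫ lam : ℝ, 1 / ((lam : ℂ) - z ^ 2) ∂τ) := by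
  have hsf := sfinite_of_weight τ hτ
  have hae : ∀ᵐ lam ∂τ, -κ ^ 2 ≤ lam := by
    rw [ae_iff]
    simp only [not_le]
    exact hsupp
  have hw : Integrable (fun lam : ℝ => 1 / (1 + |lam|)) τ := by
    refine ⟨Measurable.aestronglyMeasurable (by fun_prop), ?_⟩
    rw [hasFiniteIntegral_iff_ofReal (Filter.Eventually.of_forall fun x => by
      simp only [Pi.zero_apply]; positivity)]
    exact hτ
  have hint : ∀ t : ℝ, 0 ≤ t → Integrable (fun lam : ℝ => cker lam t) τ := by
    intro t ht
    refine (hw.const_mul ((2 * (1 + κ ^ 2)) * (Real.exp (κ * t) * (1 + t ^ 2)))).mono'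
      (cker_measurable.comp (measurable_id.prodMk measurable_const)).aestronglyMeasurable ?_
    filter_upwards [hae] with lam hl
    exact cker_bound hκ hl ht
  refine ⟨hint, ?_, ?_⟩
  · have hM : 0 ≤ ∫ lam : ℝ, 1 / (1 + |lam|) ∂τ := integral_nonneg fun x => by
      simp only [Pi.zero_apply]; positivity
    refine ⟨2 * (1 + κ ^ 2) * ((∫ lam : ℝ, 1 / (1 + |lam|) ∂τ) + 1), by positivity, ?_⟩
    intro t ht
    have h1 := norm_integral_le_of_norm_le
      (hw.const_mul ((2 * (1 + κ ^ 2)) * (Real.exp (κ * t) * (1 + t ^ 2))))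
      (f := fun lam => cker lam t) (by
        filter_upwards [hae] with lam hl
        exact cker_bound hκ hl ht)
    rw [integral_const_mul, Real.norm_eq_abs] at h1
    refine h1.trans ?_
    have : 0 ≤ (2 * (1 + κ ^ 2)) * (Real.exp (κ * t) * (1 + t ^ 2)) := by positivity
    nlinarith
  · intro z hz
    have z0 : z ≠ 0 := fun h => by
      simp [h] at hz; linarith
    have hF : Integrable (Function.uncurry fun (lam t : ℝ) =>
        Complex.exp (Complex.I * z * t) * ((cker lam t : ℝ) : ℂ))
        (τ.prod (volume.restrict (Ioi (0:ℝ)))) := by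
      have hb := hw.mul_prod
        ((integrable_weight (d := z.im - κ) (by linarith)).integrable.const_mul (2 * (1 + κ ^ 2)))
      refine hb.mono' ?_ ?_
      · refine Measurable.aestronglyMeasurable ?_
        have := Complex.measurable_ofReal.comp cker_measurable
        exact Measurable.mul (by fun_prop) this
      · have t0 : ∀ᵐ t ∂(volume.restrict (Ioi (0:ℝ))), 0 < t :=
          ae_restrict_mem measurableSet_Ioi
        filter_upwards [Measure.quasiMeasurePreserving_fst.ae hae,
          Measure.quasiMeasurePreserving_snd.ae t0] with p h1 h2
        obtain ⟨lam, t⟩ := p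
        simp only [Function.uncurry] at *
        rw [norm_mul, Complex.norm_exp, Complex.norm_real, Real.norm_eq_abs]
        have := mul_le_mul_of_nonneg_left (cker_bound hκ h1 h2.le)
          (Real.exp_pos (Complex.I * z * t).re).le
        refine this.trans (le_of_eq ?_)
        have : Real.exp (-(z.im - κ) * t)
            = Real.exp (Complex.I * z * t).re * Real.exp (κ * t) := by
          rw [← Real.exp_add]; congr 1; simp; ring
        rw [this]; ring
    have hcongr : (fun lam : ℝ => ∫ t in Ioi (0:ℝ),
          Complex.exp (Complex.I * z * t) * ((cker lam t : ℝ) : ℂ)) =ᵐ[τ]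
        fun lam => (Complex.I / z) * (1 / ((lam : ℂ) - z ^ 2)) := by
      filter_upwards [hae] with lam hl
      exact laplace_cker hκ hl hz
    have hinner : ∀ t : ℝ, (∫ lam, Complex.exp (Complex.I * z * t) * ((cker lam t : ℝ) : ℂ) ∂τ)
        = Complex.exp (Complex.I * z * t) * ((∫ lam : ℝ, cker lam t ∂τ : ℝ) : ℂ) := by
      intro t
      rw [integral_const_mul, integral_complex_ofReal]
    have hI : Complex.I / z ≠ 0 := div_ne_zero Complex.I_ne_zero z0
    refine ⟨?_, ?_, ?_⟩
    · have := hF.integral_prod_right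
      simp only [Function.uncurry, hinner] at this
      exact this
    · have := (hF.integral_prod_left.congr hcongr).const_mul (Complex.I / z)⁻¹
      simpa only [inv_mul_cancel_left₀ hI] using this
    · have := integral_integral_swap hF
      simp only [hinner] at this
      rw [← this, integral_congr_ae hcongr, integral_const_mul]
end
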